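/- There exists a real number τ > 0 such that every C₅-free simple graph G satisfies max(α(G), ω(G)) ≥ |G|^τ. -/

import Mathlib

open SimpleGraph

/-- The independence (stable set) number of a graph: the clique number of the complement. -/
noncomputable def alphaNum {V : Type*} (G : SimpleGraph V) : ℕ := Gᶜ.cliqueNum

/-- The clique number of a graph. -/
noncomputable def omegaNum {V : Type*} (G : SimpleGraph V) : ℕ := G.cliqueNum

/-- κ(G) = α(G)·ω(G). -/
noncomputable def kappaNum {V : Type*} (G : SimpleGraph V) : ℕ := alphaNum G * omegaNum G

/-!
By Rödl's theorem, every set of vertices of a `C₅`-free graph contains a subset of proportional size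
that is sparse in the graph or in its complement. In a minimal counterexample `W` to the
Erdős–Hajnal property with a tiny exponent `τ`, this subset can be made sparser and sparser, at a
polynomial cost in size, until a large independent set can be chosen greedily in it. The reason is
that a sparse subset `S` that cannot be made sparser leads to an induced `C₅`. Indeed, minimality of
`W` provides a critical subset in every large subset of `S`: the product `κ` of the independence
number and the clique number is superadditive over families of pairwise anticomplete sets, so such
families are small in a critical set. In `S` one finds many disjoint clusters, sparse to each other,
each with a hub that is complete to it and anticomplete to the other clusters, and a critical set
covered by them. As no induced `C₅` goes through two hubs, a vertex of a cluster outside a component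
of the bipartite graph between two clusters is complete or anticomplete to this component. Hence
deleting a few vertices breaks up all large components: otherwise one of them would contain a large
subset that is much sparser than `S`, in the graph or in its complement. When all components are
small, some vertex has neighbours in many other clusters, and these neighbourhoods yield a large
family of pairwise anticomplete sets in the critical set.
-/

namespace ErdosHajnal

open Finset Function
open scoped Classical

variable {V : Type*} {ι : Type*} {α : Type*} {G : SimpleGraph V}

/-! ### Cardinalities -/

theorem cast_card_le_cast_card {A B : Finset α} (h : A ⊆ B) : (#A : ℝ) ≤ #B := by gcongr

theorem cast_card_union_le [DecidableEq α] (A B : Finset α) : (#(A ∪ B) : ℝ) ≤ #A + #B := by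
  exact_mod_cast card_union_le A B

theorem cast_card_sub_le_cast_card_sdiff (A B : Finset α) : (#B : ℝ) - #A ≤ #(B \ A) := by
  have h : #B ≤ #(B \ A) + #A := by have := le_card_sdiff A B; omega
  have h' : (#B : ℝ) ≤ #(B \ A) + #A := by exact_mod_cast h
  linarith

theorem cast_card_biUnion_le_sum [DecidableEq α] (C : Finset ι) (f : ι → Finset α) :
    (#(C.biUnion f) : ℝ) ≤ ∑ c ∈ C, (#(f c) : ℝ) := by
  exact_mod_cast card_biUnion_le

theorem two_mul_card_le_card_filter_eq_one_add_sum {W : Finset α} {f : α → ℕ}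
    (hf : ∀ x ∈ W, 1 ≤ f x) : 2 * #W ≤ #{x ∈ W | f x = 1} + ∑ x ∈ W, f x := by
  have hpoint : ∀ x ∈ W, 2 ≤ (if f x = 1 then 1 else 0) + f x := fun x hx => by
    have := hf x hx
    split_ifs <;> omega
  simpa [sum_add_distrib, mul_comm] using sum_le_sum hpoint

theorem pairwise_update {β : Type*} {r : β → β → Prop} (hr : ∀ a b, r a b → r b a)
    {s : Set ι} {R : ι → β} {j : ι} {b : β} (hR : (s \ {j}).Pairwise fun i i' => r (R i) (R i'))
    (hb : ∀ i ∈ s, i ≠ j → r b (R i)) :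
    s.Pairwise fun i i' => r (update R j b i) (update R j b i') := by
  intro i hi i' hi' hne
  rcases eq_or_ne i j with rfl | hij
  · simpa [hne.symm] using hb i' hi' hne.symm
  rcases eq_or_ne i' j with rfl | hij'
  · simpa [hij] using hr _ _ (hb i hi hij)
  · simpa [hij, hij'] using hR ⟨hi, hij⟩ ⟨hi', hij'⟩ hne

/-- Grow `T` one element at a time until some `F c T` reaches `s`. -/
theorem exists_subset_le_and_forall_le_add {C : Finset ι} {F : ι → Finset α → ℝ} {s m : ℝ}
    {Q : Finset α} (hempty : ∀ c ∈ C, F c ∅ ≤ s + m)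
    (hinsert : ∀ c ∈ C, ∀ a ∈ Q, ∀ T, F c (insert a T) ≤ F c T + m) (hQ : ∃ c ∈ C, s ≤ F c Q) :
    ∃ T ⊆ Q, (∃ c ∈ C, s ≤ F c T) ∧ ∀ c ∈ C, F c T ≤ s + m := by
  induction Q using Finset.induction_on with
  | empty => exact ⟨∅, Subset.rfl, hQ, hempty⟩
  | insert a Q _ ih =>
    by_cases hreach : ∃ c ∈ C, s ≤ F c Q
    · obtain ⟨T, hTQ, hT⟩ := ih (fun c hc b hb => hinsert c hc b (mem_insert_of_mem hb)) hreach
      exact ⟨T, hTQ.trans (subset_insert _ _), hT⟩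
    · push Not at hreach
      refine ⟨insert a Q, Subset.rfl, hQ, fun c hc => ?_⟩
      linarith [hinsert c hc a (mem_insert_self _ _) Q, hreach c hc]

theorem exists_subsets_separated_by {β : Type*} (f : α → β) {s m : ℝ} (hs : 0 ≤ s) (hm : 0 ≤ m)
    (J : Finset ι) {D : Finset α} (hfiber : ∀ b, (#{x ∈ D | f x = b} : ℝ) ≤ m)
    (hD : #J * (s + m) ≤ (#D : ℝ)) :
    ∃ R : ι → Finset α, (∀ i ∈ J, R i ⊆ D ∧ s ≤ #(R i)) ∧
      (J : Set ι).Pairwise fun i j => ∀ x ∈ R i, ∀ y ∈ R j, f x ≠ f y := by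
  induction J using Finset.induction_on generalizing D with
  | empty => exact ⟨fun _ => ∅, by simp, by simp⟩
  | insert j J hj ih =>
    rw [card_insert_of_notMem hj] at hD
    push_cast at hD
    have hJ : 0 ≤ (#J : ℝ) * (s + m) := by positivity
    obtain ⟨T, -, ⟨-, -, hTs⟩, hTm⟩ := exists_subset_le_and_forall_le_add (C := {()})
      (F := fun _ T => (#{x ∈ D | f x ∈ T} : ℝ)) (s := s) (m := m) (Q := D.image f)
      (by simpa using add_nonneg hs hm)
      (fun _ _ b _ T => by
        have : {x ∈ D | f x ∈ insert b T} ⊆ {x ∈ D | f x ∈ T} ∪ {x ∈ D | f x = b} := by grind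
        linarith [cast_card_le_cast_card this, hfiber b,
          cast_card_union_le {x ∈ D | f x ∈ T} {x ∈ D | f x = b}])
      ⟨(), by simp, by
        rw [filter_true_of_mem fun x hx => mem_image_of_mem f hx]; linarith⟩
    set B := {x ∈ D | f x ∈ T}
    obtain ⟨R, hR, hsep⟩ := ih (D := D \ B)
      (fun b => (cast_card_le_cast_card (filter_subset_filter _ sdiff_subset)).trans (hfiber b))
      (by rw [cast_card_sdiff (filter_subset _ _)]; linarith [hTm () (by simp)])
    refine ⟨update R j B, fun i hi => ?_, pairwise_update
      (r := fun A B => ∀ x ∈ A, ∀ y ∈ B, f x ≠ f y) (fun A B h y hy x hx => (h x hx y hy).symm)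
      (hsep.mono (by grind)) fun i hi hij x hx y hy hxy => ?_⟩
    · rcases eq_or_ne i j with rfl | hij
      · simpa using ⟨filter_subset _ _, hTs⟩
      · have := hR i (mem_of_mem_insert_of_ne hi hij)
        simpa [hij] using ⟨this.1.trans sdiff_subset, this.2⟩
    · have := (hR i (mem_of_mem_insert_of_ne hi hij)).1 hy
      grind

/-! ### Graphs without induced five-cycles -/

/-- A graph without induced five-cycles. -/
def C5Free (G : SimpleGraph V) : Prop := ¬ Nonempty (cycleGraph 5 ↪g G)

theorem C5Free.compl (h : C5Free G) : C5Free Gᶜ := by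
  have hdouble : ∀ i j : Fin 5,
      (cycleGraph 5)ᶜ.Adj (2 * i) (2 * j) ↔ (cycleGraph 5).Adj i j := by decide
  rintro ⟨e⟩
  let double : cycleGraph 5 ↪g (cycleGraph 5)ᶜ := ⟨⟨(2 * ·), by decide⟩, hdouble _ _⟩
  exact h ⟨compl_compl G ▸ (Embedding.complEquiv e).comp double⟩

theorem C5Free.false_of_cycle (h : C5Free G) {a b c d e : V} (hab : G.Adj a b) (hbc : G.Adj b c)
    (hcd : G.Adj c d) (hde : G.Adj d e) (hea : G.Adj e a) (hac : ¬ G.Adj a c) (had : ¬ G.Adj a d)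
    (hbd : ¬ G.Adj b d) (hbe : ¬ G.Adj b e) (hce : ¬ G.Adj c e) : False := by
  have hadj : ∀ i j : Fin 5, G.Adj (![a, b, c, d, e] i) (![a, b, c, d, e] j) ↔
      (cycleGraph 5).Adj i j := by
    have hcycle : ∀ i j : Fin 5, (cycleGraph 5).Adj i j ↔ j = i + 1 ∨ i = j + 1 := by decide
    intro i j
    rw [hcycle]
    fin_cases i <;> fin_cases j <;> simp [*, G.adj_comm, hea.symm, Fin.ext_iff]
  refine h ⟨⟨⟨![a, b, c, d, e], fun i j hij => ?_⟩, hadj _ _⟩⟩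
  have hnbr : ∀ i j : Fin 5, (∀ k, (cycleGraph 5).Adj i k ↔ (cycleGraph 5).Adj j k) → i = j := by
    decide
  exact hnbr i j fun k => by rw [← hadj, ← hadj, hij]

/-! ### Neighbourhoods -/

/-- The set of neighbours of the vertex `v` in `X`. -/
noncomputable def neighborsIn (G : SimpleGraph V) (v : V) (X : Finset V) : Finset V :=
  {x ∈ X | G.Adj v x}

/-- The set of vertices of `X` with a neighbour in the set `P`. -/
noncomputable def setNeighborsIn (G : SimpleGraph V) (P X : Finset V) : Finset V :=
  {x ∈ X | ∃ p ∈ P, G.Adj p x}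

/-- Two vertex sets are anticomplete if there are no edges between them. Being anticomplete in the
complement means that every two distinct vertices, one from each set, are adjacent. -/
def Anticomplete (G : SimpleGraph V) (A B : Finset V) : Prop := ∀ a ∈ A, ∀ b ∈ B, ¬ G.Adj a b

/-- Every vertex of `B` has exactly one neighbour in `A`. -/
def UniquelyCovers (G : SimpleGraph V) (A B : Finset V) : Prop :=
  ∀ x ∈ B, ∃! a, a ∈ A ∧ G.Adj a x

@[simp] theorem mem_neighborsIn {v x : V} {X : Finset V} :
    x ∈ neighborsIn G v X ↔ x ∈ X ∧ G.Adj v x := mem_filter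

@[simp] theorem mem_setNeighborsIn {P X : Finset V} {x : V} :
    x ∈ setNeighborsIn G P X ↔ x ∈ X ∧ ∃ p ∈ P, G.Adj p x := mem_filter

theorem neighborsIn_subset (v : V) (X : Finset V) : neighborsIn G v X ⊆ X := filter_subset _ _

theorem setNeighborsIn_subset (P X : Finset V) : setNeighborsIn G P X ⊆ X := filter_subset _ _

@[gcongr] theorem neighborsIn_mono (v : V) {X Y : Finset V} (h : X ⊆ Y) :
    neighborsIn G v X ⊆ neighborsIn G v Y := filter_subset_filter _ h

theorem card_neighborsIn_le_of_subset {v : V} {X Y : Finset V} {d : ℝ} (h : X ⊆ Y)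
    (hY : (#(neighborsIn G v Y) : ℝ) ≤ d) : (#(neighborsIn G v X) : ℝ) ≤ d :=
  (cast_card_le_cast_card (neighborsIn_mono v h)).trans hY

@[simp] theorem setNeighborsIn_empty (X : Finset V) : setNeighborsIn G ∅ X = ∅ := by
  simp [setNeighborsIn]

theorem setNeighborsIn_insert (a : V) (P X : Finset V) :
    setNeighborsIn G (insert a P) X = setNeighborsIn G P X ∪ neighborsIn G a X := by
  ext x
  simp only [mem_setNeighborsIn, mem_insert, mem_union, mem_neighborsIn]
  grind

theorem Anticomplete.symm {A B : Finset V} (h : Anticomplete G A B) : Anticomplete G B A :=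
  fun b hb a ha hab => h a ha b hb hab.symm

theorem sum_card_neighborsIn_comm (G : SimpleGraph V) (A B : Finset V) :
    ∑ a ∈ A, #(neighborsIn G a B) = ∑ b ∈ B, #(neighborsIn G b A) := by
  simpa only [bipartiteAbove, bipartiteBelow, neighborsIn, G.adj_comm] using
    sum_card_bipartiteAbove_eq_sum_card_bipartiteBelow (s := A) (t := B) G.Adj

/-! ### Anticomplete families and private neighbours -/

/-- The neighbourhood in one row of a suitable set of vertices of `Q` is anticomplete to the
non-neighbours in the other rows, of which few are lost; recurse on what is left of these. -/
theorem exists_pairwise_anticomplete {m : ℝ} (hm : 0 ≤ m) {Q : Finset V} (C : Finset ι)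
    {R : ι → Finset V} (hcover : ∀ c ∈ C, ∀ x ∈ R c, ∃ q ∈ Q, G.Adj q x)
    (hdeg : ∀ c ∈ C, ∀ q ∈ Q, (#(neighborsIn G q (R c)) : ℝ) ≤ m)
    (hcard : ∀ c ∈ C, 2 * #C * m ≤ (#(R c) : ℝ))
    (hsep : (C : Set ι).Pairwise fun c c' => ∀ x ∈ R c, ∀ x' ∈ R c', ∀ q ∈ Q,
      G.Adj q x → ¬ G.Adj q x' → ¬ G.Adj x x') :
    ∃ Y : ι → Finset V, (∀ c ∈ C, Y c ⊆ R c ∧ m ≤ #(Y c)) ∧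
      (C : Set ι).Pairwise fun c c' => Anticomplete G (Y c) (Y c') := by
  induction C using Finset.strongInduction generalizing R with
  | H C ih =>
    rcases C.eq_empty_or_nonempty with rfl | ⟨c₁, hc₁⟩
    · exact ⟨R, by simp, by simp⟩
    have hC : (1 : ℝ) ≤ #C := by exact_mod_cast card_pos.2 ⟨c₁, hc₁⟩
    obtain ⟨P, hPQ, ⟨c₀, hc₀, hlarge⟩, hsmall⟩ := exists_subset_le_and_forall_le_add
      (F := fun c P => (#(setNeighborsIn G P (R c)) : ℝ)) (s := m) (m := m) (C := C) (Q := Q)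
      (fun c _ => by simpa using hm)
      (fun c hc q hq P => by
        rw [setNeighborsIn_insert]
        linarith [cast_card_union_le (setNeighborsIn G P (R c)) (neighborsIn G q (R c)),
          hdeg c hc q hq])
      ⟨c₁, hc₁, by
        rw [setNeighborsIn, filter_true_of_mem (hcover c₁ hc₁)]
        nlinarith [hcard c₁ hc₁]⟩
    obtain ⟨Y, hY, hanti⟩ := ih (C.erase c₀) (erase_ssubset hc₀)
      (R := fun c => R c \ setNeighborsIn G P (R c))
      (fun c hc x hx => hcover c (mem_of_mem_erase hc) x (sdiff_subset hx))
      (fun c hc q hq => card_neighborsIn_le_of_subset sdiff_subset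
        (hdeg c (mem_of_mem_erase hc) q hq))
      (fun c hc => by
        rw [cast_card_sdiff (setNeighborsIn_subset _ _), cast_card_erase_of_mem hc₀]
        linarith [hsmall c (mem_of_mem_erase hc), hcard c (mem_of_mem_erase hc)])
      (fun c hc c' hc' hne x hx x' hx' q hq => hsep (mem_of_mem_erase hc) (mem_of_mem_erase hc')
        hne x (sdiff_subset hx) x' (sdiff_subset hx') q hq)
    refine ⟨update Y c₀ (setNeighborsIn G P (R c₀)), fun c hc => ?_,
      pairwise_update (r := Anticomplete G) (R := Y) (fun _ _ => Anticomplete.symm)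
        (by simpa using hanti) fun c hc hne x hx x' hx' => ?_⟩
    · rcases eq_or_ne c c₀ with rfl | hne
      · simpa using ⟨setNeighborsIn_subset _ _, hlarge⟩
      · have := hY c (mem_erase.2 ⟨hne, hc⟩)
        simpa [hne] using ⟨this.1.trans sdiff_subset, this.2⟩
    · obtain ⟨hx, q, hq, hqx⟩ := mem_setNeighborsIn.1 hx
      obtain ⟨hx', hPx'⟩ := mem_sdiff.1 ((hY c (mem_erase.2 ⟨hne, hc⟩)).1 hx')
      exact hsep hc₀ hc hne.symm x hx x' hx' q (hPQ hq) hqx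
        fun hqx' => hPx' (mem_setNeighborsIn.2 ⟨hx', q, hq, hqx'⟩)

theorem exists_subset_mul_card_le_card_setNeighborsIn (A B : Finset V) {c : ℝ} (hc : 0 ≤ c) :
    ∃ P ⊆ A, c * #P ≤ #(setNeighborsIn G P B) ∧
      ∀ a ∈ A, (#(neighborsIn G a (B \ setNeighborsIn G P B)) : ℝ) ≤ c := by
  induction A using Finset.induction_on with
  | empty => exact ⟨∅, by simp⟩
  | insert a A _ ih =>
    obtain ⟨P, hPA, hP, hdeg⟩ := ih
    by_cases ha : (#(neighborsIn G a (B \ setNeighborsIn G P B)) : ℝ) ≤ c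
    · exact ⟨P, hPA.trans (subset_insert _ _), hP, forall_mem_insert _ _ _ |>.2 ⟨ha, hdeg⟩⟩
    have hunion : setNeighborsIn G (insert a P) B = setNeighborsIn G P B ∪
        neighborsIn G a (B \ setNeighborsIn G P B) := by
      rw [setNeighborsIn_insert]
      ext x
      simp only [mem_union, mem_neighborsIn, mem_sdiff]
      tauto
    refine ⟨insert a P, insert_subset_insert _ hPA, ?_, forall_mem_insert _ _ _ |>.2 ⟨?_, ?_⟩⟩
    · have hdisj : Disjoint (setNeighborsIn G P B)
          (neighborsIn G a (B \ setNeighborsIn G P B)) :=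
        disjoint_sdiff.mono_right (neighborsIn_subset _ _)
      have hinsert : (#(insert a P) : ℝ) ≤ #P + 1 := by exact_mod_cast card_insert_le a P
      rw [hunion, card_union_of_disjoint hdisj]
      push_cast
      nlinarith
    · rw [neighborsIn, filter_false_of_mem]
      · simpa using hc
      · intro x hx hax
        exact (mem_sdiff.1 hx).2 (by simp [setNeighborsIn_insert, hax, (mem_sdiff.1 hx).1])
    · exact fun b hb => card_neighborsIn_le_of_subset
        (sdiff_subset_sdiff Subset.rfl (hunion ▸ subset_union_left)) (hdeg b hb)

theorem exists_uniquelyCovers_or_sparse_step {A B : Finset V} {E θ : ℝ} (hE : 0 ≤ E)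
    (hdeg : ∀ a ∈ A, (#(neighborsIn G a B) : ℝ) ≤ E) :
    (∃ A' ⊆ A, ∃ B' ⊆ B, UniquelyCovers G A' B' ∧ θ ≤ #B' ∧ #A' * (2 / 3 * E) ≤ #B) ∨
    ∃ W ⊆ B, (#W : ℝ) ≤ 2 * θ ∧ ∀ a ∈ A, (#(neighborsIn G a (B \ W)) : ℝ) ≤ 2 / 3 * E := by
  obtain ⟨P, hPA, hP, hPdeg⟩ :=
    exists_subset_mul_card_le_card_setNeighborsIn (G := G) A B (c := 2 / 3 * E) (by positivity)
  set W := setNeighborsIn G P B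
  have hWB : W ⊆ B := setNeighborsIn_subset _ _
  rcases le_or_gt (#W : ℝ) (2 * θ) with hWθ | hWθ
  · exact Or.inr ⟨W, hWB, hWθ, hPdeg⟩
  refine Or.inl ⟨P, hPA, {x ∈ W | #(neighborsIn G x P) = 1}, (filter_subset _ _).trans hWB,
    fun x hx => ?_, ?_, by linarith [cast_card_le_cast_card hWB]⟩
  · obtain ⟨a, ha⟩ := card_eq_one.1 (mem_filter.1 hx).2
    have hmem : ∀ b, b ∈ P ∧ G.Adj b x ↔ b = a := fun b => by
      rw [G.adj_comm, ← mem_neighborsIn, ha, mem_singleton]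
    exact ⟨a, (hmem a).2 rfl, fun b => (hmem b).1⟩
  · have hcovered : ∀ x ∈ W, 1 ≤ #(neighborsIn G x P) := fun x hx => by
      obtain ⟨_, p, hp, hpx⟩ := mem_setNeighborsIn.1 hx
      exact card_pos.2 ⟨p, mem_neighborsIn.2 ⟨hp, hpx.symm⟩⟩
    have hcount := two_mul_card_le_card_filter_eq_one_add_sum hcovered
    rw [← sum_card_neighborsIn_comm G P W] at hcount
    have hedges : ∑ a ∈ P, (#(neighborsIn G a W) : ℝ) ≤ #P * E := by
      simpa using sum_le_card_nsmul P _ E fun a ha =>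
        card_neighborsIn_le_of_subset hWB (hdeg a (hPA ha))
    have hcount' : 2 * (#W : ℝ) ≤ #{x ∈ W | #(neighborsIn G x P) = 1} +
        ∑ a ∈ P, (#(neighborsIn G a W) : ℝ) := by exact_mod_cast hcount
    linarith

theorem exists_uniquelyCovers_or_sparse {A B : Finset V} {Δ θ : ℝ} (hΔ : 0 ≤ Δ)
    (hdeg : ∀ a ∈ A, (#(neighborsIn G a B) : ℝ) ≤ Δ) (L : ℕ) :
    (∃ A' ⊆ A, ∃ B' ⊆ B, UniquelyCovers G A' B' ∧ θ ≤ #B' ∧ #A' * ((2 / 3) ^ L * Δ) ≤ #B) ∨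
    ∃ H ⊆ B, (#H : ℝ) ≤ 2 * L * θ ∧
      ∀ a ∈ A, (#(neighborsIn G a (B \ H)) : ℝ) ≤ (2 / 3) ^ L * Δ := by
  induction L with
  | zero => exact Or.inr ⟨∅, by simp, by simp, by simpa using hdeg⟩
  | succ L ih =>
    have hpow : (2 / 3 : ℝ) ^ (L + 1) * Δ = 2 / 3 * ((2 / 3) ^ L * Δ) := by ring
    rw [hpow]
    have hE : 0 ≤ (2 / 3 : ℝ) ^ L * Δ := by positivity
    rcases ih with ⟨A', hA', B', hB', hcov, hlarge, hcard⟩ | ⟨H, hHB, hH, hHdeg⟩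
    · refine Or.inl ⟨A', hA', B', hB', hcov, hlarge, le_trans ?_ hcard⟩
      exact mul_le_mul_of_nonneg_left (by linarith) (by positivity)
    rcases exists_uniquelyCovers_or_sparse_step (θ := θ) hE hHdeg with
      ⟨A', hA', B', hB', hcov, hlarge, hcard⟩ | ⟨W, hWB, hW, hWdeg⟩
    · exact Or.inl ⟨A', hA', B', hB'.trans sdiff_subset, hcov, hlarge,
        hcard.trans (cast_card_le_cast_card sdiff_subset)⟩
    · refine Or.inr ⟨H ∪ W, union_subset hHB (hWB.trans sdiff_subset), ?_, ?_⟩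
      · push_cast
        linarith [cast_card_union_le H W]
      · rwa [← sup_eq_union, ← sdiff_sdiff_left]

/-! ### Critical sets -/

/-- A vertex set `U` is critical for the exponent `σ` if no family of disjoint subsets of `U` that
are pairwise anticomplete (in `G`, or in the complement of `G`) beats `U` in the sum of `σ`-th
powers of cardinalities. Vertex-minimal counterexamples to the Erdős–Hajnal property are
critical. -/
def Critical (G : SimpleGraph V) (σ : ℝ) (U : Finset V) : Prop :=
  ∀ 𝓑 : Finset (Finset V), (∀ B ∈ 𝓑, B ⊆ U) → (𝓑 : Set (Finset V)).PairwiseDisjoint id →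
    (𝓑 : Set (Finset V)).Pairwise (Anticomplete G) ∨
      (𝓑 : Set (Finset V)).Pairwise (Anticomplete Gᶜ) →
    ∑ B ∈ 𝓑, (#B : ℝ) ^ σ ≤ (#U : ℝ) ^ σ

namespace Critical

variable {σ p : ℝ} {U : Finset V} {C : Finset ι} {Y : ι → Finset V}

theorem sum_rpow_le (h : Critical G σ U) (hσ : σ ≠ 0) (hsub : ∀ c ∈ C, Y c ⊆ U)
    (hdisj : (C : Set ι).PairwiseDisjoint Y)
    (hpure : (C : Set ι).Pairwise (fun c c' => Anticomplete G (Y c) (Y c')) ∨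
      (C : Set ι).Pairwise (fun c c' => Anticomplete Gᶜ (Y c) (Y c'))) :
    ∑ c ∈ C, (#(Y c) : ℝ) ^ σ ≤ (#U : ℝ) ^ σ := by
  set C' := {c ∈ C | (Y c).Nonempty}
  have hC' : C' ⊆ C := filter_subset _ _
  have hinj : Set.InjOn Y C' := fun c hc c' hc' heq =>
    hdisj.elim (hC' hc) (hC' hc') (by simpa [heq] using (mem_filter.1 hc').2.ne_empty)
  have himage : ∀ {r : Finset V → Finset V → Prop},
      (C : Set ι).Pairwise (fun c c' => r (Y c) (Y c')) →
        (C'.image Y : Set (Finset V)).Pairwise r := fun hr => by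
      rw [coe_image]
      exact hinj.pairwise_image.2 (hr.mono (by exact_mod_cast hC'))
  have hsum : ∑ c ∈ C', (#(Y c) : ℝ) ^ σ = ∑ c ∈ C, (#(Y c) : ℝ) ^ σ :=
    sum_filter_of_ne fun c _ hne => nonempty_iff_ne_empty.2 fun h0 => hne (by simp [h0, hσ])
  rw [← hsum, ← sum_image (f := fun B => (#B : ℝ) ^ σ) hinj]
  exact h _ (by simpa using fun c hc => hsub c (hC' hc)) (himage hdisj) (hpure.imp himage himage)

theorem sum_density_rpow_le_one (h : Critical G σ U) (hσ : σ ≠ 0) (hsub : ∀ c ∈ C, Y c ⊆ U)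
    (hdisj : (C : Set ι).PairwiseDisjoint Y)
    (hpure : (C : Set ι).Pairwise (fun c c' => Anticomplete G (Y c) (Y c')) ∨
      (C : Set ι).Pairwise (fun c c' => Anticomplete Gᶜ (Y c) (Y c'))) :
    ∑ c ∈ C, ((#(Y c) : ℝ) / #U) ^ σ ≤ 1 := by
  simp only [Real.div_rpow (Nat.cast_nonneg _) (Nat.cast_nonneg _), ← sum_div]
  exact div_le_one_of_le₀ (h.sum_rpow_le hσ hsub hdisj hpure) (by positivity)

theorem card_mul_rpow_le_one (h : Critical G σ U) (hσ : 0 < σ) (hU : U.Nonempty) (hp : 0 ≤ p)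
    (hsub : ∀ c ∈ C, Y c ⊆ U) (hlarge : ∀ c ∈ C, p * #U ≤ #(Y c))
    (hdisj : (C : Set ι).PairwiseDisjoint Y)
    (hanti : (C : Set ι).Pairwise fun c c' => Anticomplete G (Y c) (Y c')) :
    #C * p ^ σ ≤ 1 := by
  have hU0 : (0 : ℝ) < #U := by exact_mod_cast hU.card_pos
  calc #C * p ^ σ = ∑ _c ∈ C, p ^ σ := by simp
    _ ≤ ∑ c ∈ C, ((#(Y c) : ℝ) / #U) ^ σ := by
        gcongr with c hc
        exact (le_div_iff₀ hU0).2 (hlarge c hc)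
    _ ≤ 1 := h.sum_density_rpow_le_one hσ.ne' hsub hdisj (Or.inl hanti)

/-- The set `P` is anticomplete to the rest of `U`, which is therefore small. -/
theorem rpow_mul_card_le_card_union_setNeighborsIn (h : Critical G σ U) (hσ : 0 < σ) (hσ1 : σ ≤ 1)
    (hp : 0 ≤ p) {P : Finset V} (hP : P ⊆ U) (hlarge : p * #U ≤ #P) :
    p ^ σ * #U ≤ #(P ∪ setNeighborsIn G P U) := by
  rcases U.eq_empty_or_nonempty with rfl | hU
  · simp
  have hU0 : (0 : ℝ) < #U := by exact_mod_cast hU.card_pos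
  have hNU : P ∪ setNeighborsIn G P U ⊆ U := union_subset hP (setNeighborsIn_subset _ _)
  set W := U \ (P ∪ setNeighborsIn G P U) with hW
  have hWU : W ⊆ U := sdiff_subset
  have hPW : Anticomplete G P W := by
    intro p hp w hw hpw
    simp only [hW, mem_sdiff, mem_union, mem_setNeighborsIn] at hw
    exact hw.2 (Or.inr ⟨hw.1, p, hp, hpw⟩)
  have hdisj : Disjoint P W := disjoint_sdiff.mono_left subset_union_left
  have hsum : ((#P : ℝ) / #U) ^ σ + ((#W : ℝ) / #U) ^ σ ≤ 1 := by
    have := h.sum_density_rpow_le_one (C := univ) (Y := fun b : Bool => if b then P else W) hσ.ne'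
      (by simp [hP, hWU])
      (by simp [Set.PairwiseDisjoint, Set.Pairwise, onFun, hdisj, hdisj.symm])
      (Or.inl (by simp [Set.Pairwise, hPW, hPW.symm]))
    simpa using this
  have hpσ : p ^ σ ≤ ((#P : ℝ) / #U) ^ σ := by
    gcongr
    exact (le_div_iff₀ hU0).2 hlarge
  have hWσ : (#W : ℝ) / #U ≤ ((#W : ℝ) / #U) ^ σ :=
    Real.self_le_rpow_of_le_one (by positivity)
      (div_le_one_of_le₀ (cast_card_le_cast_card hWU) hU0.le) hσ1
  have hWcard : (#W : ℝ) = #U - #(P ∪ setNeighborsIn G P U) := cast_card_sdiff hNU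
  rw [hWcard] at hWσ hsum
  have : p ^ σ ≤ 1 - (#U - #(P ∪ setNeighborsIn G P U) : ℝ) / #U := by linarith
  rwa [sub_div, div_self hU0.ne', sub_sub_cancel, le_div_iff₀ hU0] at this

theorem sum_card_le (h : Critical G σ U) (hσ : 0 < σ) (hσ1 : σ < 1) (hsub : ∀ c ∈ C, Y c ⊆ U)
    (hdisj : (C : Set ι).PairwiseDisjoint Y)
    (hpure : (C : Set ι).Pairwise (fun c c' => Anticomplete G (Y c) (Y c')) ∨
      (C : Set ι).Pairwise (fun c c' => Anticomplete Gᶜ (Y c) (Y c')))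
    (hp : 0 ≤ p) (hsmall : ∀ c ∈ C, (#(Y c) : ℝ) ≤ p * #U) :
    ∑ c ∈ C, (#(Y c) : ℝ) ≤ p ^ (1 - σ) * #U := by
  rcases U.eq_empty_or_nonempty with rfl | hU
  · exact (sum_nonpos fun c hc => by simpa using hsmall c hc).trans_eq (by simp)
  have hU0 : (0 : ℝ) < #U := by exact_mod_cast hU.card_pos
  rw [← div_le_iff₀ hU0, sum_div]
  calc ∑ c ∈ C, (#(Y c) : ℝ) / #U
      = ∑ c ∈ C, ((#(Y c) : ℝ) / #U) ^ (1 - σ) * ((#(Y c) : ℝ) / #U) ^ σ := by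
        refine sum_congr rfl fun c _ => ?_
        rw [← Real.rpow_add' (by positivity) (by simp), sub_add_cancel, Real.rpow_one]
    _ ≤ ∑ c ∈ C, p ^ (1 - σ) * ((#(Y c) : ℝ) / #U) ^ σ := by
        have : 0 ≤ 1 - σ := by linarith
        gcongr with c hc
        exact (div_le_iff₀ hU0).2 (hsmall c hc)
    _ = p ^ (1 - σ) * ∑ c ∈ C, ((#(Y c) : ℝ) / #U) ^ σ := (mul_sum ..).symm
    _ ≤ p ^ (1 - σ) * 1 := by
        gcongr
        exact h.sum_density_rpow_le_one hσ.ne' hsub hdisj hpure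
    _ = p ^ (1 - σ) := mul_one _

end Critical

/-! ### Powers of a small scale -/

theorem ten_pow_mul_pow_mul_le_pow_mul {z n : ℝ} (hz : 0 < z) (hz0 : z ≤ 1 / 10 ^ 10)
    (hn : 0 ≤ n) {i j : ℕ} (hij : i < j) : 10 ^ 10 * (z ^ j * n) ≤ z ^ i * n := by
  have hz1 : z ≤ 1 := hz0.trans (by norm_num)
  calc 10 ^ 10 * (z ^ j * n) ≤ 10 ^ 10 * (z ^ (i + 1) * n) := by
        gcongr ?_ * (?_ * _)
        exact pow_le_pow_of_le_one hz.le hz1 hij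
    _ = 10 ^ 10 * z * (z ^ i * n) := by ring
    _ ≤ 1 * (z ^ i * n) := by
        gcongr
        linarith
    _ = z ^ i * n := one_mul _

theorem exists_two_thirds_pow_near {z : ℝ} (hz : 0 < z) (hz0 : z ≤ 1 / 10 ^ 10) :
    ∃ L : ℕ, (2 / 3 : ℝ) ^ L ≤ z ^ 1310 ∧ z ^ 1311 ≤ (2 / 3 : ℝ) ^ L ∧ 2 * L * z ≤ 1 := by
  have hz1 : z ≤ 1 := hz0.trans (by norm_num)
  obtain ⟨n, hlt, hle⟩ := exists_nat_pow_near_of_lt_one (x := z ^ 1310) (y := 2 / 3)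
    (by positivity) (pow_le_one₀ hz.le hz1) (by norm_num) (by norm_num)
  refine ⟨n + 1, hlt.le, ?_, ?_⟩
  · calc z ^ 1311 = z ^ 1310 * z := by ring
      _ ≤ (2 / 3) ^ n * (2 / 3) := by
          gcongr
          exact hz0.trans (by norm_num)
      _ = (2 / 3) ^ (n + 1) := by ring
  have hn : (n : ℝ) / 3 ≤ 1310 * -Real.log z := by
    have hlog := Real.log_le_log (by positivity) hle
    rw [Real.log_pow, Real.log_pow] at hlog
    have hthird : Real.log (2 / 3) ≤ -1 / 3 := by
      linarith [Real.log_le_sub_one_of_pos (show (0 : ℝ) < 2 / 3 by norm_num)]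
    have := mul_le_mul_of_nonneg_left hthird n.cast_nonneg
    push_cast at hlog
    linarith
  have hlogz : -Real.log z * z ≤ 2 / 10 ^ 5 := by
    have habs : -(Real.log z * √z) ≤ 2 := by
      have := Real.abs_log_mul_self_rpow_lt z (1 / 2) hz hz1 (by norm_num)
      rw [← Real.sqrt_eq_rpow] at this
      linarith [neg_abs_le (Real.log z * √z)]
    have hsqrt : √z ≤ 1 / 10 ^ 5 := Real.sqrt_le_left (by norm_num) |>.2 (by linarith)
    calc -Real.log z * z = -(Real.log z * √z) * √z := by
          linear_combination (-Real.log z) * (Real.mul_self_sqrt hz.le).symm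
      _ ≤ 2 * √z := by gcongr
      _ ≤ 2 * (1 / 10 ^ 5) := by gcongr
      _ = 2 / 10 ^ 5 := by norm_num
  have := mul_le_mul_of_nonneg_right hn hz.le
  push_cast
  linarith

theorem exists_one_lt_natCast_mul_le_two {z : ℝ} (hz : 0 < z) (hz1 : z ≤ 1) :
    ∃ k : ℕ, 1 < k * z ∧ k * z ≤ 2 := by
  refine ⟨⌊1 / z⌋₊ + 1, ?_, ?_⟩
  · exact_mod_cast (div_lt_iff₀ hz).1 (Nat.lt_floor_add_one (1 / z))
  · have : (⌊1 / z⌋₊ : ℝ) * z ≤ 1 := (le_div_iff₀ hz).1 (Nat.floor_le (by positivity))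
    push_cast
    linarith

theorem pow_rpow_one_div_1500 {z : ℝ} (hz : 0 ≤ z) : (z ^ 1500) ^ (1 / 1500 : ℝ) = z := by
  simpa using Real.pow_rpow_inv_natCast hz (n := 1500) (by norm_num)

namespace Critical

variable {U : Finset V} {z : ℝ}

theorem card_mul_le_one (h : Critical G (1 / 1500) U) (hU : U.Nonempty) (hz : 0 ≤ z)
    {C : Finset ι} {Y : ι → Finset V} (hsub : ∀ c ∈ C, Y c ⊆ U)
    (hlarge : ∀ c ∈ C, z ^ 1500 * #U ≤ (#(Y c) : ℝ)) (hdisj : (C : Set ι).PairwiseDisjoint Y)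
    (hanti : (C : Set ι).Pairwise fun c c' => Anticomplete G (Y c) (Y c')) : #C * z ≤ 1 := by
  simpa only [pow_rpow_one_div_1500 hz] using
    h.card_mul_rpow_le_one (by norm_num) hU (by positivity) hsub hlarge hdisj hanti

theorem mul_card_le_card_union_setNeighborsIn (h : Critical G (1 / 1500) U) (hz : 0 ≤ z)
    {P : Finset V} (hP : P ⊆ U) (hlarge : z ^ 1500 * #U ≤ (#P : ℝ)) :
    z * #U ≤ #(P ∪ setNeighborsIn G P U) := by
  simpa only [pow_rpow_one_div_1500 hz] using
    h.rpow_mul_card_le_card_union_setNeighborsIn (by norm_num) (by norm_num) (by positivity) hP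
      hlarge

theorem sum_card_le_pow_mul_card (h : Critical G (1 / 1500) U) (hz : 0 < z) (hz1 : z ≤ 1)
    {C : Finset ι} {Y : ι → Finset V} (hsub : ∀ c ∈ C, Y c ⊆ U)
    (hdisj : (C : Set ι).PairwiseDisjoint Y)
    (hpure : (C : Set ι).Pairwise (fun c c' => Anticomplete G (Y c) (Y c')) ∨
      (C : Set ι).Pairwise (fun c c' => Anticomplete Gᶜ (Y c) (Y c')))
    (hsmall : ∀ c ∈ C, (#(Y c) : ℝ) ≤ z ^ 400 * #U) :
    ∑ c ∈ C, (#(Y c) : ℝ) ≤ z ^ 200 * #U := by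
  refine (h.sum_card_le (by norm_num) (by norm_num) hsub hdisj hpure (by positivity)
    hsmall).trans ?_
  gcongr
  rw [← Real.rpow_natCast, ← Real.rpow_natCast, ← Real.rpow_mul hz.le]
  exact Real.rpow_le_rpow_of_exponent_ge hz hz1 (by norm_num)

end Critical

/-! ### Private neighbours inside a critical set -/

/-- Every vertex `x` of `U` has exactly one neighbour `f x` in `A`, and some vertex `v` is complete
to `A` and has no neighbours in `U`. -/
structure PrivateNeighbors (G : SimpleGraph V) (v : V) (A U : Finset V) (f : V → V) : Prop where
  adj_hub : ∀ a ∈ A, G.Adj v a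
  not_adj_hub : ∀ x ∈ U, ¬ G.Adj v x
  mem : ∀ x ∈ U, f x ∈ A
  adj : ∀ x ∈ U, G.Adj (f x) x
  eq : ∀ x ∈ U, ∀ a ∈ A, G.Adj a x → a = f x

theorem UniquelyCovers.exists_privateNeighbors {v : V} {A U : Finset V}
    (h : UniquelyCovers G A U)
    (hA : ∀ a ∈ A, G.Adj v a) (hU : ∀ x ∈ U, ¬ G.Adj v x) : ∃ f, PrivateNeighbors G v A U f := by
  have hunique : ∀ x, ∃ a, x ∈ U → (a ∈ A ∧ G.Adj a x) ∧ ∀ b, b ∈ A ∧ G.Adj b x → b = a :=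
    fun x => by
      by_cases hx : x ∈ U
      · obtain ⟨a, ha⟩ := h x hx
        exact ⟨a, fun _ => ha⟩
      · exact ⟨x, fun h => absurd h hx⟩
  choose f hf using hunique
  exact ⟨f, hA, hU, fun x hx => (hf x hx).1.1, fun x hx => (hf x hx).1.2,
    fun x hx a ha hax => (hf x hx).2 a ⟨ha, hax⟩⟩

namespace PrivateNeighbors

variable {v w q x x' : V} {A U : Finset V} {f : V → V}

theorem exists_card_le_mul_card_neighborsIn (h : PrivateNeighbors G v A U f) (hU : U.Nonempty) :
    ∃ w ∈ A, #U ≤ #A * #(neighborsIn G w U) := by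
  obtain ⟨x, hx⟩ := hU
  obtain ⟨w, hw, hmax⟩ := exists_max_image A (fun a => #(neighborsIn G a U)) ⟨f x, h.mem x hx⟩
  refine ⟨w, hw, ?_⟩
  calc #U ≤ #(A.biUnion fun a => neighborsIn G a U) := card_le_card fun y hy =>
        mem_biUnion.2 ⟨f y, h.mem y hy, mem_neighborsIn.2 ⟨hy, h.adj y hy⟩⟩
    _ ≤ #A * #(neighborsIn G w U) := card_biUnion_le_card_mul _ _ _ hmax

theorem adj_private (h : PrivateNeighbors G v A U f) (hG : C5Free G) (hw : w ∈ A) (hq : q ∈ U)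
    (hx : x ∈ U) (hwq : G.Adj w q) (hqx : G.Adj q x) (hwx : ¬ G.Adj w x) : G.Adj w (f x) := by
  by_contra hwf
  have hne : f x ≠ w := fun heq => hwx (heq ▸ h.adj x hx)
  refine hG.false_of_cycle (h.adj_hub w hw) hwq hqx (h.adj x hx).symm
    (h.adj_hub _ (h.mem x hx)).symm (h.not_adj_hub q hq) (h.not_adj_hub x hx) hwx hwf fun hqf => ?_
  exact hne ((h.eq q hq _ (h.mem x hx) hqf.symm).trans (h.eq q hq w hw hwq).symm)

theorem not_adj_of_ne (h : PrivateNeighbors G v A U f) (hG : C5Free G) (hw : w ∈ A) (hq : q ∈ U)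
    (hx : x ∈ U) (hx' : x' ∈ U) (hwq : G.Adj w q) (hwx : ¬ G.Adj w x) (hwx' : ¬ G.Adj w x')
    (hwf' : G.Adj w (f x')) (hqx : G.Adj q x) (hqx' : ¬ G.Adj q x') (hne : f x ≠ f x') :
    ¬ G.Adj x x' := by
  intro hxx'
  refine hG.false_of_cycle (h.adj x' hx').symm hwf'.symm hwq hqx hxx' (fun h => hwx' h.symm)
    (fun h => hqx' h.symm) (fun hfq => ?_) (fun hfx => ?_) hwx
  · exact hwx' ((h.eq q hq _ (h.mem x' hx') hfq).trans (h.eq q hq w hw hwq).symm ▸ h.adj x' hx')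
  · exact hne (h.eq x hx _ (h.mem x' hx') hfx).symm

theorem card_filter_eq_le (h : PrivateNeighbors G v A U f) {m : ℝ} (hm : 0 ≤ m)
    (hdeg : ∀ a ∈ A, (#(neighborsIn G a U) : ℝ) ≤ m) {D : Finset V} (hD : D ⊆ U) (b : V) :
    (#{x ∈ D | f x = b} : ℝ) ≤ m := by
  by_cases hb : b ∈ A
  · refine le_trans (cast_card_le_cast_card fun x hx => ?_) (hdeg b hb)
    obtain ⟨hxD, rfl⟩ := mem_filter.1 hx
    exact mem_neighborsIn.2 ⟨hD hxD, h.adj x (hD hxD)⟩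
  · rw [filter_false_of_mem fun x hx (hxb : f x = b) => hb (hxb ▸ h.mem x (hD hx))]
    simpa using hm

/-- Group the vertices at distance two from `w` according to their private neighbours, and separate
the groups by neighbourhoods of sets of neighbours of `w`. -/
theorem exists_anticomplete_family (h : PrivateNeighbors G v A U f) (hG : C5Free G) (hw : w ∈ A)
    {m : ℝ} (hm : 0 ≤ m) (hdegA : ∀ a ∈ A, (#(neighborsIn G a U) : ℝ) ≤ m)
    (hdegU : ∀ x ∈ U, (#(neighborsIn G x U) : ℝ) ≤ m) (C : Finset ι)
    (hcard : #C * (2 * #C * m + m) ≤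
      (#(setNeighborsIn G (neighborsIn G w U) U \ neighborsIn G w U) : ℝ)) :
    ∃ Y : ι → Finset V, (∀ c ∈ C, Y c ⊆ U ∧ m ≤ #(Y c)) ∧ (C : Set ι).PairwiseDisjoint Y ∧
      (C : Set ι).Pairwise fun c c' => Anticomplete G (Y c) (Y c') := by
  set T := neighborsIn G w U
  set D := setNeighborsIn G T U \ T
  have hT : ∀ q ∈ T, q ∈ U ∧ G.Adj w q := fun q hq => mem_neighborsIn.1 hq
  have hDU : D ⊆ U := sdiff_subset.trans (setNeighborsIn_subset _ _)
  have hDT : ∀ x ∈ D, ∃ q ∈ T, G.Adj q x := fun x hx => (mem_setNeighborsIn.1 (sdiff_subset hx)).2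
  have hDw : ∀ x ∈ D, ¬ G.Adj w x := fun x hx hwx =>
    (mem_sdiff.1 hx).2 (mem_neighborsIn.2 ⟨hDU hx, hwx⟩)
  have hDf : ∀ x ∈ D, G.Adj w (f x) := fun x hx => by
    obtain ⟨q, hq, hqx⟩ := hDT x hx
    exact h.adj_private hG hw (hT q hq).1 (hDU hx) (hT q hq).2 hqx (hDw x hx)
  obtain ⟨R, hR, hsep⟩ := exists_subsets_separated_by f (s := 2 * #C * m) (by positivity) hm C
    (h.card_filter_eq_le hm hdegA hDU) hcard
  have hRD : ∀ c ∈ C, R c ⊆ D := fun c hc => (hR c hc).1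
  obtain ⟨Y, hY, hanti⟩ := exists_pairwise_anticomplete hm (Q := T) C
    (fun c hc x hx => hDT x (hRD c hc hx))
    (fun c hc q hq => card_neighborsIn_le_of_subset ((hRD c hc).trans hDU) (hdegU q (hT q hq).1))
    (fun c hc => (hR c hc).2)
    (fun c hc c' hc' hne x hx x' hx' q hq hqx hqx' =>
      have hxD := hRD c hc hx
      have hxD' := hRD c' hc' hx'
      h.not_adj_of_ne hG hw (hT q hq).1 (hDU hxD) (hDU hxD') (hT q hq).2 (hDw x hxD)
        (hDw x' hxD') (hDf x' hxD') hqx hqx' (hsep hc hc' hne x hx x' hx'))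
  refine ⟨Y, fun c hc => ⟨(hY c hc).1.trans ((hRD c hc).trans hDU), (hY c hc).2⟩, ?_, hanti⟩
  exact fun c hc c' hc' hne => disjoint_left.2 fun x hx hx' =>
    hsep hc hc' hne x ((hY c hc).1 hx) x ((hY c' hc').1 hx') rfl

theorem false_of_critical (h : PrivateNeighbors G v A U f) (hG : C5Free G) {z n : ℝ} (hz : 0 < z)
    (hz0 : z ≤ 1 / 10 ^ 10) (hcrit : Critical G (1 / 1500) U) (hn : 0 < n) (hUn : (#U : ℝ) ≤ n)
    (hU : z ^ 91 * n ≤ #U) (hA : #A * z ^ 1411 ≤ 1)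
    (hdegA : ∀ a ∈ A, (#(neighborsIn G a U) : ℝ) ≤ z ^ 100 * n)
    (hdegU : ∀ x ∈ U, (#(neighborsIn G x U) : ℝ) ≤ z ^ 100 * n) : False := by
  have hz1 : z ≤ 1 := hz0.trans (by norm_num)
  have hgap : ∀ {i j : ℕ}, i < j → 10 ^ 10 * (z ^ j * n) ≤ z ^ i * n :=
    ten_pow_mul_pow_mul_le_pow_mul hz hz0 hn.le
  have hpos : ∀ i : ℕ, 0 < z ^ i * n := fun i => by positivity
  have hUne : U.Nonempty := card_pos.1 (by exact_mod_cast (hpos 91).trans_le hU)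
  obtain ⟨w, hw, hpigeon⟩ := h.exists_card_le_mul_card_neighborsIn hUne
  set T := neighborsIn G w U
  have hT : z ^ 1500 * #U ≤ (#T : ℝ) := by
    calc z ^ 1500 * #U ≤ z ^ 1411 * (#A * #T) := by
          exact mul_le_mul (pow_le_pow_of_le_one hz.le hz1 (by norm_num))
            (by exact_mod_cast hpigeon) (by positivity) (by positivity)
      _ = #A * z ^ 1411 * #T := by ring
      _ ≤ 1 * #T := by gcongr
      _ = #T := one_mul _
  set D := setNeighborsIn G T U \ T
  have hD : z ^ 93 * n ≤ #D := by
    have hexpand := hcrit.mul_card_le_card_union_setNeighborsIn hz.le (neighborsIn_subset _ _) hT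
    rw [← union_sdiff_self_eq_union] at hexpand
    have hzU : z ^ 92 * n ≤ z * #U := by
      calc z ^ 92 * n = z * (z ^ 91 * n) := by ring
        _ ≤ z * #U := by gcongr
    linarith [cast_card_union_le T D, hdegA w hw, hgap (show 92 < 93 by norm_num),
      hgap (show 92 < 100 by norm_num), hpos 92]
  obtain ⟨k, hk1, hk2⟩ := exists_one_lt_natCast_mul_le_two hz hz1
  obtain ⟨Y, hY, hdisj, hanti⟩ := h.exists_anticomplete_family hG hw (hpos 100).le hdegA hdegU
    (range k) (by
      have hcoeff : 2 * (k * z) * (k * z) + z * (k * z) ≤ 10 := by nlinarith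
      rw [card_range]
      calc k * (2 * k * (z ^ 100 * n) + z ^ 100 * n)
          = (2 * (k * z) * (k * z) + z * (k * z)) * (z ^ 98 * n) := by ring
        _ ≤ 10 * (z ^ 98 * n) := by gcongr
        _ ≤ #D := by linarith [hgap (show 93 < 98 by norm_num), hpos 98])
  have hkz := hcrit.card_mul_le_one hUne hz.le (fun c hc => (hY c hc).1)
    (fun c hc => (mul_le_mul_of_nonneg_left hUn (by positivity)).trans <| by
      linarith [(hY c hc).2, hgap (show 100 < 1500 by norm_num), hpos 1500]) hdisj hanti
  rw [card_range] at hkz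
  linarith

end PrivateNeighbors

/-! ### Stuck sets -/

/-- Every vertex of `S` has at most `y * #S` neighbours in `S`. -/
def Restricted (G : SimpleGraph V) (y : ℝ) (S : Finset V) : Prop :=
  ∀ v ∈ S, (#(neighborsIn G v S) : ℝ) ≤ y * #S

/-- A sparse set `S` that resists further sparsification at the scale `z`: none of its large subsets
is much sparser or much denser, although each of them contains a large critical set. The exponents
are chosen so that every loss in the argument fits between two of them. -/
structure Stuck (G : SimpleGraph V) (z : ℝ) (S : Finset V) : Prop where
  nonempty : S.Nonempty
  restricted : Restricted G (z ^ 100) S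
  not_restricted : ∀ X ⊆ S, z ^ 600 * #S ≤ (#X : ℝ) →
    ¬ Restricted G (z ^ 150) X ∧ ¬ Restricted Gᶜ (z ^ 150) X
  exists_critical : ∀ X ⊆ S, z ^ 600 * #S ≤ (#X : ℝ) →
    ∃ U ⊆ X, z * #X ≤ #U ∧ Critical G (1 / 1500) U

theorem Stuck.not_uniquelyCovers {z : ℝ} {S : Finset V} (h : Stuck G z S) (hG : C5Free G)
    (hz : 0 < z) (hz0 : z ≤ 1 / 10 ^ 10) {v : V} {A B : Finset V} (hA : A ⊆ neighborsIn G v S)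
    (hB : B ⊆ S \ neighborsIn G v S) (hBcard : z ^ 90 * #S ≤ (#B : ℝ))
    (hAcard : #A * z ^ 1411 ≤ 1) : ¬ UniquelyCovers G A B := by
  intro hcover
  have hS : (0 : ℝ) < #S := by exact_mod_cast h.nonempty.card_pos
  obtain ⟨U, hUB, hU, hcrit⟩ := h.exists_critical B (hB.trans sdiff_subset) <| by
    have : 0 < z ^ 600 * (#S : ℝ) := by positivity
    linarith [ten_pow_mul_pow_mul_le_pow_mul hz hz0 hS.le (show 90 < 600 by norm_num)]
  have hUS : U ⊆ S := hUB.trans (hB.trans sdiff_subset)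
  have hAS : A ⊆ S := hA.trans (neighborsIn_subset _ _)
  have hcoverU : UniquelyCovers G A U := fun x hx => hcover x (hUB hx)
  obtain ⟨f, hf⟩ := hcoverU.exists_privateNeighbors (v := v)
    (fun a ha => (mem_neighborsIn.1 (hA ha)).2) fun x hx hvx =>
      (mem_sdiff.1 (hB (hUB hx))).2 (mem_neighborsIn.2 ⟨hUS hx, hvx⟩)
  refine hf.false_of_critical hG hz hz0 hcrit hS (cast_card_le_cast_card hUS) ?_ hAcard
    (fun a ha => card_neighborsIn_le_of_subset hUS (h.restricted a (hAS ha)))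
    (fun x hx => card_neighborsIn_le_of_subset hUS (h.restricted x (hUS hx)))
  calc z ^ 91 * (#S : ℝ) = z * (z ^ 90 * #S) := by ring
    _ ≤ z * #B := by gcongr
    _ ≤ #U := hU

theorem Stuck.exists_small_cover {z : ℝ} {S : Finset V} (h : Stuck G z S) (hG : C5Free G)
    (hz : 0 < z) (hz0 : z ≤ 1 / 10 ^ 10) {v : V} (hv : v ∈ S) :
    ∃ H ⊆ S, neighborsIn G v S ⊆ H ∧ (#H : ℝ) ≤ z ^ 88 * #S ∧
      ∀ a ∈ neighborsIn G v S, (#(neighborsIn G a (S \ H)) : ℝ) ≤ z ^ 1310 * #S := by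
  set N := neighborsIn G v S
  have hNS : N ⊆ S := neighborsIn_subset _ _
  have hz1 : z ≤ 1 := hz0.trans (by norm_num)
  have hS : (0 : ℝ) < #S := by exact_mod_cast h.nonempty.card_pos
  have hgap : ∀ {i j : ℕ}, i < j → 10 ^ 10 * (z ^ j * #S) ≤ z ^ i * #S :=
    ten_pow_mul_pow_mul_le_pow_mul hz hz0 hS.le
  obtain ⟨L, hLle, hLge, hLz⟩ := exists_two_thirds_pow_near hz hz0
  rcases exists_uniquelyCovers_or_sparse (A := N) (B := S \ N) (Δ := z ^ 100 * #S)
    (θ := z ^ 90 * #S) (by positivity)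
    (fun a ha => card_neighborsIn_le_of_subset sdiff_subset (h.restricted a (hNS ha))) L with
    ⟨A, hA, B, hB, hcover, hBcard, hAcard⟩ | ⟨H, hHS, hH, hHdeg⟩
  · refine absurd hcover (h.not_uniquelyCovers hG hz hz0 hA hB hBcard ?_)
    refine le_of_mul_le_mul_right ?_ hS
    calc #A * z ^ 1411 * #S = #A * (z ^ 1311 * (z ^ 100 * #S)) := by ring
      _ ≤ #A * ((2 / 3) ^ L * (z ^ 100 * #S)) := by gcongr
      _ ≤ #(S \ N) := hAcard
      _ ≤ 1 * #S := by simpa using cast_card_le_cast_card sdiff_subset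
  refine ⟨N ∪ H, union_subset hNS (hHS.trans sdiff_subset), subset_union_left, ?_, fun a ha => ?_⟩
  · have hHcard : (#H : ℝ) ≤ z ^ 89 * #S := by
      calc (#H : ℝ) ≤ 2 * L * (z ^ 90 * #S) := hH
        _ = 2 * L * z * (z ^ 89 * #S) := by ring
        _ ≤ 1 * (z ^ 89 * #S) := by gcongr
        _ = z ^ 89 * #S := one_mul _
    have : 0 < z ^ 88 * (#S : ℝ) := by positivity
    linarith [cast_card_union_le N H, h.restricted v hv, hgap (show 88 < 89 by norm_num),
      hgap (show 88 < 100 by norm_num)]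
  · rw [← sup_eq_union, ← sdiff_sdiff_left]
    calc (#(neighborsIn G a ((S \ N) \ H)) : ℝ) ≤ (2 / 3) ^ L * (z ^ 100 * #S) := hHdeg a ha
      _ ≤ z ^ 1310 * (1 * #S) := by gcongr; exact pow_le_one₀ hz.le hz1
      _ = z ^ 1310 * #S := by ring

/-! ### Components of the bipartite graph between two sets -/

/-- `a` and `b` lie in the same component of the bipartite graph between `X` and `Y`. A path of this
graph is encoded by its vertices in `X`, consecutive ones having a common neighbour in `Y`. -/
def Joined (G : SimpleGraph V) (X Y : Finset V) : V → V → Prop :=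
  Relation.ReflTransGen fun a b => a ∈ X ∧ b ∈ X ∧ ∃ y ∈ Y, G.Adj a y ∧ G.Adj b y

/-- The part in `X` of the component of `a` in the bipartite graph between `X` and `Y`. -/
noncomputable def component (G : SimpleGraph V) (X Y : Finset V) (a : V) : Finset V :=
  {b ∈ X | Joined G X Y a b}

section Components

variable {X Y X' Y' : Finset V} {a b c y : V}

@[simp] theorem mem_component : b ∈ component G X Y a ↔ b ∈ X ∧ Joined G X Y a b := mem_filter

theorem component_subset : component G X Y a ⊆ X := filter_subset _ _

theorem Joined.refl : Joined G X Y a a := Relation.ReflTransGen.refl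

theorem Joined.symm (h : Joined G X Y a b) : Joined G X Y b a := by
  induction h with
  | refl => exact .refl
  | tail _ hcd ih =>
    obtain ⟨hc, hd, y, hy, hcy, hdy⟩ := hcd
    exact .head ⟨hd, hc, y, hy, hdy, hcy⟩ ih

theorem Joined.trans (h : Joined G X Y a b) (h' : Joined G X Y b c) : Joined G X Y a c :=
  Relation.ReflTransGen.trans h h'

theorem Joined.mono (hX : X ⊆ X') (hY : Y ⊆ Y') (h : Joined G X Y a b) : Joined G X' Y' a b :=
  Relation.ReflTransGen.mono
    (fun _ _ ⟨hu, hv, y, hy, hadj⟩ => ⟨hX hu, hX hv, y, hY hy, hadj⟩) _ _ h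

theorem Joined.of_common_neighbor (ha : a ∈ X) (hb : b ∈ X) (hy : y ∈ Y) (hay : G.Adj a y)
    (hby : G.Adj b y) : Joined G X Y a b :=
  Relation.ReflTransGen.single ⟨ha, hb, y, hy, hay, hby⟩

theorem Joined.exists_adj (h : Joined G X Y a b) (ha : ∃ y ∈ Y, G.Adj a y) :
    ∃ y ∈ Y, G.Adj b y := by
  rcases Relation.ReflTransGen.cases_tail h with rfl | ⟨c, _, _, _, y, hy, _, hby⟩
  · exact ha
  · exact ⟨y, hy, hby⟩

theorem component_mono (hX : X ⊆ X') (hY : Y ⊆ Y') :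
    component G X Y a ⊆ component G X' Y' a := fun b hb => by
  rw [mem_component] at hb ⊢
  exact ⟨hX hb.1, hb.2.mono hX hY⟩

theorem component_eq (h : Joined G X Y a b) : component G X Y a = component G X Y b := by
  ext x
  simp only [mem_component, and_congr_right_iff]
  exact fun _ => ⟨h.symm.trans, h.trans⟩

theorem disjoint_component (h : ¬ Joined G X Y a b) :
    Disjoint (component G X Y a) (component G X Y b) :=
  disjoint_left.2 fun _ hx hx' =>
    h ((mem_component.1 hx).2.trans (mem_component.1 hx').2.symm)

theorem exists_pairwise_not_joined_subset_biUnion {B : Finset V} (hB : B ⊆ X) :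
    ∃ C ⊆ B, (C : Set V).Pairwise (fun w w' => ¬ Joined G X Y w w') ∧
      B ⊆ C.biUnion (component G X Y) := by
  obtain ⟨C, hCB, hinj, himage⟩ := exists_subset_injOn_image_eq_of_surjOn (B : Set V)
    (B.image (component G X Y)) (by rw [coe_image]; exact Set.surjOn_image _ _)
  refine ⟨C, hCB, fun w hw w' hw' hne hj => hne (hinj hw hw' (component_eq hj)), fun w hw => ?_⟩
  obtain ⟨c, hc, hcw⟩ := mem_image.1 (himage.superset (mem_image_of_mem (component G X Y) hw))
  exact mem_biUnion.2 ⟨c, hc, hcw ▸ mem_component.2 ⟨hB hw, .refl⟩⟩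

theorem neighborsIn_component_eq_empty (ha : ∀ y ∈ Y, ¬ G.Adj a y) :
    neighborsIn G a (component G X Y a) = ∅ := by
  refine eq_empty_of_forall_notMem fun b hb => ?_
  obtain ⟨hb, hab⟩ := mem_neighborsIn.1 hb
  rcases Relation.ReflTransGen.cases_head (mem_component.1 hb).2 with
    rfl | ⟨c, ⟨_, _, y, hy, hay, _⟩, _⟩
  · exact G.loopless.irrefl _ hab
  · exact ha y hy hay

/-- The ordered pairs of vertices of `X` in the same component of the bipartite graph between `X`
and `Y`. Their number measures how far the components are from being small. -/
noncomputable def joinedPairs (G : SimpleGraph V) (X Y : Finset V) : Finset (V × V) :=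
  {p ∈ X ×ˢ X | Joined G X Y p.1 p.2}

@[simp] theorem mem_joinedPairs {p : V × V} :
    p ∈ joinedPairs G X Y ↔ (p.1 ∈ X ∧ p.2 ∈ X) ∧ Joined G X Y p.1 p.2 := by
  simp [joinedPairs]

theorem component_product_component_subset :
    component G X Y a ×ˢ component G X Y a ⊆ joinedPairs G X Y := fun p hp => by
  simp only [mem_product, mem_component, mem_joinedPairs] at hp ⊢
  exact ⟨⟨hp.1.1, hp.2.1⟩, hp.1.2.symm.trans hp.2.2⟩

theorem exists_minimal_deletion (G : SimpleGraph V) (X Y : Finset V) {l : ℝ} (hl : 0 ≤ l) :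
    ∃ Z : Finset V, l * #Z ≤ (#X : ℝ) ^ 2 ∧ ∀ D ⊆ X ∪ Y, (#(joinedPairs G (X \ Z) (Y \ Z)) : ℝ) ≤
      #(joinedPairs G ((X \ Z) \ D) ((Y \ Z) \ D)) + l * #D := by
  obtain ⟨Z, hZ, hmin⟩ := exists_min_image (X ∪ Y).powerset
    (fun Z => (#(joinedPairs G (X \ Z) (Y \ Z)) : ℝ) + l * #Z) ⟨∅, by simp⟩
  rw [mem_powerset] at hZ
  refine ⟨Z, ?_, fun D hD => ?_⟩
  · have hpairs : (#(joinedPairs G X Y) : ℝ) ≤ #X ^ 2 := by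
      exact_mod_cast (card_filter_le _ _).trans_eq (by rw [card_product, sq])
    have hempty := hmin ∅ (by simp)
    simp only [sdiff_empty, card_empty, Nat.cast_zero, mul_zero, add_zero] at hempty
    linarith [Nat.cast_nonneg (α := ℝ) #(joinedPairs G (X \ Z) (Y \ Z))]
  · have hunion := hmin (Z ∪ D) (mem_powerset.2 (union_subset hZ hD))
    have hsdiff : ∀ W : Finset V, W \ (Z ∪ D) = (W \ Z) \ D := fun W => sdiff_sdiff_left.symm
    rw [hsdiff, hsdiff] at hunion
    linarith [mul_le_mul_of_nonneg_left (cast_card_union_le Z D) hl]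

/-- Otherwise deleting `D` would separate `θ * #(component G X Y a) ^ 2` pairs. -/
theorem exists_card_lt_card_component_sdiff {l θ : ℝ} {D : Finset V}
    (hD : (#(joinedPairs G X Y) : ℝ) ≤ #(joinedPairs G (X \ D) (Y \ D)) + l * #D)
    (hlD : l * #D < θ * #(component G X Y a) ^ 2) :
    ∃ x ∈ component G X Y a,
      (1 - θ) * #(component G X Y a) < #(component G (X \ D) (Y \ D) x) := by
  by_contra! hsmall
  set C := component G X Y a
  set T := C.biUnion fun x => {x} ×ˢ component G (X \ D) (Y \ D) x
  have hT : (#T : ℝ) ≤ #C * ((1 - θ) * #C) := by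
    rw [← nsmul_eq_mul]
    refine (cast_card_biUnion_le_sum _ _).trans ?_
    refine sum_le_card_nsmul _ _ _ fun x hx => ?_
    rw [card_product, card_singleton, one_mul]
    exact hsmall x hx
  have hcover : joinedPairs G (X \ D) (Y \ D) ⊆ (joinedPairs G X Y \ C ×ˢ C) ∪ T := by
    intro p hp
    rw [mem_joinedPairs] at hp
    by_cases hpC : p ∈ C ×ˢ C
    · refine mem_union_right _ (mem_biUnion.2 ⟨p.1, (mem_product.1 hpC).1, ?_⟩)
      exact mem_product.2 ⟨mem_singleton_self _, mem_component.2 ⟨hp.1.2, hp.2⟩⟩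
    · refine mem_union_left _ (mem_sdiff.2 ⟨mem_joinedPairs.2 ⟨?_, ?_⟩, hpC⟩)
      · exact ⟨(mem_sdiff.1 hp.1.1).1, (mem_sdiff.1 hp.1.2).1⟩
      · exact hp.2.mono sdiff_subset sdiff_subset
  have hcard := (cast_card_le_cast_card hcover).trans (cast_card_union_le _ _)
  rw [cast_card_sdiff component_product_component_subset, card_product] at hcard
  push_cast at hcard
  linarith

end Components

theorem exists_restricted_or_restricted_compl {C : Finset V} {θ : ℝ} (hθ : 0 ≤ θ)
    (h : ∀ a ∈ C, (#(neighborsIn G a C) : ℝ) ≤ θ * #C ∨ (#(neighborsIn Gᶜ a C) : ℝ) ≤ θ * #C) :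
    ∃ D ⊆ C, (#C : ℝ) / 2 ≤ #D ∧ (Restricted G (2 * θ) D ∨ Restricted Gᶜ (2 * θ) D) := by
  have restricted_of_half : ∀ (G' : SimpleGraph V), ∀ D ⊆ C, (#C : ℝ) / 2 ≤ #D →
      (∀ a ∈ D, (#(neighborsIn G' a C) : ℝ) ≤ θ * #C) → Restricted G' (2 * θ) D := by
    intro G' D hDC hD hdeg v hv
    calc (#(neighborsIn G' v D) : ℝ) ≤ #(neighborsIn G' v C) := by gcongr
      _ ≤ 2 * θ * (#C / 2) := by linarith [hdeg v hv]
      _ ≤ 2 * θ * #D := by gcongr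
  set S := {a ∈ C | (#(neighborsIn G a C) : ℝ) ≤ θ * #C}
  have hSC : S ⊆ C := filter_subset _ _
  rcases le_total ((#C : ℝ) / 2) #S with hS | hS
  · exact ⟨S, hSC, hS, .inl (restricted_of_half G S hSC hS fun a ha => (mem_filter.1 ha).2)⟩
  · have hS' : (#C : ℝ) / 2 ≤ #(C \ S) := by rw [cast_card_sdiff hSC]; linarith
    exact ⟨C \ S, sdiff_subset, hS', .inr <| restricted_of_half Gᶜ _ sdiff_subset hS'
      fun a ha => (h a (mem_sdiff.1 ha).1).resolve_left (by grind)⟩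

/-! ### Hubs -/

theorem C5Free.adj_iff_adj (hG : C5Free G) {s t a a' h h' : V}
    (hsa : G.Adj s a) (hsa' : G.Adj s a') (hsh : ¬ G.Adj s h) (hsh' : ¬ G.Adj s h')
    (hth : G.Adj t h) (hth' : G.Adj t h') (hta : ¬ G.Adj t a) (hta' : ¬ G.Adj t a')
    (hah : G.Adj a h) (hah' : G.Adj a' h') (hnah' : ¬ G.Adj a h') (hna'h : ¬ G.Adj a' h) :
    G.Adj a a' ↔ G.Adj h h' := by
  constructor
  · intro haa
    by_contra hhh
    exact hG.false_of_cycle haa hah' hth'.symm hth hah.symm hnah' (mt .symm hta)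
      (mt .symm hta') hna'h (mt .symm hhh)
  · intro hhh
    by_contra haa
    exact hG.false_of_cycle hsa hah hhh hah'.symm hsa'.symm hsh hsh' hnah' haa (mt .symm hna'h)

/-- `s` is a hub of `X` and `t` a hub of `Y`: each is complete to its own set and anticomplete to
the other one. -/
structure Hubs (G : SimpleGraph V) (s t : V) (X Y : Finset V) : Prop where
  left : ∀ x ∈ X, G.Adj s x
  right : ∀ y ∈ Y, G.Adj t y
  left_not : ∀ y ∈ Y, ¬ G.Adj s y
  right_not : ∀ x ∈ X, ¬ G.Adj t x

namespace Hubs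

variable {s t a a' b b' y y' : V} {X Y : Finset V}

theorem mono {X' Y' : Finset V} (h : Hubs G s t X Y) (hX : X' ⊆ X) (hY : Y' ⊆ Y) :
    Hubs G s t X' Y' :=
  ⟨fun x hx => h.left x (hX hx), fun y hy => h.right y (hY hy),
    fun y hy => h.left_not y (hY hy), fun x hx => h.right_not x (hX hx)⟩

theorem adj_iff_adj (h : Hubs G s t X Y) (hG : C5Free G) (ha : a ∈ X) (ha' : a' ∈ X) (hy : y ∈ Y)
    (hy' : y' ∈ Y) (hay : G.Adj a y) (hay' : G.Adj a' y') (hnay' : ¬ G.Adj a y')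
    (hna'y : ¬ G.Adj a' y) : G.Adj a a' ↔ G.Adj y y' :=
  hG.adj_iff_adj (h.left a ha) (h.left a' ha') (h.left_not y hy) (h.left_not y' hy')
    (h.right y hy) (h.right y' hy') (h.right_not a ha) (h.right_not a' ha') hay hay' hnay' hna'y

theorem adj_congr_left (h : Hubs G s t X Y) (hG : C5Free G) (haa : Joined G X Y a a')
    (hab : ¬ Joined G X Y a b) (hb : b ∈ X) (hy : y ∈ Y) (hby : G.Adj b y) :
    G.Adj a b ↔ G.Adj a' b := by
  induction haa with
  | refl => rfl
  | @tail c d hac hcd ih =>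
    have hcb : ¬ Joined G X Y c b := fun hcb => hab (hac.trans hcb)
    have hdb : ¬ Joined G X Y d b := fun hdb => hab ((hac.tail hcd).trans hdb)
    obtain ⟨hc, hd, y', hy', hcy', hdy'⟩ := hcd
    have hcy : ¬ G.Adj c y := fun hcy => hcb (.of_common_neighbor hc hb hy hcy hby)
    have hdy : ¬ G.Adj d y := fun hdy => hdb (.of_common_neighbor hd hb hy hdy hby)
    have hby' : ¬ G.Adj b y' := fun hby' => hcb (.of_common_neighbor hc hb hy' hcy' hby')
    rw [ih, h.adj_iff_adj hG hc hb hy' hy hcy' hby hcy hby',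
      h.adj_iff_adj hG hd hb hy' hy hdy' hby hdy hby']

theorem adj_congr (h : Hubs G s t X Y) (hG : C5Free G) (haa : Joined G X Y a a')
    (hbb : Joined G X Y b b') (hab : ¬ Joined G X Y a b) (ha' : a' ∈ X) (hb : b ∈ X)
    (hay : ∃ y ∈ Y, G.Adj a y) (hby : ∃ y ∈ Y, G.Adj b y) : G.Adj a b ↔ G.Adj a' b' := by
  obtain ⟨y, hy, hby⟩ := hby
  obtain ⟨y', hy', hay'⟩ := haa.exists_adj hay
  rw [h.adj_congr_left hG haa hab hb hy hby, G.adj_comm a', G.adj_comm a']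
  exact h.adj_congr_left hG hbb (fun hba => hab (haa.trans hba.symm)) ha' hy' hay'

theorem adj_iff_adj_of_joined {X' Y' : Finset V} {x x' : V} (h : Hubs G s t X Y) (hG : C5Free G)
    (ha : a ∈ X) (hy : y ∈ Y) (hay : G.Adj a y) (hX' : ∀ c ∈ X', c ∈ X ∧ ¬ G.Adj c y)
    (hY' : ∀ q ∈ Y', q ∈ Y ∧ ¬ G.Adj a q) (hxx' : Joined G X' Y' x x') :
    G.Adj a x ↔ G.Adj a x' := by
  have adj_iff : ∀ c ∈ X', ∀ q ∈ Y', G.Adj c q → (G.Adj a c ↔ G.Adj y q) :=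
    fun c hc q hq hcq =>
      h.adj_iff_adj hG ha (hX' c hc).1 hy (hY' q hq).1 hay hcq (hY' q hq).2 (hX' c hc).2
  induction hxx' with
  | refl => rfl
  | tail _ hce ih =>
    obtain ⟨hc, he, q, hq, hcq, heq⟩ := hce
    exact ih.trans ((adj_iff _ hc q hq hcq).trans (adj_iff _ he q hq heq).symm)

/-- A giant part of the component survives the deletion of the neighbours of `a` and of one of its
neighbours, and `a` sees all or nothing of that part. -/
theorem card_neighborsIn_component_le (h : Hubs G s t X Y) (hG : C5Free G) {d l θ : ℝ}
    (hl : 0 ≤ l) (hθ : 0 ≤ θ) (hX : ∀ x ∈ X, (#(neighborsIn G x Y) : ℝ) ≤ d)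
    (hY : ∀ y ∈ Y, (#(neighborsIn G y X) : ℝ) ≤ d)
    (hmin : ∀ D ⊆ X ∪ Y,
      (#(joinedPairs G X Y) : ℝ) ≤ #(joinedPairs G (X \ D) (Y \ D)) + l * #D)
    (hld : l * (2 * d) < θ * #(component G X Y a) ^ 2) (ha : a ∈ X) :
    (#(neighborsIn G a (component G X Y a)) : ℝ) ≤ θ * #(component G X Y a) ∨
      (#(neighborsIn Gᶜ a (component G X Y a)) : ℝ) ≤ θ * #(component G X Y a) := by
  set C := component G X Y a
  by_cases hiso : ∃ y ∈ Y, G.Adj a y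
  swap
  · push Not at hiso
    left
    rw [neighborsIn_component_eq_empty hiso, card_empty, Nat.cast_zero]
    positivity
  obtain ⟨y, hy, hay⟩ := hiso
  set D := neighborsIn G a Y ∪ neighborsIn G y X
  have hD : (#D : ℝ) ≤ 2 * d := by
    linarith [cast_card_union_le (neighborsIn G a Y) (neighborsIn G y X), hX a ha, hY y hy]
  obtain ⟨x, hxC, hgiant⟩ := exists_card_lt_card_component_sdiff (a := a) (θ := θ)
    (hmin D (by grind [neighborsIn_subset]))
    ((mul_le_mul_of_nonneg_left hD hl).trans_lt hld)
  set K := component G (X \ D) (Y \ D) x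
  have hKC : K ⊆ C := (component_mono sdiff_subset sdiff_subset).trans
    (component_eq (mem_component.1 hxC).2).superset
  have hrest : (#(C \ K) : ℝ) ≤ θ * #C := by rw [cast_card_sdiff hKC]; linarith
  have hpure : ∀ k ∈ K, G.Adj a x ↔ G.Adj a k := fun k hk =>
    h.adj_iff_adj_of_joined hG ha hy hay (by grind [mem_neighborsIn, G.adj_comm])
      (by grind [mem_neighborsIn]) (mem_component.1 hk).2
  by_cases hax : G.Adj a x
  · refine .inr ((cast_card_le_cast_card fun b hb => ?_).trans hrest)
    obtain ⟨hb, hab⟩ := mem_neighborsIn.1 hb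
    exact mem_sdiff.2 ⟨hb, fun hbK => ((compl_adj G a b).1 hab).2 ((hpure b hbK).1 hax)⟩
  · refine .inl ((cast_card_le_cast_card fun b hb => ?_).trans hrest)
    obtain ⟨hb, hab⟩ := mem_neighborsIn.1 hb
    exact mem_sdiff.2 ⟨hb, fun hbK => hax ((hpure b hbK).2 hab)⟩

theorem exists_forall_card_component_le (h : Hubs G s t X Y) (hG : C5Free G) {d θ M : ℝ}
    (hd : 0 < d) (hθ : 0 < θ) (hM : 0 < M) (hX : ∀ x ∈ X, (#(neighborsIn G x Y) : ℝ) ≤ d)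
    (hY : ∀ y ∈ Y, (#(neighborsIn G y X) : ℝ) ≤ d)
    (hnot : ∀ C ⊆ X, M / 2 ≤ (#C : ℝ) →
      ¬ Restricted G (2 * θ) C ∧ ¬ Restricted Gᶜ (2 * θ) C) :
    ∃ Z : Finset V, #Z * (θ * M ^ 2) ≤ 4 * d * (#X : ℝ) ^ 2 ∧
      ∀ a ∈ X \ Z, (#(component G (X \ Z) (Y \ Z) a) : ℝ) ≤ M := by
  have hl : 0 < θ * M ^ 2 / (4 * d) := by positivity
  obtain ⟨Z, hZ, hmin⟩ := exists_minimal_deletion G X Y hl.le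
  refine ⟨Z, ?_, fun a _ => ?_⟩
  · calc #Z * (θ * M ^ 2) = 4 * d * (θ * M ^ 2 / (4 * d) * #Z) := by field_simp
      _ ≤ 4 * d * (#X : ℝ) ^ 2 := by gcongr
  by_contra! hlarge
  set C := component G (X \ Z) (Y \ Z) a
  have hld : θ * M ^ 2 / (4 * d) * (2 * d) < θ * (#C : ℝ) ^ 2 := by
    calc θ * M ^ 2 / (4 * d) * (2 * d) = θ * M ^ 2 / 2 := by field_simp; norm_num
      _ < θ * M ^ 2 := half_lt_self (by positivity)
      _ ≤ θ * (#C : ℝ) ^ 2 := by gcongr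
  obtain ⟨D, hDC, hD, hres⟩ := exists_restricted_or_restricted_compl (G := G) hθ.le
    fun c (hc : c ∈ C) => by
      obtain ⟨hcX, hac⟩ := mem_component.1 hc
      rw [show C = component G (X \ Z) (Y \ Z) c from component_eq hac] at hld ⊢
      exact (h.mono sdiff_subset sdiff_subset).card_neighborsIn_component_le hG hl.le hθ.le
        (fun x hx => (cast_card_le_cast_card (neighborsIn_mono x sdiff_subset)).trans
          (hX x (mem_sdiff.1 hx).1))
        (fun y hy => (cast_card_le_cast_card (neighborsIn_mono y sdiff_subset)).trans
          (hY y (mem_sdiff.1 hy).1))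
        (fun D hD => hmin D (hD.trans (union_subset_union sdiff_subset sdiff_subset))) hld hcX
  exact not_or.2 (hnot D (hDC.trans (component_subset.trans sdiff_subset)) (by linarith)) hres

end Hubs

theorem pairwise_anticomplete_or_pairwise_anticomplete_compl {C : Finset ι} {Y : ι → Finset V}
    {f : ι → Prop} (hne : ∀ i ∈ C, (Y i).Nonempty)
    (hf : (C : Set ι).Pairwise fun i j => ∀ a ∈ Y i, ∀ b ∈ Y j, G.Adj a b ↔ f i) :
    (C : Set ι).Pairwise (fun i j => Anticomplete G (Y i) (Y j)) ∨
      (C : Set ι).Pairwise (fun i j => Anticomplete Gᶜ (Y i) (Y j)) := by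
  have hconst : ∀ i ∈ C, ∀ j ∈ C, f i → f j := by
    intro i hi j hj hfi
    rcases eq_or_ne i j with rfl | hij
    · exact hfi
    obtain ⟨a, ha⟩ := hne i hi
    obtain ⟨b, hb⟩ := hne j hj
    exact (hf hj hi hij.symm b hb a ha).1 ((hf hi hj hij a ha b hb).2 hfi).symm
  by_cases hex : ∃ i ∈ C, f i
  · obtain ⟨i, hi, hfi⟩ := hex
    exact .inr fun j hj k hk hjk a ha b hb hab =>
      ((compl_adj G a b).1 hab).2 ((hf hj hk hjk a ha b hb).2 (hconst i hi j hj hfi))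
  · exact .inl fun j hj k hk hjk a ha b hb hab => hex ⟨j, hj, (hf hj hk hjk a ha b hb).1 hab⟩

/-- The vertices `w ∈ X` with a neighbour in `Y` which share a neighbour in `Q` with some neighbour
of `x` in `X`. -/
noncomputable def crossing (G : SimpleGraph V) (X Y Q : Finset V) (x : V) : Finset V :=
  {w ∈ X | (∃ y ∈ Y, G.Adj w y) ∧ ∃ p ∈ X, G.Adj p x ∧ ∃ q ∈ Q, G.Adj w q ∧ G.Adj p q}

@[simp] theorem mem_crossing {X Y Q : Finset V} {x w : V} : w ∈ crossing G X Y Q x ↔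
    w ∈ X ∧ (∃ y ∈ Y, G.Adj w y) ∧ ∃ p ∈ X, G.Adj p x ∧ ∃ q ∈ Q, G.Adj w q ∧ G.Adj p q :=
  mem_filter

theorem Hubs.adj_iff_of_mem_component {s t r p₀ p w w' a b : V} {X Y Q : Finset V}
    (h : Hubs G s t X Y) (h' : Hubs G s r X Q) (hG : C5Free G) (hw : w ∈ X)
    (hpw : ¬ Joined G X Y p₀ w) (hwY : ∃ y ∈ Y, G.Adj w y) (hwQ : ∃ q ∈ Q, G.Adj w q)
    (hw' : w' ∈ X) (hwQ' : ∃ q ∈ Q, G.Adj w' q) (hp : Joined G X Y p₀ p)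
    (hw'p : Joined G X Q w' p) (hww : ¬ Joined G X Q w w') (ha : a ∈ component G X Q w)
    (hb : b ∈ component G X Q w') : G.Adj a b ↔ G.Adj w p₀ := by
  obtain ⟨y, hy, hwy⟩ := hwY
  rw [mem_component] at ha hb
  rw [← h'.adj_congr hG ha.2 hb.2 hww ha.1 hw' hwQ hwQ',
    h'.adj_congr hG .refl hw'p hww hw hw' hwQ hwQ', G.adj_comm w, G.adj_comm w]
  exact (h.adj_congr_left hG hp hpw hw hy hwy).symm

/-- Apart from one component over `Y`, the crossing vertices are covered by components over `Q` any
two of which are complete or anticomplete to each other, always in the same way. -/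
theorem Hubs.card_crossing_le {s t r : V} {X Y Q U : Finset V}
    (h : Hubs G s t X Y) (h' : Hubs G s r X Q) (hG : C5Free G) {z : ℝ} (hz : 0 < z) (hz1 : z ≤ 1)
    (hU : Critical G (1 / 1500) U) (hXU : X ⊆ U)
    (hY : ∀ a ∈ X, (#(component G X Y a) : ℝ) ≤ z ^ 400 * #U)
    (hQ : ∀ a ∈ X, (#(component G X Q a) : ℝ) ≤ z ^ 400 * #U) {x : V} (hx : x ∈ Y) :
    (#(crossing G X Y Q x) : ℝ) ≤ 2 * (z ^ 200 * #U) := by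
  by_cases hne : ∃ p ∈ X, G.Adj p x
  swap
  · have : crossing G X Y Q x = ∅ := by grind [mem_crossing]
    rw [this, card_empty, Nat.cast_zero]
    positivity
  obtain ⟨p₀, hp₀, hp₀x⟩ := hne
  set F := component G X Y p₀
  set B := crossing G X Y Q x \ F
  have hB : ∀ w ∈ B, w ∈ X ∧ ¬ Joined G X Y p₀ w ∧ (∃ y ∈ Y, G.Adj w y) ∧
      (∃ q ∈ Q, G.Adj w q) ∧ ∃ p ∈ X, Joined G X Y p₀ p ∧ Joined G X Q w p := by
    intro w hw
    obtain ⟨hwB, hwF⟩ := mem_sdiff.1 hw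
    obtain ⟨hwX, hwY, p, hp, hpx, q, hq, hwq, hpq⟩ := mem_crossing.1 hwB
    exact ⟨hwX, fun hj => hwF (mem_component.2 ⟨hwX, hj⟩), hwY, ⟨q, hq, hwq⟩, p, hp,
      .of_common_neighbor hp₀ hp hx hp₀x hpx, .of_common_neighbor hwX hp hq hwq hpq⟩
  have hBX : B ⊆ X := fun w hw => (hB w hw).1
  obtain ⟨C, hCB, hnotJoined, hBC⟩ :=
    exists_pairwise_not_joined_subset_biUnion (G := G) (Y := Q) hBX
  have hCX := hCB.trans hBX
  have hsum := hU.sum_card_le_pow_mul_card hz hz1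
    (fun w _ => component_subset.trans hXU)
    (fun w hw w' hw' hne => disjoint_component (hnotJoined hw hw' hne))
    (pairwise_anticomplete_or_pairwise_anticomplete_compl (f := fun w => G.Adj w p₀)
      (fun w hw => ⟨w, mem_component.2 ⟨hCX hw, .refl⟩⟩) fun w hw w' hw' hne a ha b hb => by
        obtain ⟨hwX, hwF, hwY, hwQ, _⟩ := hB w (hCB hw)
        obtain ⟨hwX', _, _, hwQ', p, _, hp₀p, hwp⟩ := hB w' (hCB hw')
        exact h.adj_iff_of_mem_component h' hG hwX hwF hwY hwQ hwX' hwQ' hp₀p hwp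
          (hnotJoined hw hw' hne) ha hb)
    fun w hw => hQ w (hCX hw)
  have hcover : crossing G X Y Q x ⊆ F ∪ C.biUnion (component G X Q) :=
    sdiff_le_iff.1 hBC
  have hzU : z ^ 400 * (#U : ℝ) ≤ z ^ 200 * #U := by
    gcongr ?_ * _
    exact pow_le_pow_of_le_one hz.le hz1 (by norm_num)
  linarith [(cast_card_le_cast_card hcover).trans (cast_card_union_le _ _),
    cast_card_biUnion_le_sum C (component G X Q), hY p₀ hp₀]

/-! ### Clusters -/

theorem card_filter_lt_mul_le {β : Type*} (r : α → β → Prop) (A : Finset α) (B : Finset β)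
    {c d : ℝ} (h : ∀ b ∈ B, (#{a ∈ A | r a b} : ℝ) ≤ c) :
    #{a ∈ A | d < (#{b ∈ B | r a b} : ℝ)} * d ≤ #B * c :=
  calc #{a ∈ A | d < (#{b ∈ B | r a b} : ℝ)} * d
      = ∑ a ∈ A with d < (#{b ∈ B | r a b} : ℝ), d := by rw [sum_const, nsmul_eq_mul]
    _ ≤ ∑ a ∈ A with d < (#{b ∈ B | r a b} : ℝ), (#{b ∈ B | r a b} : ℝ) :=
      sum_le_sum fun a ha => (mem_filter.1 ha).2.le
    _ ≤ ∑ a ∈ A, (#{b ∈ B | r a b} : ℝ) :=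
      sum_le_sum_of_subset_of_nonneg (filter_subset _ _) fun _ _ _ => by positivity
    _ = ∑ b ∈ B, (#{a ∈ A | r a b} : ℝ) := by
      exact_mod_cast sum_card_bipartiteAbove_eq_sum_card_bipartiteBelow r
    _ ≤ ∑ _b ∈ B, c := sum_le_sum h
    _ = #B * c := by rw [sum_const, nsmul_eq_mul]

theorem card_mul_le_card_mul_card_filter_add {β : Type*} (r : α → β → Prop) (A : Finset α)
    (B : Finset β) {c : ℝ} (k : ℕ) (h : ∀ a ∈ A, c ≤ (#{b ∈ B | r a b} : ℝ)) :
    #A * c ≤ #A * #{b ∈ B | k ≤ #{a ∈ A | r a b}} + k * #B :=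
  calc #A * c = ∑ _a ∈ A, c := by rw [sum_const, nsmul_eq_mul]
    _ ≤ ∑ a ∈ A, (#{b ∈ B | r a b} : ℝ) := sum_le_sum h
    _ = ∑ b ∈ B, (#{a ∈ A | r a b} : ℝ) := by
      exact_mod_cast sum_card_bipartiteAbove_eq_sum_card_bipartiteBelow r
    _ ≤ ∑ b ∈ B, ((if k ≤ #{a ∈ A | r a b} then (#A : ℝ) else 0) + k) := by
      refine sum_le_sum fun b _ => ?_
      split_ifs with hk
      · exact (cast_card_le_cast_card (filter_subset _ _)).trans (by simp)
      · rw [zero_add]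
        exact_mod_cast (not_le.1 hk).le
    _ = #A * #{b ∈ B | k ≤ #{a ∈ A | r a b}} + k * #B := by
      rw [sum_add_distrib, ← sum_filter, sum_const, sum_const, nsmul_eq_mul, nsmul_eq_mul,
        mul_comm, mul_comm (#B : ℝ)]

/-- A system of at most `2 / z ^ 5` small disjoint clusters `W t` in a critical set `U`, any two of
them sparse to each other. The hub of a cluster is complete to it and anticomplete to the others;
neither `G` nor its complement is sparse on a large subset of `U`. -/
structure Clusters (G : SimpleGraph V) (z : ℝ) (U : Finset V) (T : Finset ι)
    (W : ι → Finset V) (hub : ι → V) : Prop where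
  nonempty : U.Nonempty
  subset : ∀ t ∈ T, W t ⊆ U
  disjoint : (T : Set ι).PairwiseDisjoint W
  card_index_le : #T * z ^ 5 ≤ 2
  card_le : ∀ t ∈ T, (#(W t) : ℝ) ≤ z ^ 4 * #U
  hub_adj : ∀ t ∈ T, ∀ x ∈ W t, G.Adj (hub t) x
  hub_not_adj : (T : Set ι).Pairwise fun s t => ∀ x ∈ W t, ¬ G.Adj (hub s) x
  card_neighborsIn_le : (T : Set ι).Pairwise fun s t =>
    ∀ x ∈ W s, (#(neighborsIn G x (W t)) : ℝ) ≤ z ^ 1000 * #U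
  not_restricted : ∀ X ⊆ U, z ^ 401 * #U ≤ (#X : ℝ) →
    ¬ Restricted G (z ^ 150) X ∧ ¬ Restricted Gᶜ (z ^ 150) X
  critical : Critical G (1 / 1500) U

/-- A vertex `w` of the cluster `W s` with a neighbour `q t` in `W t` for each `t ∈ J`, such that
outside `B` no vertex of these clusters shares a neighbour in `W s` with any of the `q j`. -/
structure Star (G : SimpleGraph V) (T : Finset ι) (W : ι → Finset V) (B : Finset V) (s : ι) (w : V)
    (J : Finset ι) (q : ι → V) : Prop where
  mem_index : s ∈ T
  mem : w ∈ W s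
  index_subset : J ⊆ T
  notMem_index : s ∉ J
  leaf_mem : ∀ t ∈ J, q t ∈ W t
  adj : ∀ t ∈ J, G.Adj w (q t)
  not_adj_leaf : ∀ t ∈ J, ∀ j ∈ J, ∀ x ∈ W t, x ∉ B → ∀ p ∈ W s, G.Adj p x → ¬ G.Adj p (q j)

/-- The neighbours of the leaf `q t` of a star in its own cluster `W t` which lie outside `B`, have
a neighbour in `W s`, and are adjacent neither to the centre `w` nor to another leaf. -/
noncomputable def starRegion (G : SimpleGraph V) (W : ι → Finset V) (B : Finset V) (s : ι) (w : V)
    (J : Finset ι) (q : ι → V) (t : ι) : Finset V :=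
  {x ∈ neighborsIn G (q t) (setNeighborsIn G (W s) (W t)) |
    ¬ G.Adj w x ∧ (∀ j ∈ J, j ≠ t → ¬ G.Adj (q j) x) ∧ x ∉ B}

theorem mem_starRegion {W : ι → Finset V} {B : Finset V} {s t : ι} {w x : V} {J : Finset ι}
    {q : ι → V} : x ∈ starRegion G W B s w J q t ↔
      ((x ∈ W t ∧ ∃ p ∈ W s, G.Adj p x) ∧ G.Adj (q t) x) ∧
        ¬ G.Adj w x ∧ (∀ j ∈ J, j ≠ t → ¬ G.Adj (q j) x) ∧ x ∉ B := by
  simp only [starRegion, mem_filter, mem_neighborsIn, mem_setNeighborsIn]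

namespace Clusters

variable {z : ℝ} {U : Finset V} {T : Finset ι} {W : ι → Finset V} {hub : ι → V}

theorem hubs (h : Clusters G z U T W hub) {s t : ι} (hs : s ∈ T) (ht : t ∈ T) (hst : s ≠ t) :
    Hubs G (hub s) (hub t) (W s) (W t) :=
  ⟨h.hub_adj s hs, h.hub_adj t ht, h.hub_not_adj hs ht hst, h.hub_not_adj ht hs hst.symm⟩

theorem mono {W' : ι → Finset V} (h : Clusters G z U T W hub) (hW : ∀ t ∈ T, W' t ⊆ W t) :
    Clusters G z U T W' hub where
  nonempty := h.nonempty
  subset t ht := (hW t ht).trans (h.subset t ht)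
  disjoint s hs t ht hst := disjoint_of_subset_left (hW s hs)
    (disjoint_of_subset_right (hW t ht) (h.disjoint hs ht hst))
  card_index_le := h.card_index_le
  card_le t ht := (cast_card_le_cast_card (hW t ht)).trans (h.card_le t ht)
  hub_adj t ht x hx := h.hub_adj t ht x (hW t ht hx)
  hub_not_adj _ hs t ht hst x hx := h.hub_not_adj hs ht hst x (hW t ht hx)
  card_neighborsIn_le s hs t ht hst x hx :=
    (cast_card_le_cast_card (neighborsIn_mono x (hW t ht))).trans
      (h.card_neighborsIn_le hs ht hst x (hW s hs hx))
  not_restricted := h.not_restricted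
  critical := h.critical

theorem card_pos (h : Clusters G z U T W hub) : (0 : ℝ) < #U := by
  exact_mod_cast h.nonempty.card_pos

theorem card_low_degree_le (h : Clusters G z U T W hub) (hz : 0 < z) (hz1 : z ≤ 1) {X : Finset V}
    (hX : X ⊆ U) : (#{x ∈ X | (#(neighborsIn G x X) : ℝ) < z ^ 170 * #U} : ℝ) ≤ z ^ 20 * #U := by
  by_contra! hlarge
  have hsub := filter_subset (fun x => (#(neighborsIn G x X) : ℝ) < z ^ 170 * #U) X
  refine (h.not_restricted _ (hsub.trans hX) (le_trans ?_ hlarge.le)).1 fun x hx => ?_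
  · gcongr ?_ * _
    exact pow_le_pow_of_le_one hz.le hz1 (by norm_num)
  · calc (#(neighborsIn G x _) : ℝ) ≤ #(neighborsIn G x X) :=
          cast_card_le_cast_card (neighborsIn_mono x hsub)
      _ ≤ z ^ 170 * #U := (mem_filter.1 hx).2.le
      _ = z ^ 150 * (z ^ 20 * #U) := by ring
      _ ≤ _ := by gcongr

theorem card_biUnion_offDiag_le (h : Clusters G z U T W hub) (hz : 0 < z) (hz0 : z ≤ 1 / 10 ^ 10)
    (i : ℕ) {Z : ι × ι → Finset V} (hZ : ∀ p ∈ T.offDiag, (#(Z p) : ℝ) ≤ z ^ (i + 11) * #U) :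
    (#(T.offDiag.biUnion Z) : ℝ) ≤ z ^ i * #U := by
  have hoff : (#T.offDiag : ℝ) ≤ #T * #T := by
    have : #T.offDiag ≤ #T * #T := by rw [offDiag_card]; omega
    exact_mod_cast this
  have hcount : (#T * z ^ 5) ^ 2 ≤ 2 ^ 2 := pow_le_pow_left₀ (by positivity) h.card_index_le 2
  calc (#(T.offDiag.biUnion Z) : ℝ) ≤ ∑ p ∈ T.offDiag, (#(Z p) : ℝ) :=
        cast_card_biUnion_le_sum _ _
    _ ≤ #T.offDiag * (z ^ (i + 11) * #U) := by
      simpa only [sum_const, nsmul_eq_mul] using sum_le_sum hZ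
    _ ≤ #T * #T * (z ^ (i + 11) * #U) := by gcongr
    _ = (#T * z ^ 5) ^ 2 * (z ^ (i + 1) * #U) := by ring
    _ ≤ 2 ^ 2 * (z ^ (i + 1) * #U) := by gcongr
    _ ≤ z ^ i * #U := by
      have : 0 < z ^ (i + 1) * (#U : ℝ) := mul_pos (by positivity) h.card_pos
      linarith [ten_pow_mul_pow_mul_le_pow_mul hz hz0 h.card_pos.le (Nat.lt_add_one i)]

section Star

variable {B : Finset V} {s : ι} {w : V} {J : Finset ι} {q : ι → V}

theorem not_adj_of_mem_starRegion (h : Clusters G z U T W hub) (hG : C5Free G)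
    (hstar : Star G T W B s w J q) {c c' : ι} (hc : c ∈ J) (hc' : c' ∈ J) (hcc : c ≠ c') {x x' : V}
    (hx : x ∈ starRegion G W B s w J q c) (hx' : x' ∈ starRegion G W B s w J q c') {p : V}
    (hp : p ∈ W s) (hpq : ∀ j ∈ J, ¬ G.Adj p (q j)) (hpx : G.Adj p x) (hpx' : ¬ G.Adj p x') :
    ¬ G.Adj x x' := by
  intro hxx
  obtain ⟨⟨⟨hxW, -⟩, hqx⟩, hwx, hjx, -⟩ := mem_starRegion.1 hx
  obtain ⟨⟨-, hqx'⟩, hwx', -, -⟩ := mem_starRegion.1 hx'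
  have hsc : s ≠ c := fun hsc => hstar.notMem_index (hsc ▸ hc)
  have hhub := h.hub_not_adj hstar.mem_index (hstar.index_subset hc) hsc
  have hpw : G.Adj p w := by
    by_contra hpw
    exact hG.false_of_cycle (h.hub_adj s hstar.mem_index w hstar.mem) (hstar.adj c hc) hqx hpx.symm
      (h.hub_adj s hstar.mem_index p hp).symm (hhub _ (hstar.leaf_mem c hc)) (hhub _ hxW) hwx
      (mt .symm hpw) (mt .symm (hpq c hc))
  exact hG.false_of_cycle hpx.symm hpw (hstar.adj c' hc') hqx' hxx.symm (mt .symm hwx)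
    (mt .symm (hjx c' hc' hcc.symm)) (hpq c' hc') hpx' hwx'

theorem two_mul_card_mul_le_card_starRegion (h : Clusters G z U T W hub) (hz : 0 < z)
    (hz0 : z ≤ 1 / 10 ^ 10) (hstar : Star G T W B s w J q) (hJ : #J * z ≤ 2)
    (hB : (#B : ℝ) ≤ z ^ 172 * #U) {t : ι} (ht : t ∈ J)
    (hdeg : z ^ 170 * #U ≤ (#(neighborsIn G (q t) (setNeighborsIn G (W s) (W t))) : ℝ)) :
    2 * #J * (z ^ 173 * #U) ≤ (#(starRegion G W B s w J q t) : ℝ) := by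
  have hgap : ∀ {i j : ℕ}, i < j → 10 ^ 10 * (z ^ j * #U) ≤ z ^ i * #U :=
    ten_pow_mul_pow_mul_le_pow_mul hz hz0 h.card_pos.le
  have hpos : ∀ i : ℕ, 0 < z ^ i * (#U : ℝ) := fun i => mul_pos (by positivity) h.card_pos
  have hJz : ∀ i j : ℕ, i + 1 = j → #J * (z ^ j * #U) ≤ 2 * (z ^ i * (#U : ℝ)) := by
    rintro i _ rfl
    calc #J * (z ^ (i + 1) * #U) = #J * z * (z ^ i * (#U : ℝ)) := by ring
      _ ≤ 2 * (z ^ i * #U) := by gcongr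
  have htT := hstar.index_subset ht
  have hst : s ≠ t := fun hst => hstar.notMem_index (hst ▸ ht)
  set others := (J.erase t).biUnion fun j => neighborsIn G (q j) (W t)
  have hothers : (#others : ℝ) ≤ #J * (z ^ 1000 * #U) := by
    calc (#others : ℝ) ≤ ∑ j ∈ J.erase t, (#(neighborsIn G (q j) (W t)) : ℝ) :=
          cast_card_biUnion_le_sum _ _
      _ ≤ ∑ _j ∈ J.erase t, z ^ 1000 * (#U : ℝ) := sum_le_sum fun j hj =>
          have hjJ := mem_of_mem_erase hj
          h.card_neighborsIn_le (hstar.index_subset hjJ) htT (ne_of_mem_erase hj) _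
            (hstar.leaf_mem j hjJ)
      _ = #(J.erase t) * (z ^ 1000 * #U) := by rw [sum_const, nsmul_eq_mul]
      _ ≤ #J * (z ^ 1000 * #U) :=
        mul_le_mul_of_nonneg_right (cast_card_le_cast_card (erase_subset _ _)) (hpos 1000).le
  have hcover : neighborsIn G (q t) (setNeighborsIn G (W s) (W t)) ⊆
      starRegion G W B s w J q t ∪ ((neighborsIn G w (W t) ∪ others) ∪ B) := by
    intro x hx
    simp only [mem_union, mem_starRegion, others, mem_biUnion, mem_erase, mem_neighborsIn,
      mem_setNeighborsIn] at hx ⊢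
    grind
  linarith [(cast_card_le_cast_card hcover).trans (cast_card_union_le _ _),
    cast_card_union_le (neighborsIn G w (W t) ∪ others) B,
    cast_card_union_le (neighborsIn G w (W t)) others,
    h.card_neighborsIn_le hstar.mem_index htT hst w hstar.mem, hJz 999 1000 rfl, hJz 172 173 rfl,
    hgap (show 171 < 172 by norm_num), hgap (show 170 < 171 by norm_num),
    hgap (show 171 < 999 by norm_num), hgap (show 999 < 1000 by norm_num),
    hpos 170, hpos 171, hpos 172, hpos 999, hpos 1000]

theorem false_of_star (h : Clusters G z U T W hub) (hG : C5Free G) (hz : 0 < z)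
    (hz0 : z ≤ 1 / 10 ^ 10) (hstar : Star G T W B s w J q) (hJ : 1 < #J * z) (hJ2 : #J * z ≤ 2)
    (hB : (#B : ℝ) ≤ z ^ 172 * #U) (hdeg : ∀ t ∈ J,
      z ^ 170 * #U ≤ (#(neighborsIn G (q t) (setNeighborsIn G (W s) (W t))) : ℝ)) : False := by
  have hgap : ∀ {i j : ℕ}, i < j → 10 ^ 10 * (z ^ j * #U) ≤ z ^ i * #U :=
    ten_pow_mul_pow_mul_le_pow_mul hz hz0 h.card_pos.le
  have hpos : ∀ i : ℕ, 0 < z ^ i * (#U : ℝ) := fun i => mul_pos (by positivity) h.card_pos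
  have hne : ∀ t ∈ J, s ≠ t := fun t ht hst => hstar.notMem_index (hst ▸ ht)
  have hregion : ∀ t, starRegion G W B s w J q t ⊆ W t := fun t x hx =>
    (mem_starRegion.1 hx).1.1.1
  obtain ⟨Y, hY, hanti⟩ := exists_pairwise_anticomplete (G := G)
    (Q := {p ∈ W s | ∀ j ∈ J, ¬ G.Adj p (q j)}) (R := starRegion G W B s w J q) (hpos 173).le J
    (fun t ht x hx => by
      obtain ⟨⟨⟨hxW, p, hp, hpx⟩, -⟩, -, -, hxB⟩ := mem_starRegion.1 hx
      exact ⟨p, mem_filter.2 ⟨hp, fun j hj => hstar.not_adj_leaf t ht j hj x hxW hxB p hp hpx⟩,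
        hpx⟩)
    (fun t ht p hp => by
      have hcross := h.card_neighborsIn_le hstar.mem_index (hstar.index_subset ht) (hne t ht) p
        (mem_filter.1 hp).1
      linarith [cast_card_le_cast_card (neighborsIn_mono (G := G) p (hregion t)), hpos 1000,
        hgap (show 173 < 1000 by norm_num)])
    (fun t ht => h.two_mul_card_mul_le_card_starRegion hz hz0 hstar hJ2 hB ht (hdeg t ht))
    fun c hc c' hc' hcc x hx x' hx' p hp => h.not_adj_of_mem_starRegion hG hstar hc hc' hcc hx hx'
      (mem_filter.1 hp).1 (mem_filter.1 hp).2
  have hYW : ∀ t ∈ J, Y t ⊆ W t := fun t ht => (hY t ht).1.trans (hregion t)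
  refine hJ.not_ge (h.critical.card_mul_le_one h.nonempty hz.le
    (fun t ht => (hYW t ht).trans (h.subset t (hstar.index_subset ht))) (fun t ht => ?_)
    (fun c hc c' hc' hcc => disjoint_of_subset_left (hYW c hc) (disjoint_of_subset_right
      (hYW c' hc') (h.disjoint (hstar.index_subset hc) (hstar.index_subset hc') hcc))) hanti)
  linarith [(hY t ht).2, hgap (show 173 < 1500 by norm_num), hpos 1500]

end Star

end Clusters

/-- `w` is a crossing vertex of `x ∈ W t` for some choice of its own cluster and of the cluster of
shared neighbours. -/
def Crossing (G : SimpleGraph V) (T : Finset ι) (W : ι → Finset V) (w x : V) : Prop :=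
  ∃ s ∈ T, ∃ t ∈ T, ∃ j ∈ T, s ≠ t ∧ s ≠ j ∧ x ∈ W t ∧ w ∈ crossing G (W s) (W t) (W j) x

/-- `w` lies in a cluster other than `W t` and has a neighbour in `W t` outside `L`. -/
def Touches (G : SimpleGraph V) (T : Finset ι) (W : ι → Finset V) (L : Finset V) (t : ι) (w : V) :
    Prop :=
  w ∈ T.biUnion W ∧ w ∉ W t ∧ ∃ q ∈ W t \ L, G.Adj w q

/-- The vertices of some `W t` having a neighbour in another cluster `W s`, but only few neighbours
among the vertices of `W t` with this property. -/
noncomputable def lowDegreeVertices (G : SimpleGraph V) (z : ℝ) (U : Finset V) (T : Finset ι)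
    (W : ι → Finset V) : Finset V :=
  T.offDiag.biUnion fun p => {x ∈ setNeighborsIn G (W p.1) (W p.2) |
    (#(neighborsIn G x (setNeighborsIn G (W p.1) (W p.2))) : ℝ) < z ^ 170 * #U}

theorem Restricted.mono {y y' : ℝ} {S : Finset V} (h : Restricted G y S) (hy : y ≤ y') :
    Restricted G y' S := fun v hv => (h v hv).trans (by gcongr)

namespace Clusters

variable {z : ℝ} {U : Finset V} {T : Finset ι} {W : ι → Finset V} {hub : ι → V}

theorem card_filter_crossing_le (h : Clusters G z U T W hub) (hG : C5Free G) (hz : 0 < z)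
    (hz0 : z ≤ 1 / 10 ^ 10) (hcomponent : (T : Set ι).Pairwise fun s t =>
      ∀ a ∈ W s, (#(component G (W s) (W t) a) : ℝ) ≤ z ^ 400 * #U) (x : V) :
    (#{w ∈ U | Crossing G T W w x} : ℝ) ≤ z ^ 184 * #U := by
  set f : ι × ι × ι → Finset V := fun τ =>
    if τ.1 ≠ τ.2.1 ∧ τ.1 ≠ τ.2.2 ∧ x ∈ W τ.2.1 then crossing G (W τ.1) (W τ.2.1) (W τ.2.2) x
    else ∅ with hf
  have hsub : {w ∈ U | Crossing G T W w x} ⊆ (T ×ˢ T ×ˢ T).biUnion f := by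
    intro w hw
    obtain ⟨_, s, hs, t, ht, j, hj, hst, hsj, hxt, hwx⟩ := mem_filter.1 hw
    refine mem_biUnion.2 ⟨(s, t, j), by simp only [mem_product, hs, ht, hj, and_self], ?_⟩
    simp only [hf]
    rwa [if_pos ⟨hst, hsj, hxt⟩]
  have hcard : ∀ τ ∈ T ×ˢ T ×ˢ T, (#(f τ) : ℝ) ≤ 2 * (z ^ 200 * #U) := by
    rintro ⟨s, t, j⟩ hτ
    obtain ⟨hs, hτ⟩ := mem_product.1 hτ
    obtain ⟨ht, hj⟩ := mem_product.1 hτ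
    simp only [hf]
    split_ifs with hx
    · exact (h.hubs hs ht hx.1).card_crossing_le (h.hubs hs hj hx.2.1) hG hz
        (hz0.trans (by norm_num)) h.critical (h.subset s hs) (hcomponent hs ht hx.1)
        (hcomponent hs hj hx.2.1) hx.2.2
    · rw [card_empty, Nat.cast_zero]
      positivity
  have hcount : (#T * z ^ 5) ^ 3 ≤ 2 ^ 3 := pow_le_pow_left₀ (by positivity) h.card_index_le 3
  calc (#{w ∈ U | Crossing G T W w x} : ℝ) ≤ ∑ τ ∈ T ×ˢ T ×ˢ T, (#(f τ) : ℝ) :=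
        (cast_card_le_cast_card hsub).trans (cast_card_biUnion_le_sum _ _)
    _ ≤ #(T ×ˢ T ×ˢ T) * (2 * (z ^ 200 * #U)) := by
      simpa only [sum_const, nsmul_eq_mul] using sum_le_sum hcard
    _ = (#T * z ^ 5) ^ 3 * (2 * (z ^ 185 * #U)) := by
      rw [card_product, card_product]
      push_cast
      ring
    _ ≤ 2 ^ 3 * (2 * (z ^ 185 * #U)) := by gcongr
    _ ≤ z ^ 184 * #U := by
      have : 0 < z ^ 185 * (#U : ℝ) := mul_pos (by positivity) h.card_pos
      linarith [ten_pow_mul_pow_mul_le_pow_mul hz hz0 h.card_pos.le (show 184 < 185 by norm_num)]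

theorem one_le_two_mul_card_filter_mul (h : Clusters G z U T W hub) (hz : 0 < z)
    (hz0 : z ≤ 1 / 10 ^ 10) (hcover : (#(U \ T.biUnion W) : ℝ) ≤ z ^ 45 * #U) :
    1 ≤ 2 * (#{t ∈ T | z ^ 6 * #U ≤ (#(W t) : ℝ)} * z ^ 4) := by
  set A := {t ∈ T | z ^ 6 * #U ≤ (#(W t) : ℝ)}
  have hlarge : ∑ t ∈ A, (#(W t) : ℝ) ≤ #A * (z ^ 4 * #U) := by
    simpa only [sum_const, nsmul_eq_mul] using
      sum_le_sum fun t (ht : t ∈ A) => h.card_le t (mem_filter.1 ht).1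
  have hsmall : ∑ t ∈ T with ¬ z ^ 6 * #U ≤ (#(W t) : ℝ), (#(W t) : ℝ) ≤ 2 * (z * #U) := by
    calc ∑ t ∈ T with ¬ z ^ 6 * #U ≤ (#(W t) : ℝ), (#(W t) : ℝ)
        ≤ ∑ t ∈ T with ¬ z ^ 6 * #U ≤ (#(W t) : ℝ), z ^ 6 * (#U : ℝ) :=
          sum_le_sum fun t ht => (not_le.1 (mem_filter.1 ht).2).le
      _ ≤ #T * (z ^ 6 * #U) := by
          rw [sum_const, nsmul_eq_mul]
          gcongr
          exact filter_subset _ _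
      _ = #T * z ^ 5 * (z * #U) := by ring
      _ ≤ 2 * (z * #U) := by gcongr; exact h.card_index_le
  have hsum := sum_filter_add_sum_filter_not T (fun t => z ^ 6 * #U ≤ (#(W t) : ℝ))
    fun t => (#(W t) : ℝ)
  have hU : (#U : ℝ) ≤ #(T.biUnion W) + #(U \ T.biUnion W) := by
    linarith [cast_card_sub_le_cast_card_sdiff (T.biUnion W) U]
  have hgap : ∀ {j : ℕ}, 0 < j → 10 ^ 10 * (z ^ j * #U) ≤ (#U : ℝ) := fun {j} hj => by
    simpa using ten_pow_mul_pow_mul_le_pow_mul hz hz0 h.card_pos.le hj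
  by_contra! hlt
  have hAU := mul_lt_mul_of_pos_right hlt h.card_pos
  linarith [cast_card_biUnion_le_sum T W, pow_one z ▸ hgap one_pos,
    hgap (show 0 < 45 by norm_num), h.card_pos]

theorem pow_two_mul_card_le_card_filter_touches (h : Clusters G z U T W hub) (hz : 0 < z)
    (hz0 : z ≤ 1 / 10 ^ 10) (hcover : (#(U \ T.biUnion W) : ℝ) ≤ z ^ 45 * #U) {L : Finset V}
    (hL : (#L : ℝ) ≤ z ^ 9 * #U) {t : ι} (ht : t ∈ T) (htW : z ^ 6 * #U ≤ (#(W t) : ℝ)) :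
    z ^ 2 * #U ≤ (#{w ∈ U | Touches G T W L t w} : ℝ) := by
  have hgap : ∀ {i j : ℕ}, i < j → 10 ^ 10 * (z ^ j * #U) ≤ z ^ i * #U :=
    ten_pow_mul_pow_mul_le_pow_mul hz hz0 h.card_pos.le
  have hpos : ∀ i : ℕ, 0 < z ^ i * (#U : ℝ) := fun i => mul_pos (by positivity) h.card_pos
  have hexpand := h.critical.mul_card_le_card_union_setNeighborsIn hz.le
    (sdiff_subset.trans (h.subset t ht) : W t \ L ⊆ U) <| by
      linarith [cast_card_sub_le_cast_card_sdiff L (W t), hpos 9, hpos 1500, hpos 6,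
        hgap (show 6 < 9 by norm_num), hgap (show 6 < 1500 by norm_num)]
  have hsub : (W t \ L) ∪ setNeighborsIn G (W t \ L) U ⊆
      (W t ∪ (U \ T.biUnion W)) ∪ {w ∈ U | Touches G T W L t w} := by
    intro w hw
    rw [mem_union, mem_setNeighborsIn] at hw
    simp only [mem_union, Touches]
    grind [G.adj_comm]
  have hgap' : ∀ {j : ℕ}, 1 < j → 10 ^ 10 * (z ^ j * #U) ≤ z * #U := fun {j} hj => by
    simpa only [pow_one] using hgap hj
  linarith [(cast_card_le_cast_card hsub).trans (cast_card_union_le _ _),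
    cast_card_union_le (W t) (U \ T.biUnion W), h.card_le t ht, hpos 2, hpos 4, hpos 45,
    hgap' (show 1 < 2 by norm_num), hgap' (show 1 < 4 by norm_num),
    hgap' (show 1 < 45 by norm_num)]

theorem pow_three_mul_card_le_card_filter_le_card_touches (h : Clusters G z U T W hub) (hz : 0 < z)
    (hz0 : z ≤ 1 / 10 ^ 10) (hcover : (#(U \ T.biUnion W) : ℝ) ≤ z ^ 45 * #U) {L : Finset V}
    (hL : (#L : ℝ) ≤ z ^ 9 * #U) {k : ℕ} (hk : k * z ≤ 2) :
    z ^ 3 * #U ≤ (#{w ∈ U | k ≤ #{t ∈ T | Touches G T W L t w}} : ℝ) := by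
  set A := {t ∈ T | z ^ 6 * #U ≤ (#(W t) : ℝ)}
  have hA : 1 ≤ 2 * (#A * z ^ 4) := h.one_le_two_mul_card_filter_mul hz hz0 hcover
  have hApos : (0 : ℝ) < #A := by
    rcases (Nat.cast_nonneg (α := ℝ) #A).eq_or_lt with hzero | hpos
    · rw [← hzero] at hA
      norm_num at hA
    · exact hpos
  have hkU : k * (#U : ℝ) ≤ #A * (4 * (z ^ 3 * #U)) := by
    calc k * (#U : ℝ) = k * (#U : ℝ) * 1 := (mul_one _).symm
      _ ≤ k * (#U : ℝ) * (2 * (#A * z ^ 4)) := by gcongr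
      _ = k * z * (2 * (#A * z ^ 3) * #U) := by ring
      _ ≤ 2 * (2 * (#A * z ^ 3) * #U) := by gcongr
      _ = #A * (4 * (z ^ 3 * #U)) := by ring
  have hcount := card_mul_le_card_mul_card_filter_add (Touches G T W L) A U k fun t ht =>
    h.pow_two_mul_card_le_card_filter_touches hz hz0 hcover hL (mem_filter.1 ht).1
      (mem_filter.1 ht).2
  have hpopular : z ^ 2 * #U ≤
      (#{w ∈ U | k ≤ #{t ∈ A | Touches G T W L t w}} : ℝ) + 4 * (z ^ 3 * #U) :=
    le_of_mul_le_mul_left (by linarith) hApos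
  have hsub : {w ∈ U | k ≤ #{t ∈ A | Touches G T W L t w}} ⊆
      {w ∈ U | k ≤ #{t ∈ T | Touches G T W L t w}} :=
    monotone_filter_right U fun w _ hw => hw.trans
      (card_le_card (filter_subset_filter _ (filter_subset _ _)))
  have hpos : 0 < z ^ 3 * (#U : ℝ) := mul_pos (by positivity) h.card_pos
  linarith [cast_card_le_cast_card hsub,
    ten_pow_mul_pow_mul_le_pow_mul hz hz0 h.card_pos.le (show 2 < 3 by norm_num)]

theorem card_lowDegreeVertices_le (h : Clusters G z U T W hub) (hz : 0 < z)
    (hz0 : z ≤ 1 / 10 ^ 10) : (#(lowDegreeVertices G z U T W) : ℝ) ≤ z ^ 9 * #U :=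
  h.card_biUnion_offDiag_le hz hz0 9 fun _ hp => h.card_low_degree_le hz (hz0.trans (by norm_num))
    ((setNeighborsIn_subset _ _).trans (h.subset _ (mem_offDiag.1 hp).2.1))

theorem exists_le_card_touches (h : Clusters G z U T W hub) (hG : C5Free G) (hz : 0 < z)
    (hz0 : z ≤ 1 / 10 ^ 10) (hcover : (#(U \ T.biUnion W) : ℝ) ≤ z ^ 45 * #U)
    (hcomponent : (T : Set ι).Pairwise fun s t =>
      ∀ a ∈ W s, (#(component G (W s) (W t) a) : ℝ) ≤ z ^ 400 * #U) {k : ℕ} (hk : k * z ≤ 2) :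
    ∃ w, (#{x ∈ U | Crossing G T W w x} : ℝ) ≤ z ^ 172 * #U ∧
      k ≤ #{t ∈ T | Touches G T W (lowDegreeVertices G z U T W) t w} := by
  have hpos : ∀ i : ℕ, 0 < z ^ i * (#U : ℝ) := fun i => mul_pos (by positivity) h.card_pos
  have hpopular := h.pow_three_mul_card_le_card_filter_le_card_touches hz hz0 hcover
    (h.card_lowDegreeVertices_le hz hz0) hk
  have hbad : (#{w ∈ U | z ^ 172 * #U < (#{x ∈ U | Crossing G T W w x} : ℝ)} : ℝ) ≤
      z ^ 12 * #U :=
    le_of_mul_le_mul_right ((card_filter_lt_mul_le (Crossing G T W) U U fun x _ =>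
      h.card_filter_crossing_le hG hz hz0 hcomponent x).trans (by ring_nf; rfl)) (hpos 172)
  have hlt : z ^ 12 * (#U : ℝ) < z ^ 3 * #U := by
    linarith [hpos 12,
      ten_pow_mul_pow_mul_le_pow_mul hz hz0 h.card_pos.le (show 3 < 12 by norm_num)]
  obtain ⟨w, hw, hwbad⟩ := exists_mem_notMem_of_card_lt_card
    (by exact_mod_cast (hbad.trans_lt hlt).trans_le hpopular)
  obtain ⟨hwU, hwk⟩ := mem_filter.1 hw
  exact ⟨w, not_lt.1 fun hlt => hwbad (mem_filter.2 ⟨hwU, hlt⟩), hwk⟩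

theorem exists_star (h : Clusters G z U T W hub) {w : V} {J : Finset ι} (hJ : J.Nonempty)
    (hw : J ⊆ {t ∈ T | Touches G T W (lowDegreeVertices G z U T W) t w}) :
    ∃ s q, Star G T W {x ∈ U | Crossing G T W w x} s w J q ∧ ∀ t ∈ J,
      z ^ 170 * #U ≤ (#(neighborsIn G (q t) (setNeighborsIn G (W s) (W t))) : ℝ) := by
  have htouch : ∀ t ∈ J, t ∈ T ∧ w ∈ T.biUnion W ∧ w ∉ W t ∧
      ∃ q ∈ W t \ lowDegreeVertices G z U T W, G.Adj w q := fun t ht => mem_filter.1 (hw ht)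
  obtain ⟨t₀, ht₀⟩ := hJ
  obtain ⟨s, hs, hws⟩ := mem_biUnion.1 (htouch t₀ ht₀).2.1
  have hst : ∀ t ∈ J, s ≠ t := fun t ht hst => (htouch t ht).2.2.1 (hst ▸ hws)
  have : Nonempty V := ⟨w⟩
  choose! q hq hwq using fun t ht => (htouch t ht).2.2.2
  have hqW : ∀ t ∈ J, q t ∈ W t := fun t ht => (mem_sdiff.1 (hq t ht)).1
  refine ⟨s, q, ⟨hs, hws, fun t ht => (htouch t ht).1, fun hsJ => hst s hsJ rfl, hqW, hwq, ?_⟩, ?_⟩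
  · intro t ht j hj x hx hxB p hp hpx hpq
    refine hxB (mem_filter.2 ⟨h.subset t (htouch t ht).1 hx, s, hs, t, (htouch t ht).1, j,
      (htouch j hj).1, hst t ht, hst j hj, hx, mem_crossing.2 ⟨hws, ⟨q t, hqW t ht, hwq t ht⟩, p,
      hp, hpx, q j, hqW j hj, hwq j hj, hpq⟩⟩)
  · intro t ht
    by_contra! hlow
    exact (mem_sdiff.1 (hq t ht)).2 (mem_biUnion.2 ⟨(s, t),
      mem_offDiag.2 ⟨hs, (htouch t ht).1, hst t ht⟩, mem_filter.2
        ⟨mem_setNeighborsIn.2 ⟨hqW t ht, w, hws, hwq t ht⟩, hlow⟩⟩)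

theorem false_of_small_components (h : Clusters G z U T W hub) (hG : C5Free G) (hz : 0 < z)
    (hz0 : z ≤ 1 / 10 ^ 10) (hcover : (#(U \ T.biUnion W) : ℝ) ≤ z ^ 45 * #U)
    (hcomponent : (T : Set ι).Pairwise fun s t =>
      ∀ a ∈ W s, (#(component G (W s) (W t) a) : ℝ) ≤ z ^ 400 * #U) : False := by
  obtain ⟨k, hk1, hk2⟩ := exists_one_lt_natCast_mul_le_two hz (hz0.trans (by norm_num))
  obtain ⟨w, hw, hwk⟩ := h.exists_le_card_touches hG hz hz0 hcover hcomponent hk2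
  obtain ⟨J, hJ, rfl⟩ := exists_subset_card_eq hwk
  have hJne : J.Nonempty := by
    rw [nonempty_iff_ne_empty]
    rintro rfl
    norm_num at hk1
  obtain ⟨s, q, hstar, hdeg⟩ := h.exists_star hJne hJ
  exact h.false_of_star hG hz hz0 hstar hk1 hk2 hw hdeg

theorem exists_card_component_sdiff_le (h : Clusters G z U T W hub) (hG : C5Free G) (hz : 0 < z)
    (hz0 : z ≤ 1 / 10 ^ 10) {s t : ι} (hs : s ∈ T) (ht : t ∈ T) (hst : s ≠ t) :
    ∃ Z : Finset V, (#Z : ℝ) ≤ z ^ 56 * #U ∧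
      ∀ a ∈ W s \ Z, (#(component G (W s \ Z) (W t \ Z) a) : ℝ) ≤ z ^ 400 * #U := by
  have hgap : ∀ {i j : ℕ}, i < j → 10 ^ 10 * (z ^ j * #U) ≤ z ^ i * #U :=
    ten_pow_mul_pow_mul_le_pow_mul hz hz0 h.card_pos.le
  have hpos : ∀ i : ℕ, 0 < z ^ i * (#U : ℝ) := fun i => mul_pos (by positivity) h.card_pos
  have hz150 : 2 * z ^ 151 ≤ z ^ 150 := by
    have : 0 < z ^ 151 := by positivity
    linarith [ten_pow_mul_pow_mul_le_pow_mul hz hz0 zero_le_one (show 150 < 151 by norm_num)]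
  obtain ⟨Z, hZ, hcomponent⟩ := (h.hubs hs ht hst).exists_forall_card_component_le hG (hpos 1000)
    (show 0 < z ^ 151 by positivity) (hpos 400) (h.card_neighborsIn_le hs ht hst)
    (h.card_neighborsIn_le ht hs hst.symm) fun C hC hCcard => by
      have hnot := h.not_restricted C (hC.trans (h.subset s hs)) <| by
        linarith [hgap (show 400 < 401 by norm_num), hpos 401]
      exact ⟨fun hr => hnot.1 (hr.mono hz150), fun hr => hnot.2 (hr.mono hz150)⟩
  refine ⟨Z, ?_, hcomponent⟩
  have hZ57 : (#Z : ℝ) ≤ 4 * (z ^ 57 * #U) := by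
    refine le_of_mul_le_mul_right ?_ (show 0 < z ^ 151 * (z ^ 400 * (#U : ℝ)) ^ 2 from
      mul_pos (by positivity) (pow_pos (hpos 400) 2))
    calc #Z * (z ^ 151 * (z ^ 400 * #U) ^ 2) ≤ 4 * (z ^ 1000 * #U) * (#(W s) : ℝ) ^ 2 := hZ
      _ ≤ 4 * (z ^ 1000 * #U) * (z ^ 4 * #U) ^ 2 :=
        mul_le_mul_of_nonneg_left (pow_le_pow_left₀ (Nat.cast_nonneg _) (h.card_le s hs) 2)
          (mul_pos four_pos (hpos 1000)).le
      _ = 4 * (z ^ 57 * #U) * (z ^ 151 * (z ^ 400 * #U) ^ 2) := by ring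
  linarith [hgap (show 56 < 57 by norm_num), hpos 57]

theorem false_of_subset_biUnion (h : Clusters G z U T W hub) (hG : C5Free G) (hz : 0 < z)
    (hz0 : z ≤ 1 / 10 ^ 10) (hcover : U ⊆ T.biUnion W) : False := by
  choose! Z hZcard hZ using fun p (hp : p ∈ T.offDiag) =>
    have hp := mem_offDiag.1 hp
    h.exists_card_component_sdiff_le hG hz hz0 hp.1 hp.2.1 hp.2.2
  set A := T.offDiag.biUnion Z
  refine (h.mono (W' := fun t => W t \ A) fun t _ => sdiff_subset).false_of_small_components
    hG hz hz0 ?_ fun s hs t ht hst a ha => ?_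
  · refine (cast_card_le_cast_card fun x hx => ?_).trans
      (h.card_biUnion_offDiag_le hz hz0 45 hZcard)
    obtain ⟨hxU, hx⟩ := mem_sdiff.1 hx
    obtain ⟨t, ht, hxt⟩ := mem_biUnion.1 (hcover hxU)
    by_contra hxA
    exact hx (mem_biUnion.2 ⟨t, ht, mem_sdiff.2 ⟨hxt, hxA⟩⟩)
  · have hp : (s, t) ∈ T.offDiag := mem_offDiag.2 ⟨hs, ht, hst⟩
    have hsub : ∀ X : Finset V, X \ A ⊆ X \ Z (s, t) := fun X =>
      sdiff_subset_sdiff Subset.rfl (subset_biUnion_of_mem Z hp)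
    exact (cast_card_le_cast_card (component_mono (hsub _) (hsub _))).trans
      (hZ (s, t) hp a (hsub _ ha))

end Clusters

/-! ### Stuck sets contain clusters -/

theorem card_filter_lt_card_neighborsIn_mul_le {A B : Finset V} {c d : ℝ}
    (h : ∀ b ∈ B, (#(neighborsIn G b A) : ℝ) ≤ c) :
    #{a ∈ A | d < (#(neighborsIn G a B) : ℝ)} * d ≤ #B * c :=
  card_filter_lt_mul_le G.Adj A B fun b hb => by
    simpa only [neighborsIn, G.adj_comm b] using h b hb

theorem exists_seq_of_forall_card_lt {β : Type*} [Nonempty β] {P : β → Prop} {r : β → β → Prop}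
    (M : ℕ) (h : ∀ s : Finset β, #s < M → (∀ x ∈ s, P x) → ∃ y, P y ∧ ∀ x ∈ s, r x y) :
    ∃ f : ℕ → β, (∀ n < M, P (f n)) ∧ ∀ n < M, ∀ m < n, r (f m) (f n) := by
  induction M with
  | zero => exact ⟨fun _ => Classical.arbitrary β, by simp⟩
  | succ M ih =>
    obtain ⟨f, hP, hr⟩ := ih fun s hs => h s (by omega)
    obtain ⟨y, hy, hry⟩ := h ((range M).image f) (by
      have := card_image_le (s := range M) (f := f)
      rw [card_range] at this
      omega) (by simpa using hP)
    simp only [mem_image, mem_range, forall_exists_index, and_imp, forall_apply_eq_imp_iff₂] at hry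
    refine ⟨update f M y, fun n hn => ?_, fun n hn m hm => ?_⟩
    · rcases Nat.lt_succ_iff_lt_or_eq.1 hn with hn | rfl
      · simpa only [update_of_ne hn.ne] using hP n hn
      · simpa only [update_self] using hy
    · rcases Nat.lt_succ_iff_lt_or_eq.1 hn with hn | rfl
      · simpa only [update_of_ne hn.ne, update_of_ne (hm.trans hn).ne] using hr n hn m hm
      · simpa only [update_self, update_of_ne hm.ne] using hry m hm

/-- A small set `H v` for each `v ∈ S`, containing the neighbourhood of `v` in `S` and such that the
neighbours of `v` have almost all their neighbours in `H v`. -/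
structure SmallCovers (G : SimpleGraph V) (z : ℝ) (S : Finset V) (H : V → Finset V) : Prop where
  subset : ∀ v ∈ S, H v ⊆ S
  neighborsIn_subset : ∀ v ∈ S, neighborsIn G v S ⊆ H v
  card_le : ∀ v ∈ S, (#(H v) : ℝ) ≤ z ^ 88 * #S
  card_neighborsIn_sdiff_le : ∀ v ∈ S, ∀ a ∈ neighborsIn G v S,
    (#(neighborsIn G a (S \ H v)) : ℝ) ≤ z ^ 1310 * #S

/-- Vertices `v 0, …, v (M - 1)` of large degree in `S`, each having few neighbours in the covers of
the previous ones. -/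
structure HubSequence (G : SimpleGraph V) (z : ℝ) (S : Finset V) (H : V → Finset V) (M : ℕ)
    (v : ℕ → V) : Prop where
  mem : ∀ t < M, v t ∈ S
  le_card_neighborsIn : ∀ t < M, z ^ 151 * #S ≤ (#(neighborsIn G (v t) S) : ℝ)
  card_neighborsIn_cover_le : ∀ t < M, ∀ s < t,
    (#(neighborsIn G (v t) (H (v s))) : ℝ) ≤ z ^ 157 * #S

/-- The neighbours in `S` of the hub `v t` which are neither covered by an earlier hub nor adjacent
to a later one. -/
noncomputable def hubCluster (G : SimpleGraph V) (S : Finset V) (H : V → Finset V) (M : ℕ)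
    (v : ℕ → V) (t : ℕ) : Finset V :=
  {x ∈ neighborsIn G (v t) S | (∀ s < t, x ∉ H (v s)) ∧ ∀ s < M, t < s → ¬ G.Adj (v s) x}

/-- Disjoint clusters in `S`, all of the same size, with hubs and pairwise sparse to each other. -/
structure EqualClusters (G : SimpleGraph V) (z : ℝ) (S : Finset V) (T : Finset ι)
    (W : ι → Finset V) (hub : ι → V) : Prop where
  subset : ∀ t ∈ T, W t ⊆ S
  card_eq : ∀ t ∈ T, #(W t) = ⌈z ^ 153 * #S⌉₊
  hub_adj : ∀ t ∈ T, ∀ x ∈ W t, G.Adj (hub t) x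
  hub_not_adj : (T : Set ι).Pairwise fun s t => ∀ x ∈ W t, ¬ G.Adj (hub s) x
  card_neighborsIn_le : (T : Set ι).Pairwise fun s t =>
    ∀ x ∈ W s, (#(neighborsIn G x (W t)) : ℝ) ≤ z ^ 1149 * #S

section

variable {z : ℝ} {S : Finset V} {H : V → Finset V} {M : ℕ} {v : ℕ → V}

theorem Stuck.exists_smallCovers (h : Stuck G z S) (hG : C5Free G) (hz : 0 < z)
    (hz0 : z ≤ 1 / 10 ^ 10) : ∃ H, SmallCovers G z S H := by
  choose! H hsub hnbr hcard hdeg using fun v (hv : v ∈ S) => h.exists_small_cover hG hz hz0 hv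
  exact ⟨H, hsub, hnbr, hcard, hdeg⟩

theorem Stuck.exists_forall_card_neighborsIn_le (h : Stuck G z S) (hz : 0 < z)
    (hz0 : z ≤ 1 / 10 ^ 10) {C : Finset ι} (hC : #C * z ^ 5 ≤ 2) {P : ι → Finset V}
    (hP : ∀ c ∈ C, P c ⊆ S ∧ (#(P c) : ℝ) ≤ z ^ 88 * #S) :
    ∃ x ∈ S, z ^ 151 * #S ≤ (#(neighborsIn G x S) : ℝ) ∧
      ∀ c ∈ C, (#(neighborsIn G x (P c)) : ℝ) ≤ z ^ 157 * #S := by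
  have hS : (0 : ℝ) < #S := by exact_mod_cast h.nonempty.card_pos
  have hgap : ∀ {i j : ℕ}, i < j → 10 ^ 10 * (z ^ j * #S) ≤ z ^ i * #S :=
    ten_pow_mul_pow_mul_le_pow_mul hz hz0 hS.le
  have hgap0 : ∀ {j : ℕ}, 0 < j → 10 ^ 10 * (z ^ j * #S) ≤ (#S : ℝ) := fun {j} hj => by
    simpa using hgap hj
  have hpos : ∀ i : ℕ, 0 < z ^ i * (#S : ℝ) := fun i => by positivity
  set E := C.biUnion fun c => {x ∈ S | z ^ 157 * #S < (#(neighborsIn G x (P c)) : ℝ)}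
  have hEc : ∀ c ∈ C, (#{x ∈ S | z ^ 157 * #S < (#(neighborsIn G x (P c)) : ℝ)} : ℝ) ≤
      z ^ 31 * #S := fun c hc => by
    refine le_of_mul_le_mul_right ?_ (hpos 157)
    calc _ ≤ #(P c) * (z ^ 100 * #S) := card_filter_lt_card_neighborsIn_mul_le
          fun b hb => h.restricted b ((hP c hc).1 hb)
      _ ≤ z ^ 88 * #S * (z ^ 100 * #S) := by gcongr; exact (hP c hc).2
      _ = z ^ 31 * #S * (z ^ 157 * #S) := by ring
  have hE : (#E : ℝ) ≤ 2 * (z ^ 26 * #S) := by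
    calc (#E : ℝ) ≤ #C * (z ^ 31 * #S) := (cast_card_biUnion_le_sum _ _).trans
          (by simpa only [sum_const, nsmul_eq_mul] using sum_le_sum hEc)
      _ = #C * z ^ 5 * (z ^ 26 * #S) := by ring
      _ ≤ 2 * (z ^ 26 * #S) := by gcongr
  have hhalf : (#S : ℝ) / 2 ≤ #(S \ E) := by
    linarith [cast_card_sub_le_cast_card_sdiff E S, hgap0 (show 0 < 26 by norm_num)]
  have hnot := (h.not_restricted (S \ E) sdiff_subset (by
    linarith [hgap0 (show 0 < 600 by norm_num), hpos 600])).1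
  simp only [Restricted, not_forall, not_le] at hnot
  obtain ⟨x, hx, hdeg⟩ := hnot
  obtain ⟨hxS, hxE⟩ := mem_sdiff.1 hx
  refine ⟨x, hxS, ?_, fun c hc => not_lt.1 fun hlt =>
    hxE (mem_biUnion.2 ⟨c, hc, mem_filter.2 ⟨hxS, hlt⟩⟩)⟩
  have hz150 : z ^ 150 * ((#S : ℝ) / 2) ≤ z ^ 150 * #(S \ E) := by gcongr
  linarith [cast_card_le_cast_card (neighborsIn_mono (G := G) x (sdiff_subset : S \ E ⊆ S)),
    hgap (show 150 < 151 by norm_num), hpos 151]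

theorem SmallCovers.exists_hubSequence (hH : SmallCovers G z S H) (h : Stuck G z S) (hz : 0 < z)
    (hz0 : z ≤ 1 / 10 ^ 10) (hM : M * z ^ 5 ≤ 2) : ∃ v, HubSequence G z S H M v := by
  have : Nonempty V := ⟨h.nonempty.choose⟩
  obtain ⟨v, hv, hcover⟩ := exists_seq_of_forall_card_lt
    (P := fun x => x ∈ S ∧ z ^ 151 * #S ≤ (#(neighborsIn G x S) : ℝ))
    (r := fun x y => (#(neighborsIn G y (H x)) : ℝ) ≤ z ^ 157 * #S) M fun C hC hCS => by
      have hCM : (#C : ℝ) ≤ M := by exact_mod_cast hC.le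
      obtain ⟨x, hxS, hx, hxC⟩ := h.exists_forall_card_neighborsIn_le hz hz0
        ((mul_le_mul_of_nonneg_right hCM (by positivity)).trans hM)
        fun c hc => ⟨hH.subset c (hCS c hc).1, hH.card_le c (hCS c hc).1⟩
      exact ⟨x, ⟨hxS, hx⟩, hxC⟩
  exact ⟨v, fun t ht => (hv t ht).1, fun t ht => (hv t ht).2, hcover⟩

theorem mem_hubCluster {t : ℕ} {x : V} : x ∈ hubCluster G S H M v t ↔
    (x ∈ S ∧ G.Adj (v t) x) ∧ (∀ s < t, x ∉ H (v s)) ∧ ∀ s < M, t < s → ¬ G.Adj (v s) x := by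
  rw [hubCluster, mem_filter, mem_neighborsIn]

namespace HubSequence

theorem card_hubCluster_ge (hv : HubSequence G z S H M v) (hH : SmallCovers G z S H)
    (hz : 0 < z) (hz0 : z ≤ 1 / 10 ^ 10) (hM : M * z ^ 5 ≤ 2) {t : ℕ} (ht : t < M) :
    z ^ 152 * #S ≤ (#(hubCluster G S H M v t) : ℝ) := by
  have hS : (0 : ℝ) < #S := by exact_mod_cast card_pos.2 ⟨v t, hv.mem t ht⟩
  set D := (range M).biUnion fun s => if s < t then neighborsIn G (v t) (H (v s)) else
    if t < s then neighborsIn G (v s) (H (v t)) else ∅ with hD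
  have hcover : neighborsIn G (v t) S ⊆ hubCluster G S H M v t ∪ D := by
    intro x hx
    have hxH := hH.neighborsIn_subset _ (hv.mem t ht) hx
    rw [mem_neighborsIn] at hx
    by_cases hcluster : x ∈ hubCluster G S H M v t
    · exact mem_union_left _ hcluster
    refine mem_union_right _ (mem_biUnion.2 ?_)
    rw [mem_hubCluster] at hcluster
    by_cases hs : ∃ s < t, x ∈ H (v s)
    · obtain ⟨s, hst, hxs⟩ := hs
      exact ⟨s, mem_range.2 (hst.trans ht), by rw [if_pos hst]; exact mem_neighborsIn.2 ⟨hxs, hx.2⟩⟩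
    · obtain ⟨s, hsM, hts, hsx⟩ : ∃ s < M, t < s ∧ G.Adj (v s) x := by
        by_contra! hnot
        exact hcluster ⟨hx, fun s hst hxs => hs ⟨s, hst, hxs⟩, hnot⟩
      exact ⟨s, mem_range.2 hsM, by
        rw [if_neg hts.not_gt, if_pos hts]; exact mem_neighborsIn.2 ⟨hxH, hsx⟩⟩
  have hDcard : (#D : ℝ) ≤ 2 * (z ^ 152 * #S) := by
    calc (#D : ℝ) ≤ ∑ _s ∈ range M, z ^ 157 * (#S : ℝ) := by
          refine (cast_card_biUnion_le_sum _ _).trans (sum_le_sum fun s hs => ?_)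
          split_ifs with hst hts
          · exact hv.card_neighborsIn_cover_le t ht s hst
          · exact hv.card_neighborsIn_cover_le s (mem_range.1 hs) t hts
          · rw [card_empty, Nat.cast_zero]
            positivity
      _ = M * z ^ 5 * (z ^ 152 * #S) := by
          rw [sum_const, nsmul_eq_mul, card_range]
          ring
      _ ≤ 2 * (z ^ 152 * #S) := by gcongr
  have : 0 < z ^ 152 * (#S : ℝ) := by positivity
  linarith [(cast_card_le_cast_card hcover).trans (cast_card_union_le _ _),
    hv.le_card_neighborsIn t ht,
    ten_pow_mul_pow_mul_le_pow_mul hz hz0 hS.le (show 151 < 152 by norm_num)]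

theorem not_adj_of_mem_hubCluster (hv : HubSequence G z S H M v) (hH : SmallCovers G z S H)
    {s t : ℕ} (hs : s < M) (hst : s ≠ t) {x : V} (hx : x ∈ hubCluster G S H M v t) :
    ¬ G.Adj (v s) x := by
  obtain ⟨⟨hxS, -⟩, hearlier, hlater⟩ := mem_hubCluster.1 hx
  rcases lt_or_gt_of_ne hst with hlt | hgt
  · exact fun hadj => hearlier s hlt
      (hH.neighborsIn_subset _ (hv.mem s hs) (mem_neighborsIn.2 ⟨hxS, hadj⟩))
  · exact hlater s hs hgt

theorem card_neighborsIn_hubCluster_le (hv : HubSequence G z S H M v) (hH : SmallCovers G z S H)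
    {s t : ℕ} (ht : t < M) (hst : s < t) {a : V} (ha : a ∈ hubCluster G S H M v s) :
    (#(neighborsIn G a (hubCluster G S H M v t)) : ℝ) ≤ z ^ 1310 * #S := by
  refine (cast_card_le_cast_card (neighborsIn_mono a fun x hx => ?_)).trans
    (hH.card_neighborsIn_sdiff_le _ (hv.mem s (hst.trans ht)) a
      (mem_neighborsIn.2 (mem_hubCluster.1 ha).1))
  obtain ⟨⟨hxS, -⟩, hearlier, -⟩ := mem_hubCluster.1 hx
  exact mem_sdiff.2 ⟨hxS, hearlier s hst⟩

end HubSequence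

theorem exists_subset_card_eq_and_card_neighborsIn_le (hz : 0 < z) (hz0 : z ≤ 1 / 10 ^ 10)
    (hM : M * z ^ 5 ≤ 2) {W : ℕ → Finset V} (hWS : ∀ t < M, W t ⊆ S)
    (hW : ∀ t < M, z ^ 152 * #S ≤ (#(W t) : ℝ))
    (hdeg : ∀ t < M, ∀ s < t, ∀ a ∈ W s, (#(neighborsIn G a (W t)) : ℝ) ≤ z ^ 1310 * #S) :
    ∃ W' : ℕ → Finset V, (∀ t < M, W' t ⊆ W t ∧ #(W' t) = ⌈z ^ 153 * #S⌉₊) ∧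
      ∀ s < M, ∀ t < M, s ≠ t → ∀ a ∈ W' s,
        (#(neighborsIn G a (W' t)) : ℝ) ≤ z ^ 1149 * #S := by
  rcases S.eq_empty_or_nonempty with rfl | hSne
  · refine ⟨fun _ => ∅, by simp, by simp⟩
  have hS : (0 : ℝ) < #S := by exact_mod_cast hSne.card_pos
  have hgap : ∀ {i j : ℕ}, i < j → 10 ^ 10 * (z ^ j * #S) ≤ z ^ i * #S :=
    ten_pow_mul_pow_mul_le_pow_mul hz hz0 hS.le
  have hpos : ∀ i : ℕ, 0 < z ^ i * (#S : ℝ) := fun i => by positivity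
  set D : ℕ → Finset V := fun t => (range t).biUnion fun s =>
    {b ∈ W t | z ^ 1149 * #S < (#(neighborsIn G b (W s)) : ℝ)}
  have hD : ∀ t < M, (#(D t) : ℝ) ≤ 2 * (z ^ 156 * #S) := by
    intro t ht
    have hDs : ∀ s ∈ range t, (#{b ∈ W t | z ^ 1149 * #S < (#(neighborsIn G b (W s)) : ℝ)} : ℝ) ≤
        z ^ 161 * #S := fun s hs => by
      have hst := mem_range.1 hs
      refine le_of_mul_le_mul_right ?_ (hpos 1149)
      calc _ ≤ #(W s) * (z ^ 1310 * #S) := card_filter_lt_card_neighborsIn_mul_le (hdeg t ht s hst)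
        _ ≤ #S * (z ^ 1310 * #S) := mul_le_mul_of_nonneg_right
          (cast_card_le_cast_card (hWS s (hst.trans ht))) (hpos 1310).le
        _ = z ^ 161 * #S * (z ^ 1149 * #S) := by ring
    calc (#(D t) : ℝ) ≤ t * (z ^ 161 * #S) := (cast_card_biUnion_le_sum _ _).trans
          (by simpa only [sum_const, nsmul_eq_mul, card_range] using sum_le_sum hDs)
      _ ≤ M * (z ^ 161 * #S) := by gcongr
      _ = M * z ^ 5 * (z ^ 156 * #S) := by ring
      _ ≤ 2 * (z ^ 156 * #S) := by gcongr
  choose! W' hW' hcard using fun t (ht : t < M) => exists_subset_card_eq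
    (show ⌈z ^ 153 * (#S : ℝ)⌉₊ ≤ #(W t \ D t) from Nat.ceil_le.2 <| by
      linarith [cast_card_sub_le_cast_card_sdiff (D t) (W t), hW t ht, hD t ht, hpos 153, hpos 156,
        hgap (show 152 < 153 by norm_num), hgap (show 152 < 156 by norm_num)])
  have hsub : ∀ t < M, W' t ⊆ W t := fun t ht => (hW' t ht).trans sdiff_subset
  refine ⟨W', fun t ht => ⟨hsub t ht, hcard t ht⟩, fun s hs t ht hst a ha =>
    (cast_card_le_cast_card (neighborsIn_mono a (hsub t ht))).trans ?_⟩
  rcases lt_or_gt_of_ne hst with hlt | hgt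
  · linarith [hdeg t ht s hlt a (hsub s hs ha), hgap (show 1149 < 1310 by norm_num), hpos 1310]
  · obtain ⟨haW, haD⟩ := mem_sdiff.1 (hW' s hs ha)
    exact not_lt.1 fun hlt => haD (mem_biUnion.2 ⟨t, mem_range.2 hgt, mem_filter.2 ⟨haW, hlt⟩⟩)

theorem Stuck.exists_equalClusters (h : Stuck G z S) (hG : C5Free G) (hz : 0 < z)
    (hz0 : z ≤ 1 / 10 ^ 10) (hM : M * z ^ 5 ≤ 2) : ∃ W v, EqualClusters G z S (range M) W v := by
  obtain ⟨H, hH⟩ := h.exists_smallCovers hG hz hz0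
  obtain ⟨v, hv⟩ := hH.exists_hubSequence h hz hz0 hM
  obtain ⟨W, hW, hcross⟩ := exists_subset_card_eq_and_card_neighborsIn_le (G := G) hz hz0 hM
    (fun _ _ _ hx => (mem_hubCluster.1 hx).1.1) (fun t => hv.card_hubCluster_ge hH hz hz0 hM)
    fun t ht s hst a => hv.card_neighborsIn_hubCluster_le hH ht hst
  simp only [← mem_range] at hW hcross
  exact ⟨W, v, fun t ht x hx => (mem_hubCluster.1 ((hW t ht).1 hx)).1.1, fun t ht => (hW t ht).2,
    fun t ht x hx => (mem_hubCluster.1 ((hW t ht).1 hx)).1.2,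
    fun s hs t ht hst x hx => hv.not_adj_of_mem_hubCluster hH (mem_range.1 hs) hst ((hW t ht).1 hx),
    hcross⟩

end

namespace EqualClusters

variable {z : ℝ} {S : Finset V} {T : Finset ι} {W : ι → Finset V} {hub : ι → V}

theorem pairwiseDisjoint (h : EqualClusters G z S T W hub) : (T : Set ι).PairwiseDisjoint W :=
  fun s hs _ ht hst => disjoint_left.2 fun x hxs hxt =>
    h.hub_not_adj hs ht hst x hxt (h.hub_adj s hs x hxs)

theorem card_biUnion (h : EqualClusters G z S T W hub) :
    #(T.biUnion W) = #T * ⌈z ^ 153 * #S⌉₊ := by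
  rw [Finset.card_biUnion h.pairwiseDisjoint, sum_congr rfl h.card_eq, sum_const, smul_eq_mul]

theorem clusters_inter (h : EqualClusters G z S T W hub) (hS : Stuck G z S) (hz : 0 < z)
    (hz0 : z ≤ 1 / 10 ^ 10) (hT : #T * z ^ 5 ≤ 2) {U : Finset V} (hUW : U ⊆ T.biUnion W)
    (hU : Critical G (1 / 1500) U) (hUcard : (⌈z ^ 153 * #S⌉₊ : ℝ) ≤ z ^ 4 * #U) :
    Clusters G z U T (fun t => W t ∩ U) hub := by
  have hSpos : (0 : ℝ) < #S := by exact_mod_cast hS.nonempty.card_pos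
  have hSU : z ^ 149 * (#S : ℝ) ≤ #U := by
    refine le_of_mul_le_mul_left ?_ (pow_pos hz 4)
    calc z ^ 4 * (z ^ 149 * (#S : ℝ)) = z ^ 153 * #S := by ring
      _ ≤ ((⌈z ^ 153 * (#S : ℝ)⌉₊ : ℕ) : ℝ) := Nat.le_ceil _
      _ ≤ z ^ 4 * #U := hUcard
  have hUpos : (0 : ℝ) < #U := lt_of_lt_of_le (by positivity) hSU
  refine ⟨card_pos.1 (by exact_mod_cast hUpos), fun _ _ => inter_subset_right,
    fun s hs t ht hst => disjoint_of_subset_left inter_subset_left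
      (disjoint_of_subset_right inter_subset_left (h.pairwiseDisjoint hs ht hst)),
    hT, fun t ht => ?_, fun t ht x hx => h.hub_adj t ht x (mem_inter.1 hx).1,
    fun s hs t ht hst x hx => h.hub_not_adj hs ht hst x (mem_inter.1 hx).1,
    fun s hs t ht hst x hx => ?_, fun X hX hXcard => ?_, hU⟩
  · exact ((cast_card_le_cast_card inter_subset_left).trans_eq
      (by rw [h.card_eq t ht])).trans hUcard
  · calc (#(neighborsIn G x (W t ∩ U)) : ℝ) ≤ #(neighborsIn G x (W t)) :=
          cast_card_le_cast_card (neighborsIn_mono x inter_subset_left)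
      _ ≤ z ^ 1149 * #S := h.card_neighborsIn_le hs ht hst x (mem_inter.1 hx).1
      _ = z ^ 1000 * (z ^ 149 * #S) := by ring
      _ ≤ z ^ 1000 * #U := mul_le_mul_of_nonneg_left hSU (by positivity)
  · refine hS.not_restricted X (hX.trans (hUW.trans (biUnion_subset.2 h.subset))) ?_
    have hSU' : z ^ 401 * (z ^ 149 * (#S : ℝ)) ≤ z ^ 401 * #U :=
      mul_le_mul_of_nonneg_left hSU (by positivity)
    have : 0 < z ^ 600 * (#S : ℝ) := by positivity
    linarith [ten_pow_mul_pow_mul_le_pow_mul hz hz0 hSpos.le (show 550 < 600 by norm_num)]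

end EqualClusters

/-- A stuck set contains a critical set covered by clusters. -/
theorem Stuck.false_of_c5Free {z : ℝ} {S : Finset V} (h : Stuck G z S) (hG : C5Free G)
    (hz : 0 < z) (hz0 : z ≤ 1 / 10 ^ 10) : False := by
  have hS : (0 : ℝ) < #S := by exact_mod_cast h.nonempty.card_pos
  have hz1 : z ≤ 1 := hz0.trans (by norm_num)
  obtain ⟨M, hM, hM2⟩ := exists_one_lt_natCast_mul_le_two (pow_pos hz 5)
    (pow_le_one₀ hz.le hz1 (n := 5))
  obtain ⟨W, v, hW⟩ := h.exists_equalClusters hG hz hz0 hM2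
  set c := ⌈z ^ 153 * (#S : ℝ)⌉₊
  set U₀ := (range M).biUnion W
  have hU₀ : (c : ℝ) ≤ z ^ 5 * #U₀ := by
    calc (c : ℝ) = 1 * c := (one_mul _).symm
      _ ≤ M * z ^ 5 * c := by gcongr
      _ = z ^ 5 * #U₀ := by
        rw [hW.card_biUnion, card_range]
        push_cast
        ring
  obtain ⟨U, hUU₀, hUcard, hU⟩ := h.exists_critical U₀ (biUnion_subset.2 hW.subset) <| by
    have hle : z ^ 5 * (#U₀ : ℝ) ≤ 1 * #U₀ := by gcongr; exact pow_le_one₀ hz.le hz1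
    have : 0 < z ^ 600 * (#S : ℝ) := by positivity
    linarith [ten_pow_mul_pow_mul_le_pow_mul hz hz0 hS.le (show 153 < 600 by norm_num),
      Nat.le_ceil (z ^ 153 * (#S : ℝ))]
  have hclusters := hW.clusters_inter h hz hz0 (by rwa [card_range]) hUU₀ hU <| by
    calc (c : ℝ) ≤ z ^ 4 * (z * #U₀) := hU₀.trans_eq (by ring)
      _ ≤ z ^ 4 * #U := by gcongr
  refine hclusters.false_of_subset_biUnion hG hz hz0 fun x hx => ?_
  obtain ⟨t, ht, hxt⟩ := mem_biUnion.1 (hUU₀ hx)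
  exact mem_biUnion.2 ⟨t, ht, mem_inter.2 ⟨hxt, hx⟩⟩

/-! ### Rödl's theorem -/

/-- The density of edges between `A` and `B` is at most `ε`. -/
def SparsePair (G : SimpleGraph V) (ε : ℝ) (A B : Finset V) : Prop :=
  ∑ a ∈ A, (#(neighborsIn G a B) : ℝ) ≤ ε * (#A * #B)

theorem exists_subset_card_eq_and_card_mul_sum_le (f : α → ℝ) {m : ℕ} {B : Finset α}
    (hm : m ≤ #B) : ∃ B' ⊆ B, #B' = m ∧ #B * ∑ b ∈ B', f b ≤ m * ∑ b ∈ B, f b := by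
  induction B using Finset.strongInduction with
  | H B ih =>
    rcases hm.eq_or_lt with rfl | hlt
    · exact ⟨B, Subset.rfl, rfl, le_rfl⟩
    obtain ⟨b, hb, hmax⟩ := exists_max_image B f (card_pos.1 (by omega))
    have hcard := card_erase_add_one hb
    obtain ⟨B', hB', hB'm, hsum⟩ := ih (B.erase b) (erase_ssubset hb) (by omega)
    refine ⟨B', hB'.trans (erase_subset _ _), hB'm, ?_⟩
    have hle : ∑ x ∈ B', f x ≤ m * f b := by
      rw [← hB'm, ← nsmul_eq_mul]
      exact sum_le_card_nsmul _ _ _ fun x hx => hmax x (mem_of_mem_erase (hB' hx))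
    rw [← sum_erase_add _ _ hb, ← hcard]
    push_cast
    linarith

namespace SparsePair

variable {ε ε' : ℝ} {A A' B B' : Finset V}

theorem symm (h : SparsePair G ε A B) : SparsePair G ε B A := by
  have hsum : ∑ b ∈ B, (#(neighborsIn G b A) : ℝ) = ∑ a ∈ A, (#(neighborsIn G a B) : ℝ) := by
    exact_mod_cast sum_card_neighborsIn_comm G B A
  rw [SparsePair, hsum, mul_comm (#B : ℝ)]
  exact h

theorem mono (h : SparsePair G ε A B) (hA : A' ⊆ A) (hB : B' ⊆ B)
    (hε : ε * (#A * #B) ≤ ε' * (#A' * #B')) : SparsePair G ε' A' B' :=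
  calc ∑ a ∈ A', (#(neighborsIn G a B') : ℝ) ≤ ∑ a ∈ A', (#(neighborsIn G a B) : ℝ) :=
        sum_le_sum fun a _ => cast_card_le_cast_card (neighborsIn_mono a hB)
    _ ≤ ∑ a ∈ A, (#(neighborsIn G a B) : ℝ) :=
        sum_le_sum_of_subset_of_nonneg hA fun _ _ _ => by positivity
    _ ≤ _ := h.trans hε

theorem exists_subset_left (h : SparsePair G ε A B) {m : ℕ} (hm : m ≤ #A) :
    ∃ A' ⊆ A, #A' = m ∧ SparsePair G ε A' B := by
  obtain ⟨A', hA', rfl, hsum⟩ :=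
    exists_subset_card_eq_and_card_mul_sum_le (fun a => (#(neighborsIn G a B) : ℝ)) hm
  refine ⟨A', hA', rfl, ?_⟩
  rcases A.eq_empty_or_nonempty with rfl | hA
  · rwa [subset_empty.1 hA']
  refine le_of_mul_le_mul_left (hsum.trans ?_) (Nat.cast_pos.2 hA.card_pos)
  calc #A' * ∑ a ∈ A, (#(neighborsIn G a B) : ℝ) ≤ #A' * (ε * (#A * #B)) :=
        mul_le_mul_of_nonneg_left h (by positivity)
    _ = #A * (ε * (#A' * #B)) := by ring

theorem exists_subsets_card_eq (h : SparsePair G ε A B) {m : ℕ} (hA : m ≤ #A) (hB : m ≤ #B) :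
    ∃ A' ⊆ A, ∃ B' ⊆ B, #A' = m ∧ #B' = m ∧ SparsePair G ε A' B' := by
  obtain ⟨A', hA', hA'm, hAB⟩ := h.exists_subset_left hA
  obtain ⟨B', hB', hB'm, hBA⟩ := hAB.symm.exists_subset_left hB
  exact ⟨A', hA', B', hB', hA'm, hB'm, hBA.symm⟩

theorem exists_restricted {η : ℝ} {S : Finset V} (h : SparsePair G (η / 4) S S) (hη : 0 < η)
    (hS : S.Nonempty) : ∃ S' ⊆ S, (#S : ℝ) / 2 ≤ #S' ∧ Restricted G η S' := by
  have hn : (0 : ℝ) < #S := by exact_mod_cast hS.card_pos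
  set D := {v ∈ S | η / 2 * #S < (#(neighborsIn G v S) : ℝ)}
  have hD : (#D : ℝ) ≤ #S / 2 := by
    refine le_of_mul_le_mul_right ?_ (mul_pos (half_pos hη) hn)
    calc #D * (η / 2 * #S) = ∑ _v ∈ D, η / 2 * #S := by rw [sum_const, nsmul_eq_mul]
      _ ≤ ∑ v ∈ D, (#(neighborsIn G v S) : ℝ) := sum_le_sum fun v hv => (mem_filter.1 hv).2.le
      _ ≤ ∑ v ∈ S, (#(neighborsIn G v S) : ℝ) :=
          sum_le_sum_of_subset_of_nonneg (filter_subset _ _) fun _ _ _ => by positivity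
      _ ≤ η / 4 * (#S * #S) := h
      _ = #S / 2 * (η / 2 * #S) := by ring
  have hhalf : (#S : ℝ) / 2 ≤ #(S \ D) := by linarith [cast_card_sub_le_cast_card_sdiff D S]
  refine ⟨S \ D, sdiff_subset, hhalf, fun v hv => ?_⟩
  obtain ⟨hvS, hvD⟩ := mem_sdiff.1 hv
  calc (#(neighborsIn G v (S \ D)) : ℝ) ≤ #(neighborsIn G v S) :=
        cast_card_le_cast_card (neighborsIn_mono v sdiff_subset)
    _ ≤ η / 2 * #S := not_lt.1 fun hlt => hvD (mem_filter.2 ⟨hvS, hlt⟩)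
    _ = η * (#S / 2) := by ring
    _ ≤ η * #(S \ D) := by gcongr

end SparsePair

/-- `v` picks a vertex from each of the parts `W j`, `j ∈ J`, and the vertices picked from `W i` and
`W j` are adjacent in `K i j`. -/
structure IsTransversal (K : ι → ι → SimpleGraph V) (J : Finset ι) (W : ι → Finset V)
    (v : ι → V) : Prop where
  mem : ∀ j ∈ J, v j ∈ W j
  pairwise_adj : (J : Set ι).Pairwise fun i j => (K i j).Adj (v i) (v j)

theorem IsTransversal.insert {K : ι → ι → SimpleGraph V} (hK : ∀ i j, K i j = K j i)
    {J : Finset ι} {i : ι} (hi : i ∉ J) {W : ι → Finset V} {v : V} (hv : v ∈ W i) {u : ι → V}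
    (hu : IsTransversal K J (fun j => neighborsIn (K i j) v (W j)) u) :
    IsTransversal K (insert i J) W (update u i v) := by
  have hui : ∀ j ∈ J, update u i v j = u j := fun j hj =>
    update_of_ne (ne_of_mem_of_not_mem hj hi) _ _
  have hmem : ∀ j ∈ J, u j ∈ W j ∧ (K i j).Adj v (u j) := fun j hj =>
    mem_neighborsIn.1 (hu.mem j hj)
  constructor
  · simp only [forall_mem_insert, update_self]
    exact ⟨hv, fun j hj => by rw [hui j hj]; exact (hmem j hj).1⟩
  · rw [coe_insert, Set.pairwise_insert_of_notMem (mem_coe.not.2 hi)]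
    refine ⟨fun j hj k hk hjk => ?_, fun j hj => ?_⟩
    · simp only [hui j hj, hui k hk]
      exact hu.pairwise_adj hj hk hjk
    · simp only [update_self, hui j hj, hK j i]
      exact ⟨(hmem j hj).2, (hmem j hj).2.symm⟩

theorem exists_sparsePair_of_forall_exists_lt {ε : ℝ} {K : ι → SimpleGraph V} {J : Finset ι}
    {A : Finset V} {W : ι → Finset V} (hA : A.Nonempty)
    (h : ∀ v ∈ A, ∃ j ∈ J, #(neighborsIn (K j) v (W j)) < ε * #(W j)) :
    ∃ j ∈ J, ∃ A' ⊆ A, (#A : ℝ) ≤ #J * #A' ∧ SparsePair (K j) ε A' (W j) := by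
  have hJ : J.Nonempty := by
    obtain ⟨v, hv⟩ := hA
    obtain ⟨j, hj, -⟩ := h v hv
    exact ⟨j, hj⟩
  set D : ι → Finset V := fun j => {v ∈ A | #(neighborsIn (K j) v (W j)) < ε * #(W j)}
  have hcover : A ⊆ J.biUnion D := fun v hv => by
    obtain ⟨j, hj, hlt⟩ := h v hv
    exact mem_biUnion.2 ⟨j, hj, mem_filter.2 ⟨hv, hlt⟩⟩
  obtain ⟨j, hj, hDj⟩ : ∃ j ∈ J, (#A : ℝ) ≤ #J * #(D j) := by
    refine exists_le_of_sum_le hJ ?_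
    rw [sum_const, nsmul_eq_mul, ← mul_sum]
    exact mul_le_mul_of_nonneg_left
      ((cast_card_le_cast_card hcover).trans (cast_card_biUnion_le_sum J D)) (by positivity)
  refine ⟨j, hj, D j, filter_subset _ _, hDj, ?_⟩
  calc ∑ v ∈ D j, (#(neighborsIn (K j) v (W j)) : ℝ) ≤ ∑ _v ∈ D j, ε * (#(W j) : ℝ) :=
        sum_le_sum fun v hv => (mem_filter.1 hv).2.le
    _ = ε * (#(D j) * #(W j)) := by
        rw [sum_const, nsmul_eq_mul]
        ring

/-- Choose the vertex in one part so that its neighbourhood in each of the other parts has at least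
an `ε`-proportion of that part, and continue inside these neighbourhoods. If no vertex of the part
will do, many of its vertices fail for the same other part. -/
theorem exists_isTransversal_or_sparsePair [Nonempty V] {ε : ℝ} (hε : 0 < ε) (hε1 : ε ≤ 1)
    {K : ι → ι → SimpleGraph V} (hK : ∀ i j, K i j = K j i) (J : Finset ι) {W : ι → Finset V}
    {n : ℝ} (hn : 0 < n) (hW : ∀ j ∈ J, n ≤ #(W j)) :
    (∃ v, IsTransversal K J W v) ∨
    ∃ i ∈ J, ∃ j ∈ J, i ≠ j ∧ ∃ A ⊆ W i, ∃ B ⊆ W j, ε ^ #J * n ≤ #J * #A ∧ ε ^ #J * n ≤ #J * #B ∧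
      SparsePair (K i j) ε A B := by
  induction J using Finset.induction_on generalizing W n with
  | empty => exact Or.inl ⟨fun _ => Classical.arbitrary V, by simp, by simp⟩
  | insert i J hi ih =>
    have hcard : (#(insert i J) : ℝ) = #J + 1 := by exact_mod_cast card_insert_of_notMem hi
    have hWi := hW i (mem_insert_self _ _)
    have hWJ : ∀ j ∈ J, n ≤ (#(W j) : ℝ) := fun j hj => hW j (mem_insert_of_mem hj)
    rw [hcard, card_insert_of_notMem hi]
    by_cases hgood : ∃ v ∈ W i, ∀ j ∈ J, ε * #(W j) ≤ (#(neighborsIn (K i j) v (W j)) : ℝ)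
    · obtain ⟨v, hv, hdeg⟩ := hgood
      rcases ih (mul_pos hε hn)
        (fun j hj => (mul_le_mul_of_nonneg_left (hWJ j hj) hε.le).trans (hdeg j hj)) with
        ⟨u, hu⟩ | ⟨j, hj, k, hk, hjk, A, hA, B, hB, hAcard, hBcard, hsparse⟩
      · exact Or.inl ⟨_, hu.insert hK hi hv⟩
      · have hpow : ε ^ (#J + 1) * n = ε ^ #J * (ε * n) := by ring
        refine Or.inr ⟨j, mem_insert_of_mem hj, k, mem_insert_of_mem hk, hjk, A,
          hA.trans (neighborsIn_subset _ _), B, hB.trans (neighborsIn_subset _ _), ?_, ?_, hsparse⟩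
        · linarith [(#A).cast_nonneg (α := ℝ)]
        · linarith [(#B).cast_nonneg (α := ℝ)]
    · push Not at hgood
      have hpow : ε ^ (#J + 1) * n ≤ n := mul_le_of_le_one_left hn.le (pow_le_one₀ hε.le hε1)
      obtain ⟨j, hj, A, hA, hAcard, hsparse⟩ := exists_sparsePair_of_forall_exists_lt (K := K i)
        (card_pos.1 (Nat.cast_pos.1 (hn.trans_le hWi))) hgood
      refine Or.inr ⟨i, mem_insert_self _ _, j, mem_insert_of_mem hj,
        (ne_of_mem_of_not_mem hj hi).symm, A, hA, W j, Subset.rfl, ?_, ?_, hsparse⟩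
      · linarith [(#A).cast_nonneg (α := ℝ)]
      · nlinarith [hWJ j hj, (#J).cast_nonneg (α := ℝ)]

theorem nonempty_embedding_of_forall_adj {H : SimpleGraph ι} {v : ι → V}
    (h : ∀ i j, i ≠ j → (if H.Adj i j then G else Gᶜ).Adj (v i) (v j)) : Nonempty (H ↪g G) := by
  refine ⟨⟨⟨v, fun i j hij => of_not_not fun hne => (h i j hne).ne hij⟩, ?_⟩⟩
  intro i j
  change G.Adj (v i) (v j) ↔ H.Adj i j
  rcases eq_or_ne i j with rfl | hne
  · simp
  · have := h i j hne
    by_cases hH : H.Adj i j <;> simp_all [SimpleGraph.compl_adj]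

theorem exists_sparsePair_of_not_nonempty_embedding [Fintype ι] [Nonempty ι] {H : SimpleGraph ι}
    (hG : ¬ Nonempty (H ↪g G)) {ε : ℝ} (hε : 0 < ε) (hε1 : ε ≤ 1) {X : Finset V}
    (hX : 2 * Fintype.card ι ≤ #X) {m : ℕ}
    (hm : m = ⌈ε ^ Fintype.card ι / (2 * Fintype.card ι ^ 2) * #X⌉₊) :
    ∃ A ⊆ X, ∃ B ⊆ X, Disjoint A B ∧ #A = m ∧ #B = m ∧
      (SparsePair G ε A B ∨ SparsePair Gᶜ ε A B) := by
  set k := Fintype.card ι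
  have hk : (0 : ℝ) < k := by exact_mod_cast Fintype.card_pos
  have hXk : 2 * (k : ℝ) ≤ #X := by exact_mod_cast hX
  obtain ⟨W, hWX, hWdisj⟩ := exists_subsets_separated_by (D := X) id (s := #X / (2 * k)) (m := 1)
    (by positivity) zero_le_one (univ : Finset ι)
    (fun b => by
      have : #{x ∈ X | id x = b} ≤ 1 := card_le_one.2 (by grind)
      exact_mod_cast this)
    (by
      rw [card_univ, mul_add, ← mul_div_assoc, mul_comm 2 (k : ℝ), mul_div_mul_left _ _ hk.ne']
      linarith)
  set K : ι → ι → SimpleGraph V := fun i j => if H.Adj i j then G else Gᶜ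
  have hn : (0 : ℝ) < #X / (2 * k) := div_pos (by linarith) (by positivity)
  have : Nonempty V :=
    have ⟨x, _⟩ := card_pos.1 (show 0 < #X by have := Fintype.card_pos (α := ι); omega)
    ⟨x⟩
  rcases exists_isTransversal_or_sparsePair hε hε1 (K := K)
    (fun i j => by simp only [K, H.adj_comm]) univ hn (fun j hj => (hWX j hj).2) with
    ⟨v, -, hv⟩ | ⟨i, hi, j, hj, hij, A, hA, B, hB, hAcard, hBcard, hsparse⟩
  · exact hG.elim (nonempty_embedding_of_forall_adj fun i j =>
      hv (mem_coe.2 (mem_univ i)) (mem_coe.2 (mem_univ j)))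
  have hcard : ∀ C : Finset V, ε ^ k * (#X / (2 * k)) ≤ k * #C → m ≤ #C := fun C hC => by
    refine hm ▸ Nat.ceil_le.2 (le_of_mul_le_mul_left (Eq.trans_le ?_ hC) hk)
    field_simp
  obtain ⟨A', hA', B', hB', hAm, hBm, hsparse'⟩ :=
    hsparse.exists_subsets_card_eq (hcard A hAcard) (hcard B hBcard)
  have hAi := hA'.trans hA
  have hBj := hB'.trans hB
  refine ⟨A', hAi.trans (hWX i hi).1, B', hBj.trans (hWX j hj).1, ?_, hAm, hBm, ?_⟩
  · exact disjoint_left.2 fun x hxA hxB => hWdisj hi hj hij x (hAi hxA) x (hBj hxB) rfl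
  · by_cases hH : H.Adj i j <;> simp only [K, hH, if_true, if_false] at hsparse' <;> tauto

/-- A family of pairwise disjoint subsets of `X`, each of size `g`, with at most an `ε`-proportion
of the possible edges between any two of them. -/
structure Blocks (G : SimpleGraph V) (ε : ℝ) (g : ℕ) (X : Finset V)
    (𝓢 : Finset (Finset V)) : Prop where
  subset : ∀ S ∈ 𝓢, S ⊆ X
  card_eq : ∀ S ∈ 𝓢, #S = g
  pairwiseDisjoint : (𝓢 : Set (Finset V)).PairwiseDisjoint id
  pairwise_sparsePair : (𝓢 : Set (Finset V)).Pairwise (SparsePair G ε)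

namespace Blocks

variable {ε ε' : ℝ} {g : ℕ} {X A B : Finset V} {𝓢 𝓢₁ 𝓢₂ : Finset (Finset V)}

theorem mono (h : Blocks G ε g A 𝓢) (hA : A ⊆ X) : Blocks G ε g X 𝓢 :=
  ⟨fun S hS => (h.subset S hS).trans hA, h.card_eq, h.pairwiseDisjoint, h.pairwise_sparsePair⟩

theorem singleton (G : SimpleGraph V) (ε : ℝ) (X : Finset V) : Blocks G ε #X X {X} := by
  constructor <;> simp

theorem union (h₁ : Blocks G ε g A 𝓢₁) (h₂ : Blocks G ε g B 𝓢₂) (hA : A ⊆ X) (hB : B ⊆ X)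
    (hAB : Disjoint A B) (hsparse : SparsePair G ε' A B) (hε : ε' * (#A * #B) ≤ ε * (g * g)) :
    Blocks G ε g X (𝓢₁ ∪ 𝓢₂) := by
  constructor
  · simp only [forall_mem_union]
    exact ⟨(h₁.mono hA).subset, (h₂.mono hB).subset⟩
  · simp only [forall_mem_union]
    exact ⟨h₁.card_eq, h₂.card_eq⟩
  · rw [coe_union, Set.pairwiseDisjoint_union]
    exact ⟨h₁.pairwiseDisjoint, h₂.pairwiseDisjoint, fun S hS T hT _ =>
      hAB.mono (h₁.subset S hS) (h₂.subset T hT)⟩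
  · have hST : ∀ S ∈ 𝓢₁, ∀ T ∈ 𝓢₂, SparsePair G ε S T := fun S hS T hT =>
      hsparse.mono (h₁.subset S hS) (h₂.subset T hT) (by rwa [h₁.card_eq S hS, h₂.card_eq T hT])
    rw [coe_union, Set.pairwise_union]
    exact ⟨h₁.pairwise_sparsePair, h₂.pairwise_sparsePair, fun S hS T hT _ =>
      ⟨hST S hS T hT, (hST S hS T hT).symm⟩⟩

theorem card_union (h₁ : Blocks G ε g A 𝓢₁) (h₂ : Blocks G ε g B 𝓢₂) (hAB : Disjoint A B)
    (hg : 0 < g) : #(𝓢₁ ∪ 𝓢₂) = #𝓢₁ + #𝓢₂ := by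
  refine card_union_of_disjoint (disjoint_left.2 fun S hS₁ hS₂ => hg.ne' ?_)
  rw [← h₁.card_eq S hS₁, card_eq_zero]
  exact disjoint_self_iff_empty _ |>.1 (hAB.mono (h₁.subset S hS₁) (h₂.subset S hS₂))

theorem card_biUnion (h : Blocks G ε g X 𝓢) : #(𝓢.biUnion id) = #𝓢 * g := by
  rw [Finset.card_biUnion h.pairwiseDisjoint]
  simpa only [id, smul_eq_mul] using sum_eq_card_nsmul h.card_eq

theorem sparsePair_biUnion (h : Blocks G ε g X 𝓢) (hε : 1 ≤ ε * #𝓢) :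
    SparsePair G (2 * ε) (𝓢.biUnion id) (𝓢.biUnion id) := by
  have hε0 : 0 ≤ ε := by
    by_contra! hneg
    nlinarith [(#𝓢).cast_nonneg (α := ℝ)]
  have hpair : ∀ A ∈ 𝓢, ∀ B ∈ 𝓢, ∑ a ∈ A, (#(neighborsIn G a B) : ℝ) ≤
      (if A = B then (g : ℝ) * g else 0) + ε * (g * g) := fun A hA B hB => by
    split_ifs with hAB
    · have hle : ∀ a ∈ A, (#(neighborsIn G a B) : ℝ) ≤ g := fun a _ => by
        rw [← h.card_eq B hB]
        exact cast_card_le_cast_card (neighborsIn_subset a B)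
      have := sum_le_card_nsmul A _ _ hle
      rw [h.card_eq A hA, nsmul_eq_mul] at this
      linarith [(by positivity : 0 ≤ ε * ((g : ℝ) * g))]
    · have := h.pairwise_sparsePair hA hB hAB
      rwa [SparsePair, h.card_eq A hA, h.card_eq B hB, ← zero_add (ε * _)] at this
  calc ∑ a ∈ 𝓢.biUnion id, (#(neighborsIn G a (𝓢.biUnion id)) : ℝ)
      = ∑ A ∈ 𝓢, ∑ a ∈ A, (#(neighborsIn G a (𝓢.biUnion id)) : ℝ) :=
        sum_biUnion h.pairwiseDisjoint
    _ ≤ ∑ A ∈ 𝓢, ∑ a ∈ A, ∑ B ∈ 𝓢, (#(neighborsIn G a B) : ℝ) :=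
        sum_le_sum fun A _ => sum_le_sum fun a _ => by
          rw [neighborsIn, filter_biUnion]
          exact cast_card_biUnion_le_sum _ _
    _ = ∑ A ∈ 𝓢, ∑ B ∈ 𝓢, ∑ a ∈ A, (#(neighborsIn G a B) : ℝ) :=
        sum_congr rfl fun A _ => sum_comm
    _ ≤ ∑ A ∈ 𝓢, ∑ B ∈ 𝓢, ((if A = B then (g : ℝ) * g else 0) + ε * (g * g)) :=
        sum_le_sum fun A hA => sum_le_sum fun B hB => hpair A hA B hB
    _ = #𝓢 * (g * g) * (1 + ε * #𝓢) := by
        simp only [sum_add_distrib, sum_ite_eq, sum_const, nsmul_eq_mul, ← sum_filter,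
          filter_mem_eq_inter, inter_self]
        ring
    _ ≤ #𝓢 * (g * g) * (2 * (ε * #𝓢)) := by gcongr; linarith
    _ = 2 * ε * (#(𝓢.biUnion id) * #(𝓢.biUnion id)) := by
        rw [h.card_biUnion]
        push_cast
        ring

theorem exists_restricted {η : ℝ} (h : Blocks G (η / 8) g X 𝓢) (hη : 0 < η) (hg : 0 < g)
    (h𝓢 : 8 ≤ η * #𝓢) : ∃ S ⊆ X, (g : ℝ) / 2 ≤ #S ∧ Restricted G η S := by
  have h𝓢0 : 0 < #𝓢 := by
    rw [pos_iff_ne_zero]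
    intro h0
    norm_num [h0] at h𝓢
  have hsparse := h.sparsePair_biUnion (by linarith)
  rw [show 2 * (η / 8) = η / 4 by ring] at hsparse
  obtain ⟨S, hS, hScard, hSη⟩ := hsparse.exists_restricted hη
    (card_pos.1 (h.card_biUnion ▸ Nat.mul_pos h𝓢0 hg))
  have hgS : (g : ℝ) ≤ #(𝓢.biUnion id) := by
    exact_mod_cast h.card_biUnion ▸ Nat.le_mul_of_pos_left g h𝓢0
  exact ⟨S, hS.trans (biUnion_subset.2 h.subset), by linarith, hSη⟩

end Blocks

/-- `X` contains blocks of size `g` that are pairwise sparse in `G`, and blocks of size `g` that are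
pairwise sparse in the complement, the product of their numbers being at least `k`. -/
def HasBlocks (G : SimpleGraph V) (ε : ℝ) (g : ℕ) (X : Finset V) (k : ℕ) : Prop :=
  ∃ 𝓢 𝓓, Blocks G ε g X 𝓢 ∧ Blocks Gᶜ ε g X 𝓓 ∧ k ≤ #𝓢 * #𝓓

namespace HasBlocks

variable {ε ε' : ℝ} {g k : ℕ} {X A B : Finset V}

theorem compl (h : HasBlocks G ε g X k) : HasBlocks Gᶜ ε g X k := by
  obtain ⟨𝓢, 𝓓, h𝓢, h𝓓, hk⟩ := h
  exact ⟨𝓓, 𝓢, h𝓓, (compl_compl G).symm ▸ h𝓢, by rwa [mul_comm]⟩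

theorem two_mul (hA : HasBlocks G ε g A k) (hB : HasBlocks G ε g B k) (hAX : A ⊆ X) (hBX : B ⊆ X)
    (hAB : Disjoint A B) (hg : 0 < g) (hsparse : SparsePair G ε' A B)
    (hε : ε' * (#A * #B) ≤ ε * (g * g)) : HasBlocks G ε g X (2 * k) := by
  obtain ⟨𝓢₁, 𝓓₁, h𝓢₁, h𝓓₁, hk₁⟩ := hA
  obtain ⟨𝓢₂, 𝓓₂, h𝓢₂, h𝓓₂, hk₂⟩ := hB
  have h𝓢 := h𝓢₁.union h𝓢₂ hAX hBX hAB hsparse hε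
  have hcard := h𝓢₁.card_union h𝓢₂ hAB hg
  rcases le_total #𝓓₁ #𝓓₂ with hle | hle
  · refine ⟨_, 𝓓₂, h𝓢, h𝓓₂.mono hBX, ?_⟩
    rw [hcard]
    linarith [Nat.mul_le_mul_left #𝓢₁ hle]
  · refine ⟨_, 𝓓₁, h𝓢, h𝓓₁.mono hAX, ?_⟩
    rw [hcard]
    linarith [Nat.mul_le_mul_left #𝓢₂ hle]

theorem exists_restricted {η : ℝ} (h : HasBlocks G (η / 8) g X k) (hη : 0 < η) (hg : 0 < g)
    (hk : 8 * 8 ≤ η * η * k) :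
    ∃ S ⊆ X, (g : ℝ) / 2 ≤ #S ∧ (Restricted G η S ∨ Restricted Gᶜ η S) := by
  obtain ⟨𝓢, 𝓓, h𝓢, h𝓓, hcard⟩ := h
  have hprod : 8 * 8 ≤ (η * #𝓢) * (η * #𝓓) := by
    refine hk.trans (Eq.trans_ge (by push_cast; ring) (mul_le_mul_of_nonneg_left
      (Nat.cast_le.2 hcard) (by positivity)))
  rcases le_or_gt 8 (η * #𝓢) with hlarge | hsmall
  · obtain ⟨S, hSX, hgS, hS⟩ := h𝓢.exists_restricted hη hg hlarge
    exact ⟨S, hSX, hgS, Or.inl hS⟩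
  · obtain ⟨S, hSX, hgS, hS⟩ := h𝓓.exists_restricted hη hg (by
      by_contra! hsmall'
      exact hprod.not_gt (mul_lt_mul'' hsmall hsmall' (by positivity) (by positivity)))
    exact ⟨S, hSX, hgS, Or.inr hS⟩

end HasBlocks

/-- A sparse pair `A`, `B` doubles the number of blocks: place blocks inside `A` and inside `B`. -/
theorem exists_hasBlocks_two_pow.{u} [Finite ι] [Nonempty ι] (H : SimpleGraph ι) {ε : ℝ}
    (hε : 0 < ε) (d : ℕ) :
    ∃ δ > (0 : ℝ), ∃ (n : ℕ) (g : ℕ → ℕ), (∀ x ≥ n, δ * x ≤ g x) ∧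
      ∀ {V : Type u} {G : SimpleGraph V}, ¬ Nonempty (H ↪g G) → ∀ X : Finset V, n ≤ #X →
        HasBlocks G ε (g #X) X (2 ^ d) := by
  have := Fintype.ofFinite ι
  induction d with
  | zero => exact ⟨1, one_pos, 0, id, by simp, fun _ X _ =>
      ⟨{X}, {X}, .singleton _ _ _, .singleton _ _ _, by simp⟩⟩
  | succ d ih =>
    obtain ⟨δ, hδ, n, g, hg, hblocks⟩ := ih
    set k := Fintype.card ι
    set ε' := min 1 (ε * (δ * δ))
    have hk : 0 < k := Fintype.card_pos
    have hε' : 0 < ε' := by positivity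
    set c : ℝ := ε' ^ k / (2 * k ^ 2)
    have hc : 0 < c := by positivity
    have hceil : ∀ x ≥ max (2 * k) ⌈n / c⌉₊, n ≤ ⌈c * x⌉₊ := fun x hx => by
      have hx' := Nat.ceil_le.1 ((le_max_right _ _).trans hx)
      rw [div_le_iff₀ hc, mul_comm] at hx'
      exact_mod_cast hx'.trans (Nat.le_ceil _)
    refine ⟨δ * c, mul_pos hδ hc, max (2 * k) ⌈n / c⌉₊, fun x => g ⌈c * x⌉₊, fun x hx => ?_,
      fun {V G} hG X hX => ?_⟩
    · rw [mul_assoc]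
      exact (mul_le_mul_of_nonneg_left (Nat.le_ceil _) hδ.le).trans (hg _ (hceil x hx))
    set m := ⌈c * #X⌉₊
    have hm : 0 < m := Nat.ceil_pos.2 (mul_pos hc (Nat.cast_pos.2 (by omega)))
    have hδm : δ * m ≤ g m := hg m (hceil _ hX)
    have hgm : 0 < g m := Nat.cast_pos.1 ((by positivity : 0 < δ * m).trans_le hδm)
    have hcard : ε' * (m * m) ≤ ε * (g m * g m) :=
      calc ε' * (m * m) ≤ ε * (δ * δ) * (m * m) :=
            mul_le_mul_of_nonneg_right (min_le_right _ _) (by positivity)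
        _ = ε * ((δ * m) * (δ * m)) := by ring
        _ ≤ ε * (g m * g m) := by gcongr
    obtain ⟨A, hAX, B, hBX, hAB, hA, hB, hsparse⟩ :=
      exists_sparsePair_of_not_nonempty_embedding hG hε' (min_le_left _ _)
        ((le_max_left _ _).trans hX) (m := m) rfl
    have hAblocks := hblocks hG A (hA ▸ hceil _ hX)
    have hBblocks := hblocks hG B (hB ▸ hceil _ hX)
    rw [hA] at hAblocks
    rw [hB] at hBblocks
    rw [pow_succ']
    rcases hsparse with hsparse | hsparse
    · exact hAblocks.two_mul hBblocks hAX hBX hAB hgm hsparse (by rwa [hA, hB])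
    · exact compl_compl G ▸
        (hAblocks.compl.two_mul hBblocks.compl hAX hBX hAB hgm hsparse (by rwa [hA, hB])).compl

/-- Rödl's theorem. -/
theorem exists_restricted_of_not_nonempty_embedding.{u} [Finite ι] [Nonempty ι]
    (H : SimpleGraph ι) {η : ℝ} (hη : 0 < η) :
    ∃ δ > (0 : ℝ), ∀ {V : Type u} {G : SimpleGraph V}, ¬ Nonempty (H ↪g G) →
      ∀ X : Finset V, X.Nonempty → ∃ S ⊆ X, S.Nonempty ∧ δ * #X ≤ #S ∧
        (Restricted G η S ∨ Restricted Gᶜ η S) := by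
  obtain ⟨d, hd⟩ := pow_unbounded_of_one_lt (8 * 8 / (η * η)) one_lt_two
  have hd' : 8 * 8 ≤ η * η * ((2 ^ d : ℕ) : ℝ) := by
    rw [div_lt_iff₀' (by positivity)] at hd
    exact_mod_cast hd.le
  obtain ⟨δ, hδ, n, g, hg, hblocks⟩ :=
    exists_hasBlocks_two_pow H (ε := η / 8) (by positivity) d
  refine ⟨min (δ / 2) (1 / (n + 1)), by positivity, fun {V G} hG X hX => ?_⟩
  rcases le_or_gt n #X with hn | hn
  · have hgX := hg _ hn
    have hg0 : 0 < δ * #X := mul_pos hδ (Nat.cast_pos.2 hX.card_pos)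
    obtain ⟨S, hSX, hgS, hS⟩ := (hblocks hG X hn).exists_restricted hη
      (Nat.cast_pos.1 (hg0.trans_le hgX)) hd'
    have hS0 : (0 : ℝ) < #S := by linarith
    refine ⟨S, hSX, card_pos.1 (Nat.cast_pos.1 hS0), ?_, hS⟩
    calc min (δ / 2) (1 / (n + 1)) * #X ≤ δ / 2 * #X := by gcongr; exact min_le_left _ _
      _ ≤ #S := by linarith
  · obtain ⟨x, hx⟩ := hX
    refine ⟨{x}, singleton_subset_iff.2 hx, singleton_nonempty x, ?_, Or.inl ?_⟩
    · have hXn : (#X : ℝ) ≤ n + 1 := by exact_mod_cast hn.le.trans n.le_succ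
      calc min (δ / 2) (1 / (n + 1)) * #X ≤ 1 / (n + 1) * (n + 1) := by
            gcongr
            exact min_le_right _ _
        _ = _ := by
            rw [one_div_mul_cancel (by positivity), card_singleton, Nat.cast_one]
    · simp [Restricted, neighborsIn, filter_singleton, hη.le]

/-! ### The product of the independence number and the clique number -/

/-- The size of the largest independent subset of `X`. -/
noncomputable def indepNumIn (G : SimpleGraph V) (X : Finset V) : ℕ :=
  (X.powerset.filter fun T : Finset V => G.IsIndepSet T).sup card

theorem card_le_indepNumIn {X T : Finset V} (hT : T ⊆ X) (h : G.IsIndepSet T) :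
    #T ≤ indepNumIn G X :=
  le_sup (f := card) (by simp [hT, h])

theorem exists_isIndepSet_card_eq_indepNumIn (G : SimpleGraph V) (X : Finset V) :
    ∃ T ⊆ X, G.IsIndepSet T ∧ #T = indepNumIn G X := by
  obtain ⟨T, hT, hcard⟩ := exists_mem_eq_sup (X.powerset.filter fun T : Finset V => G.IsIndepSet T)
    ⟨∅, by simp⟩ card
  rw [mem_filter, mem_powerset] at hT
  exact ⟨T, hT.1, hT.2, hcard.symm⟩

theorem indepNumIn_mono (G : SimpleGraph V) {X Y : Finset V} (h : X ⊆ Y) :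
    indepNumIn G X ≤ indepNumIn G Y :=
  sup_mono (filter_subset_filter _ (powerset_mono.2 h))

theorem indepNumIn_pos (G : SimpleGraph V) {X : Finset V} (h : X.Nonempty) :
    0 < indepNumIn G X := by
  obtain ⟨x, hx⟩ := h
  have hsing := card_le_indepNumIn (G := G) (singleton_subset_iff.2 hx) (by simp)
  rwa [card_singleton] at hsing

theorem sum_indepNumIn_le {U : Finset V} {𝓑 : Finset (Finset V)} (hsub : ∀ B ∈ 𝓑, B ⊆ U)
    (hdisj : (𝓑 : Set (Finset V)).PairwiseDisjoint id)
    (hanti : (𝓑 : Set (Finset V)).Pairwise (Anticomplete G)) :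
    ∑ B ∈ 𝓑, indepNumIn G B ≤ indepNumIn G U := by
  choose T hTB hT hcard using exists_isIndepSet_card_eq_indepNumIn G
  have hindep : G.IsIndepSet (𝓑.biUnion T) := by
    intro x hx y hy hxy
    obtain ⟨B, hB, hxB⟩ := mem_biUnion.1 (mem_coe.1 hx)
    obtain ⟨B', hB', hyB'⟩ := mem_biUnion.1 (mem_coe.1 hy)
    rcases eq_or_ne B B' with rfl | hne
    · exact hT B hxB hyB' hxy
    · exact hanti hB hB' hne x (hTB B hxB) y (hTB B' hyB')
  calc ∑ B ∈ 𝓑, indepNumIn G B = #(𝓑.biUnion T) := by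
        simp only [← hcard]
        exact (card_biUnion (hdisj.mono hTB)).symm
    _ ≤ indepNumIn G U :=
        card_le_indepNumIn (biUnion_subset.2 fun B hB => (hTB B).trans (hsub B hB)) hindep

theorem card_le_indepNumIn_mul {S : Finset V} {d : ℝ}
    (h : ∀ v ∈ S, (#(neighborsIn G v S) : ℝ) ≤ d) : (#S : ℝ) ≤ indepNumIn G S * (1 + d) := by
  obtain ⟨T, hTS, hT, hcard⟩ := exists_isIndepSet_card_eq_indepNumIn G S
  have hcover : S ⊆ T.biUnion fun v => insert v (neighborsIn G v S) := by
    intro x hx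
    by_contra hxT
    simp only [mem_biUnion, mem_insert, mem_neighborsIn, not_exists, not_and, not_or] at hxT
    have hxT' : x ∉ T := fun hmem => (hxT x hmem).1 rfl
    have hindep : G.IsIndepSet (insert x T : Finset V) := by
      rw [coe_insert]
      refine (Set.pairwise_insert_of_notMem (mem_coe.not.2 hxT')).2 ⟨hT, fun v hv => ?_⟩
      have hvx := (hxT v hv).2 hx
      exact ⟨fun hadj => hvx hadj.symm, hvx⟩
    have hle := card_le_indepNumIn (insert_subset hx hTS) hindep
    rw [card_insert_of_notMem hxT'] at hle
    omega
  calc (#S : ℝ) ≤ ∑ v ∈ T, (#(insert v (neighborsIn G v S)) : ℝ) :=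
        (cast_card_le_cast_card hcover).trans (cast_card_biUnion_le_sum _ _)
    _ ≤ ∑ _v ∈ T, (1 + d) := sum_le_sum fun v hv => by
        have hinsert : (#(insert v (neighborsIn G v S)) : ℝ) ≤ #(neighborsIn G v S) + 1 := by
          exact_mod_cast card_insert_le _ _
        linarith [h v (hTS hv)]
    _ = indepNumIn G S * (1 + d) := by rw [sum_const, nsmul_eq_mul, hcard]

theorem Restricted.le_two_mul_indepNumIn {y t : ℝ} {S : Finset V} (h : Restricted G y S)
    (hy : 0 ≤ y) (ht : t ≤ #S) (hty : t * y ≤ 1) : t ≤ 2 * indepNumIn G S := by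
  have hle := card_le_indepNumIn_mul h
  by_contra! hlt
  nlinarith [mul_le_mul_of_nonneg_right hty (#S).cast_nonneg,
    mul_nonneg hy ((#S).cast_nonneg (α := ℝ))]

/-- The product of the sizes of the largest independent set and the largest clique in `X`. -/
noncomputable def kappaIn (G : SimpleGraph V) (X : Finset V) : ℕ :=
  indepNumIn G X * indepNumIn Gᶜ X

theorem kappaIn_compl (G : SimpleGraph V) (X : Finset V) : kappaIn Gᶜ X = kappaIn G X := by
  rw [kappaIn, kappaIn, compl_compl, mul_comm]

theorem kappaIn_mono (G : SimpleGraph V) {X Y : Finset V} (h : X ⊆ Y) :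
    kappaIn G X ≤ kappaIn G Y :=
  Nat.mul_le_mul (indepNumIn_mono G h) (indepNumIn_mono Gᶜ h)

theorem kappaIn_pos (G : SimpleGraph V) {X : Finset V} (h : X.Nonempty) : 0 < kappaIn G X :=
  Nat.mul_pos (indepNumIn_pos G h) (indepNumIn_pos Gᶜ h)

theorem indepNumIn_le_kappaIn (G : SimpleGraph V) {X : Finset V} (h : X.Nonempty) :
    indepNumIn G X ≤ kappaIn G X :=
  Nat.le_mul_of_pos_right _ (indepNumIn_pos Gᶜ h)

theorem two_le_kappaIn (G : SimpleGraph V) {X : Finset V} (h : 2 ≤ #X) : 2 ≤ kappaIn G X := by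
  obtain ⟨x, hx, y, hy, hne⟩ := one_lt_card.1 h
  have hXne : X.Nonempty := ⟨x, hx⟩
  have hsub : {x, y} ⊆ X := insert_subset hx (singleton_subset_iff.2 hy)
  rw [← card_pair hne]
  by_cases hxy : G.Adj x y
  · rw [← kappaIn_compl]
    exact (card_le_indepNumIn hsub (by simp [IsIndepSet, Set.pairwise_pair, hxy, hxy.symm])).trans
      (indepNumIn_le_kappaIn Gᶜ hXne)
  · have hyx : ¬ G.Adj y x := fun h => hxy h.symm
    exact (card_le_indepNumIn hsub (by simp [IsIndepSet, Set.pairwise_pair, hxy, hyx])).trans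
      (indepNumIn_le_kappaIn G hXne)

theorem sum_kappaIn_le {U : Finset V} {𝓑 : Finset (Finset V)} (hsub : ∀ B ∈ 𝓑, B ⊆ U)
    (hdisj : (𝓑 : Set (Finset V)).PairwiseDisjoint id)
    (hanti : (𝓑 : Set (Finset V)).Pairwise (Anticomplete G)) :
    ∑ B ∈ 𝓑, kappaIn G B ≤ kappaIn G U :=
  calc ∑ B ∈ 𝓑, kappaIn G B ≤ ∑ B ∈ 𝓑, indepNumIn G B * indepNumIn Gᶜ U :=
        sum_le_sum fun B hB => Nat.mul_le_mul_left _ (indepNumIn_mono Gᶜ (hsub B hB))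
    _ = (∑ B ∈ 𝓑, indepNumIn G B) * indepNumIn Gᶜ U := (sum_mul _ _ _).symm
    _ ≤ kappaIn G U := Nat.mul_le_mul_right _ (sum_indepNumIn_le hsub hdisj hanti)

theorem exists_kappaIn_le_card_sq (G : SimpleGraph V) (X : Finset V) :
    ∃ T ⊆ X, kappaIn G X ≤ #T ^ 2 ∧ (G.IsClique T ∨ G.IsIndepSet T) := by
  obtain ⟨A, hAX, hA, hAcard⟩ := exists_isIndepSet_card_eq_indepNumIn G X
  obtain ⟨B, hBX, hB, hBcard⟩ := exists_isIndepSet_card_eq_indepNumIn Gᶜ X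
  rw [kappaIn, ← hAcard, ← hBcard]
  rcases le_total #A #B with h | h
  · exact ⟨B, hBX, by rw [sq]; gcongr, Or.inl ((isIndepSet_compl G).1 hB)⟩
  · exact ⟨A, hAX, by rw [sq]; gcongr, Or.inr hA⟩

theorem critical_of_forall_subset {σ : ℝ} (hσ : σ ≠ 0) {U : Finset V} (hU : U.Nonempty)
    (h : ∀ B ⊆ U, B.Nonempty → kappaIn G U * (#B : ℝ) ^ σ ≤ kappaIn G B * (#U : ℝ) ^ σ) :
    Critical G σ U := by
  intro 𝓑 hsub hdisj hpure
  have hsum : ∑ B ∈ 𝓑, (kappaIn G B : ℝ) ≤ kappaIn G U := by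
    rcases hpure with hanti | hanti
    · exact_mod_cast sum_kappaIn_le hsub hdisj hanti
    · simp only [← kappaIn_compl G]
      exact_mod_cast sum_kappaIn_le hsub hdisj hanti
  have hκ : (0 : ℝ) < kappaIn G U := by exact_mod_cast kappaIn_pos G hU
  refine le_of_mul_le_mul_left ?_ hκ
  calc kappaIn G U * ∑ B ∈ 𝓑, (#B : ℝ) ^ σ = ∑ B ∈ 𝓑, kappaIn G U * (#B : ℝ) ^ σ := mul_sum _ _ _
    _ ≤ ∑ B ∈ 𝓑, kappaIn G B * (#U : ℝ) ^ σ := by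
        refine sum_le_sum fun B hB => ?_
        rcases B.eq_empty_or_nonempty with rfl | hne
        · rw [card_empty, Nat.cast_zero, Real.zero_rpow hσ, mul_zero]
          positivity
        · exact h B (hsub B hB) hne
    _ = (∑ B ∈ 𝓑, (kappaIn G B : ℝ)) * (#U : ℝ) ^ σ := (sum_mul _ _ _).symm
    _ ≤ kappaIn G U * (#U : ℝ) ^ σ := by gcongr

theorem exists_critical_subset (G : SimpleGraph V) {σ : ℝ} (hσ : σ ≠ 0) {X : Finset V}
    (hX : X.Nonempty) :
    ∃ U ⊆ X, U.Nonempty ∧ kappaIn G U * (#X : ℝ) ^ σ ≤ kappaIn G X * (#U : ℝ) ^ σ ∧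
      Critical G σ U := by
  obtain ⟨U, hU, hmin⟩ := {U ∈ X.powerset | U.Nonempty}.exists_min_image
    (fun U => (kappaIn G U : ℝ) / (#U : ℝ) ^ σ) ⟨X, by simp [hX]⟩
  simp only [mem_filter, mem_powerset] at hU hmin
  obtain ⟨hUX, hUne⟩ := hU
  have hpos : ∀ {B : Finset V}, B.Nonempty → (0 : ℝ) < (#B : ℝ) ^ σ := fun hB =>
    Real.rpow_pos_of_pos (Nat.cast_pos.2 hB.card_pos) _
  have hratio : ∀ B ⊆ X, B.Nonempty → kappaIn G U * (#B : ℝ) ^ σ ≤ kappaIn G B * (#U : ℝ) ^ σ :=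
    fun B hB hne => (div_le_div_iff₀ (hpos hUne) (hpos hne)).1 (hmin B ⟨hB, hne⟩)
  exact ⟨U, hUX, hUne, hratio X Subset.rfl hX,
    critical_of_forall_subset hσ hUne fun B hB => hratio B (hB.trans hUX)⟩

/-! ### Minimal counterexamples -/

/-- `W` fails `#W ^ τ ≤ κ(W)`, and is minimal with this property. -/
structure MinimalCounterexample (G : SimpleGraph V) (τ : ℝ) (W : Finset V) : Prop where
  kappaIn_lt : (kappaIn G W : ℝ) < (#W : ℝ) ^ τ
  le_kappaIn : ∀ U ⊂ W, (#U : ℝ) ^ τ ≤ kappaIn G U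

/-- `W` has a subset, smaller by a factor of at most `exp (a * s)`, that is
`exp (-100 * s)`-restricted in `G` or in the complement. -/
def HasSparseSubset (G : SimpleGraph V) (a s : ℝ) (W : Finset V) : Prop :=
  ∃ S ⊆ W, S.Nonempty ∧ Real.exp (-(a * s)) * #W ≤ #S ∧
    (Restricted G (Real.exp (-(100 * s))) S ∨ Restricted Gᶜ (Real.exp (-(100 * s))) S)

theorem HasSparseSubset.compl {a s : ℝ} {W : Finset V} (h : HasSparseSubset G a s W) :
    HasSparseSubset Gᶜ a s W := by
  obtain ⟨S, hSW, hS, hcard, hres⟩ := h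
  exact ⟨S, hSW, hS, hcard, by rw [compl_compl]; exact hres.symm⟩

/-- The set is so sparse that `exp (2 * τ * log #W)` of its vertices can be chosen greedily. -/
theorem HasSparseSubset.rpow_le_kappaIn {a s τ : ℝ} {W : Finset V} (h : HasSparseSubset G a s W)
    (hτ : τ ≤ 1 / 8) (hW : 2 ≤ (#W : ℝ) ^ τ) (has : a * s ≤ 3 / 4 * Real.log #W)
    (hs : τ * Real.log #W ≤ 50 * s) : (#W : ℝ) ^ τ ≤ kappaIn G W := by
  obtain ⟨S, hSW, hS, hcard, hres⟩ := h
  have hW1 : (1 : ℝ) ≤ #W := by exact_mod_cast (hS.mono hSW).card_pos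
  have hlog : 0 ≤ Real.log #W := Real.log_nonneg hW1
  set t := Real.exp (2 * (τ * Real.log #W))
  have hWt : 2 * (#W : ℝ) ^ τ ≤ t :=
    calc 2 * (#W : ℝ) ^ τ ≤ (#W : ℝ) ^ τ * (#W : ℝ) ^ τ := by gcongr
      _ = t := by
        rw [Real.rpow_def_of_pos (by linarith), ← Real.exp_add]
        congr 1
        ring
  have htS : t ≤ #S := by
    refine le_trans ?_ hcard
    rw [← Real.exp_log (by linarith : (0 : ℝ) < #W), ← Real.exp_add, Real.exp_le_exp]
    linarith [mul_le_mul_of_nonneg_right hτ hlog]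
  have hty : t * Real.exp (-(100 * s)) ≤ 1 := by
    rw [← Real.exp_add, Real.exp_le_one_iff]
    linarith
  have hindep : ∀ H : SimpleGraph V, Restricted H (Real.exp (-(100 * s))) S →
      (#W : ℝ) ^ τ ≤ kappaIn H W := fun H hH => by
    have hκ : (indepNumIn H S : ℝ) ≤ kappaIn H W := by
      exact_mod_cast (indepNumIn_le_kappaIn H hS).trans (kappaIn_mono H hSW)
    linarith [hH.le_two_mul_indepNumIn (Real.exp_pos _).le htS hty]
  exact hres.elim (hindep G) fun hres => kappaIn_compl G W ▸ hindep Gᶜ hres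

namespace MinimalCounterexample

variable {τ : ℝ} {W : Finset V}

theorem compl (h : MinimalCounterexample G τ W) : MinimalCounterexample Gᶜ τ W :=
  ⟨by rw [kappaIn_compl]; exact h.kappaIn_lt, fun U hU => by
    rw [kappaIn_compl]
    exact h.le_kappaIn U hU⟩

theorem nonempty (h : MinimalCounterexample G τ W) (hτ : τ ≠ 0) : W.Nonempty := by
  by_contra hempty
  have hκ := h.kappaIn_lt
  rw [not_nonempty_iff_eq_empty.1 hempty, card_empty, Nat.cast_zero, Real.zero_rpow hτ] at hκ
  exact (Nat.cast_nonneg _).not_gt hκ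

theorem two_lt_rpow (h : MinimalCounterexample G τ W) (hτ : 0 < τ) : 2 < (#W : ℝ) ^ τ := by
  have hκ : (1 : ℝ) ≤ kappaIn G W := by exact_mod_cast kappaIn_pos G (h.nonempty hτ.ne')
  have hcard : 2 ≤ #W := by
    by_contra! hlt
    have hW1 : (#W : ℝ) ≤ 1 := by exact_mod_cast Nat.le_of_lt_succ hlt
    linarith [h.kappaIn_lt, Real.rpow_le_one (Nat.cast_nonneg _) hW1 hτ.le]
  exact h.kappaIn_lt.trans_le' (by exact_mod_cast two_le_kappaIn G hcard)

/-- In the critical subset minimizing the ratio of `κ` to the `σ`-th power of the size, `κ` is at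
least the `τ`-th power of the size, by minimality of `W`. -/
theorem exists_critical {σ s A : ℝ} (h : MinimalCounterexample G τ W) (hs : 0 ≤ s) (hτ : 0 < τ)
    (hA : 0 ≤ A) (hAτ : (A + 1) * τ ≤ σ) {X : Finset V} (hXW : X ⊆ W) (hX : X.Nonempty)
    (hlarge : Real.exp (-(A * s)) * #W ≤ #X) :
    ∃ U ⊆ X, Real.exp (-s) * #X ≤ #U ∧ Critical G σ U := by
  have hτσ : τ ≤ σ := (le_mul_of_one_le_left hτ.le (by linarith)).trans hAτ
  obtain ⟨U, hUX, hU, hratio, hcrit⟩ := exists_critical_subset G (by linarith : σ ≠ 0) hX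
  refine ⟨U, hUX, ?_, hcrit⟩
  have hX0 : (0 : ℝ) < #X := Nat.cast_pos.2 hX.card_pos
  have hU0 : (0 : ℝ) < #U := Nat.cast_pos.2 hU.card_pos
  have hW0 : (0 : ℝ) < #W := Nat.cast_pos.2 (hX.mono hXW).card_pos
  rcases (hUX.trans hXW).eq_or_ssubset with rfl | hUW
  · rw [hXW.antisymm hUX] at hX0 ⊢
    exact mul_le_of_le_one_left hX0.le (Real.exp_le_one_iff.2 (by linarith))
  have hpow : (#U : ℝ) ^ τ * (#X : ℝ) ^ σ < (#W : ℝ) ^ τ * (#U : ℝ) ^ σ :=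
    calc (#U : ℝ) ^ τ * (#X : ℝ) ^ σ ≤ kappaIn G U * (#X : ℝ) ^ σ := by
          gcongr
          exact h.le_kappaIn U hUW
      _ ≤ kappaIn G X * (#U : ℝ) ^ σ := hratio
      _ < (#W : ℝ) ^ τ * (#U : ℝ) ^ σ := by
          gcongr
          exact (Nat.cast_le.2 (kappaIn_mono G hXW)).trans_lt h.kappaIn_lt
  by_contra! hsmall
  have hlogW := Real.log_le_log (by positivity) hlarge
  have hlogU := Real.log_lt_log hU0 hsmall
  have hlog := Real.log_lt_log (by positivity) hpow
  rw [Real.log_mul (by positivity) (by positivity), Real.log_exp] at hlogW hlogU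
  rw [Real.log_mul (by positivity) (by positivity), Real.log_mul (by positivity) (by positivity)]
    at hlog
  simp only [Real.log_rpow, hX0, hU0, hW0] at hlog
  nlinarith [mul_le_mul_of_nonneg_left hlogU.le (sub_nonneg.2 hτσ),
    mul_le_mul_of_nonneg_left hlogW hτ.le, mul_nonneg hs (sub_nonneg.2 hAτ)]

end MinimalCounterexample

namespace MinimalCounterexample

variable {a s τ : ℝ} {S W : Finset V}

theorem stuck_of_restricted (h : MinimalCounterexample G τ W) (hs : 0 ≤ s) (ha : 1200 ≤ a)
    (hτ : 0 < τ) (haτ : (a + 601) * τ ≤ 1 / 1500) (hSW : S ⊆ W) (hS : S.Nonempty)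
    (hlarge : Real.exp (-(a * s)) * #W ≤ #S) (hres : Restricted G (Real.exp (-(100 * s))) S)
    (hno : ¬ HasSparseSubset G a (3 / 2 * s) W) : Stuck G (Real.exp (-s)) S := by
  have hpow : ∀ k : ℕ, Real.exp (-s) ^ k = Real.exp (-(k * s)) := fun k => by
    rw [← Real.exp_nat_mul, mul_neg]
  have : (0 : ℝ) < #S := Nat.cast_pos.2 hS.card_pos
  have hne : ∀ X : Finset V, Real.exp (-s) ^ 600 * #S ≤ #X → X.Nonempty := fun X hX =>
    card_pos.1 <| Nat.cast_pos.1 <| hX.trans_lt' (by positivity)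
  have hlargeX : ∀ X : Finset V, Real.exp (-s) ^ 600 * #S ≤ #X →
      Real.exp (-((a + 600) * s)) * #W ≤ #X := fun X hX =>
    calc Real.exp (-((a + 600) * s)) * #W = Real.exp (-s) ^ 600 * (Real.exp (-(a * s)) * #W) := by
          rw [hpow, ← mul_assoc, ← Real.exp_add]
          congr 2
          push_cast
          ring
      _ ≤ Real.exp (-s) ^ 600 * #S := by gcongr
      _ ≤ #X := hX
  refine ⟨hS, ?_, fun X hXS hX => ?_, fun X hXS hX =>
    h.exists_critical hs hτ (by linarith : 0 ≤ a + 600) (by linarith) (hXS.trans hSW) (hne X hX)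
      (hlargeX X hX)⟩
  · rw [hpow]
    exact_mod_cast hres
  rw [← not_or, show Real.exp (-s) ^ 150 = Real.exp (-(100 * (3 / 2 * s))) by
    rw [hpow]; congr 1; push_cast; ring]
  refine fun hsparse => hno ⟨X, hXS.trans hSW, hne X hX, (hlargeX X hX).trans' ?_, hsparse⟩
  refine mul_le_mul_of_nonneg_right (Real.exp_le_exp.2 ?_) (Nat.cast_nonneg _)
  nlinarith

theorem hasSparseSubset_of_restricted (h : MinimalCounterexample G τ W) (hG : C5Free G)
    (hs : 10 ^ 10 ≤ s) (ha : 1200 ≤ a) (hτ : 0 < τ) (haτ : (a + 601) * τ ≤ 1 / 1500) (hSW : S ⊆ W)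
    (hS : S.Nonempty) (hlarge : Real.exp (-(a * s)) * #W ≤ #S)
    (hres : Restricted G (Real.exp (-(100 * s))) S) : HasSparseSubset G a (3 / 2 * s) W := by
  by_contra hno
  refine (h.stuck_of_restricted (by linarith) ha hτ haτ hSW hS hlarge hres hno).false_of_c5Free hG
    (Real.exp_pos _) ?_
  rw [Real.exp_neg, ← one_div]
  exact one_div_le_one_div_of_le (by norm_num) (by linarith [Real.add_one_le_exp s])

theorem hasSparseSubset_three_halves_mul (h : MinimalCounterexample G τ W) (hG : C5Free G)
    (hs : 10 ^ 10 ≤ s) (ha : 1200 ≤ a) (hτ : 0 < τ) (haτ : (a + 601) * τ ≤ 1 / 1500)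
    (hsparse : HasSparseSubset G a s W) : HasSparseSubset G a (3 / 2 * s) W := by
  obtain ⟨S, hSW, hS, hlarge, hres | hres⟩ := hsparse
  · exact h.hasSparseSubset_of_restricted hG hs ha hτ haτ hSW hS hlarge hres
  · simpa only [compl_compl] using
      (h.compl.hasSparseSubset_of_restricted hG.compl hs ha hτ haτ hSW hS hlarge hres).compl

theorem hasSparseSubset_mul_pow (h : MinimalCounterexample G τ W) (hG : C5Free G)
    (ha : 1200 ≤ a) (hτ : 0 < τ) (haτ : (a + 601) * τ ≤ 1 / 1500)
    (hsparse : HasSparseSubset G a (10 ^ 10) W) (n : ℕ) :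
    HasSparseSubset G a (10 ^ 10 * (3 / 2) ^ n) W := by
  induction n with
  | zero => simpa using hsparse
  | succ n ih =>
    rw [pow_succ' (3 / 2 : ℝ), mul_left_comm]
    exact h.hasSparseSubset_three_halves_mul hG
      (le_mul_of_one_le_right (by norm_num) (one_le_pow₀ (by norm_num))) ha hτ haτ ih

theorem not_hasSparseSubset (h : MinimalCounterexample G τ W) (hG : C5Free G)
    (ha : 1200 ≤ a) (hτ : 0 < τ) (haτ : a * τ ≤ 1 / 10 ^ 14) :
    ¬ HasSparseSubset G a (10 ^ 10) W := by
  intro hsparse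
  set L := Real.log #W
  have hW := h.two_lt_rpow hτ
  have hτL : 1 / 2 < τ * L := by
    have hW0 : (0 : ℝ) < #W := Nat.cast_pos.2 (h.nonempty hτ.ne').card_pos
    have hlog := Real.log_lt_log two_pos hW
    rw [Real.log_rpow hW0] at hlog
    linarith [Real.log_two_gt_d9]
  have : 0 < L := pos_of_mul_pos_right (hτL.trans' (by norm_num)) hτ.le
  have haL : 10 ^ 12 * a ≤ L := by
    refine le_of_mul_le_mul_left ?_ hτ
    linarith
  obtain ⟨n, hle, hlt⟩ := exists_nat_pow_near (x := 3 * L / (4 * a * 10 ^ 10)) (y := 3 / 2)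
    ((one_le_div (by positivity)).2 (by linarith)) (by norm_num)
  rw [le_div_iff₀ (by positivity)] at hle
  rw [div_lt_iff₀ (by positivity), pow_succ] at hlt
  refine h.kappaIn_lt.not_ge <| (h.hasSparseSubset_mul_pow hG ha hτ (by nlinarith) hsparse
    n).rpow_le_kappaIn (by nlinarith) hW.le (by linarith) ?_
  set s : ℝ := 10 ^ 10 * (3 / 2) ^ n
  have : 0 < s := by positivity
  calc τ * L ≤ τ * (2 * a * s) := by
        gcongr
        linarith
    _ = 2 * (a * τ) * s := by ring
    _ ≤ 50 * s := by
        gcongr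
        linarith

end MinimalCounterexample

theorem exists_minimalCounterexample_subset {τ : ℝ} {W : Finset V}
    (hW : (kappaIn G W : ℝ) < (#W : ℝ) ^ τ) : ∃ U, MinimalCounterexample G τ U := by
  induction W using Finset.strongInduction with
  | H W ih =>
    by_cases hmin : ∀ U ⊂ W, (#U : ℝ) ^ τ ≤ kappaIn G U
    · exact ⟨W, hW, hmin⟩
    · push Not at hmin
      obtain ⟨U, hUW, hU⟩ := hmin
      exact ih U hUW hU

theorem exists_rpow_le_kappaIn.{u} : ∃ τ : ℝ, 0 < τ ∧ ∀ {V : Type u} {G : SimpleGraph V},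
    C5Free G → ∀ W : Finset V, (#W : ℝ) ^ τ ≤ kappaIn G W := by
  obtain ⟨δ, hδ, hsparse⟩ := exists_restricted_of_not_nonempty_embedding (cycleGraph 5)
    (Real.exp_pos (-(100 * 10 ^ 10)))
  set a : ℝ := 1200 + 1 / δ
  have ha : 1200 ≤ a := le_add_of_nonneg_right (by positivity)
  have haδ : Real.exp (-(a * 10 ^ 10)) ≤ δ := by
    rw [Real.exp_neg, inv_le_comm₀ (Real.exp_pos _) hδ, ← one_div]
    calc 1 / δ ≤ a := le_add_of_nonneg_left (by norm_num)
      _ ≤ a * 10 ^ 10 := le_mul_of_one_le_right (by linarith) (by norm_num)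
      _ ≤ Real.exp (a * 10 ^ 10) := by linarith [Real.add_one_le_exp (a * 10 ^ 10)]
  have hτ : 0 < 1 / (10 ^ 14 * a) := by positivity
  refine ⟨1 / (10 ^ 14 * a), hτ, fun {V G} hG W => ?_⟩
  by_contra! hW
  obtain ⟨U, hmin⟩ := exists_minimalCounterexample_subset hW
  obtain ⟨S, hSU, hS, hlarge, hres⟩ := hsparse hG U (hmin.nonempty hτ.ne')
  refine hmin.not_hasSparseSubset hG ha hτ (by field_simp; norm_num)
    ⟨S, hSU, hS, hlarge.trans' (by gcongr), hres⟩

end ErdosHajnal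

open Finset ErdosHajnal in
theorem stmt_0_general.{u} :
    ∃ τ : ℝ, 0 < τ ∧ ∀ {V : Type u} {G : SimpleGraph V}, ¬ Nonempty (cycleGraph 5 ↪g G) →
      ∀ W : Finset V, ∃ T ⊆ W, (#W : ℝ) ^ τ ≤ #T ∧ (G.IsClique T ∨ G.IsIndepSet T) := by
  obtain ⟨τ, hτ, hκ⟩ := exists_rpow_le_kappaIn.{u}
  refine ⟨τ / 2, by positivity, fun {V G} hG W => ?_⟩
  obtain ⟨T, hTW, hT, hmono⟩ := exists_kappaIn_le_card_sq G W
  refine ⟨T, hTW, (pow_le_pow_iff_left₀ (by positivity) (by positivity) two_ne_zero).1 ?_, hmono⟩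
  calc ((#W : ℝ) ^ (τ / 2)) ^ 2 = (#W : ℝ) ^ τ := by
        rw [← Real.rpow_mul_natCast (by positivity), Nat.cast_ofNat, div_mul_cancel₀ τ two_ne_zero]
    _ ≤ kappaIn G W := hκ hG W
    _ ≤ (#T : ℝ) ^ 2 := by exact_mod_cast hT

/-- There exists `τ > 0` such that every `C₅`-free graph `G` satisfies
`max(α(G), ω(G)) ≥ |G|^τ`. -/
theorem stmt_0 :
    ∃ τ : ℝ, 0 < τ ∧
      ∀ (V : Type) [Fintype V] (G : SimpleGraph V),
        ¬ Nonempty (cycleGraph 5 ↪g G) →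
        (Fintype.card V : ℝ) ^ τ ≤ ((max (alphaNum G) (omegaNum G) : ℕ) : ℝ) := by
  obtain ⟨τ, hτ, h⟩ := stmt_0_general
  refine ⟨τ, hτ, fun V _ G hG => ?_⟩
  obtain ⟨T, -, hT, hmono⟩ := h hG Finset.univ
  refine hT.trans (Nat.cast_le.2 (hmono.elim ?_ ?_))
  · exact fun hclique => hclique.card_le_cliqueNum.trans (le_max_right _ _)
  · exact fun hindep => ((isClique_compl G).2 hindep).card_le_cliqueNum.trans (le_max_left _ _)
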